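/- arXiv:2605.27312 — 2 statements merged into one kernel-verified Lean document; each statement's English description precedes it below -/
import Mathlib

section
/- Let m ≥ 1 and W ⊆ {0,1,…,m}. If W is not one of the boundary cases, then the automorphism group of the abelian code C(3,m,W) is a subgroup of the affine general linear group AGL(m,3), acting on the coordinate set F_3^m by maps x ↦ Ax + b with A an invertible m×m matrix over F_3 and b ∈ F_3^m. If W is one of the boundary cases, then the automorphism group of C(3,m,W) is the full symmetric group S_{3^m}. -/
/-!
A permutation `π` preserves the code exactly when it preserves its reproducing kernel. The kernel
at `(x, y)` depends only on the Hamming weight of `x - y`: it is the binomial transform, modulo two,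
of the indicator of `W`. It is constant on the nonzero weights exactly in the boundary cases, where
every permutation preserves it.

Identifying the weight of `π x - π y` with that of `x - y`, for all `x` and `y`, fuses the relations
of the ternary Hamming scheme, and counting the `z` with prescribed weights of `z` and `x - z`
severely restricts which weights can be fused: either none are, or all nonzero ones are, or weights
congruent modulo three are. The second alternative contradicts the nonconstancy of the kernel. As
the weight of a ternary word `x` is congruent to `x ⬝ᵥ x` modulo three, the other two make `π`
preserve the relation `(x - y) ⬝ᵥ (x - y) = c` for some `c`. Such a `π` maps lines with a direction
of norm `c` to lines, and an identity in the group algebra of `F₃^m` turns this into `π` being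
affine.
-/

open Matrix

/-- The automorphism group of a binary code of length `|I|` (as a set of coordinate
permutations): those permutations of the index set that map the code onto itself. -/
def codeAut {I : Type} (C : Set (I → ZMod 2)) : Set (Equiv.Perm I) :=
  { π | (fun c => c ∘ ⇑π.symm) '' C = C }

/-- The abelian code `C(n, m, W)`: binary vectors indexed by `(Z_n)^m` whose finite-field
DFT (with respect to a primitive `n`-th root of unity `α` in a field `K` of characteristic 2)
vanishes at every frequency `j` whose Hamming weight lies outside `W`. -/
def abelianCode (n m : ℕ) [NeZero n] (W : Set ℕ) (K : Type) [Field K] (α : K) :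
    Set ((Fin m → ZMod n) → ZMod 2) :=
  { a | ∀ j : Fin m → ZMod n, hammingNorm j ∉ W →
      ∑ i : Fin m → ZMod n, (if a i = 1 then (1 : K) else 0) * α ^ (∑ k, i k * j k).val = 0 }

/-- The four boundary cases of weight sets: `∅` (zero code), `{0}` (repetition code),
`{1,…,m}` (single parity check code), `{0,1,…,m}` (full space). -/
def BoundaryW (m : ℕ) (W : Set ℕ) : Prop :=
  W = ∅ ∨ W = {0} ∨ W = Set.Icc 1 m ∨ W = Set.Iic m

/-- The affine general linear group `AGL(m, 3)`, realized as the set of permutations of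
`F_3^m` of the form `x ↦ A x + b` with `A` invertible. -/
def aglSet (m : ℕ) : Set (Equiv.Perm (Fin m → ZMod 3)) :=
  { f | ∃ (A : Matrix (Fin m) (Fin m) (ZMod 3)) (b : Fin m → ZMod 3),
      IsUnit A ∧ ∀ x, f x = A.mulVec x + b }

namespace TernaryAbelianCode

open Finset.HasAntidiagonal (antidiagonal mem_antidiagonal)

variable {m : ℕ}

/-! ### Convolution of weight functions -/

/-- An integer-valued function of two Hamming weights. -/
abbrev WeightArray := ℕ → ℕ → ℤ

/-- The shift `Φ ↦ Φ (· + 1) (· + 1)` of weight arrays. -/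
def diagShift : Module.End ℤ WeightArray where
  toFun Φ a b := Φ (a + 1) (b + 1)
  map_add' _ _ := rfl
  map_smul' _ _ := rfl

/-- The effect of summing over one coordinate of `z` at which `x` is nonzero: the contributions
of that coordinate to the weights of `z` and `x - z` are `(1, 0)`, `(0, 1)` and `(1, 1)`. -/
def nonzeroStep : Module.End ℤ WeightArray where
  toFun Φ a b := Φ (a + 1) b + Φ a (b + 1) + Φ (a + 1) (b + 1)
  map_add' Φ Ψ := by ext a b; simp only [Pi.add_apply]; ring
  map_smul' c Φ := by ext a b; simp only [Pi.smul_apply, smul_eq_mul, RingHom.id_apply]; ring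

/-- The effect of summing over one coordinate of `z` at which `x` vanishes: the contributions
of that coordinate to the weights of `z` and `x - z` are `(0, 0)` and twice `(1, 1)`. -/
def zeroStep : Module.End ℤ WeightArray := 1 + 2 * diagShift

/-- The sum of `Φ (wt z) (wt (x - z))` over all ternary `z`, where the word `x` has `i` nonzero
and `u` zero coordinates; see `sum_hammingNorm_eq_pairSum`. -/
def pairSum (i u : ℕ) : WeightArray →ₗ[ℤ] ℤ :=
  LinearMap.proj 0 ∘ₗ LinearMap.proj 0 ∘ₗ (nonzeroStep ^ i * zeroStep ^ u)

/-- The weight array `(a, b) ↦ F a * G b`. -/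
def prodArray (F G : ℕ → ℤ) : WeightArray := fun a b ↦ F a * G b

lemma diagShift_apply (Φ : WeightArray) (a b : ℕ) : diagShift Φ a b = Φ (a + 1) (b + 1) := rfl

lemma nonzeroStep_apply (Φ : WeightArray) (a b : ℕ) :
    nonzeroStep Φ a b = Φ (a + 1) b + Φ a (b + 1) + Φ (a + 1) (b + 1) := rfl

lemma zeroStep_apply (Φ : WeightArray) (a b : ℕ) :
    zeroStep Φ a b = Φ a b + 2 * Φ (a + 1) (b + 1) := by
  simp [zeroStep, two_mul, diagShift_apply]

lemma commute_nonzeroStep_zeroStep : Commute nonzeroStep zeroStep := by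
  ext Φ a b
  simp only [Module.End.mul_apply, nonzeroStep_apply, zeroStep_apply]
  ring

@[simp]
lemma pairSum_zero_zero (Φ : WeightArray) : pairSum 0 0 Φ = Φ 0 0 := rfl

lemma pairSum_succ_left (i u : ℕ) (Φ : WeightArray) :
    pairSum (i + 1) u Φ = pairSum i u (nonzeroStep Φ) := by
  simp only [pairSum, pow_succ, mul_assoc, (commute_nonzeroStep_zeroStep.pow_right u).eq]
  simp only [← mul_assoc, LinearMap.comp_apply, Module.End.mul_apply]

lemma pairSum_add_right (i u v : ℕ) (Φ : WeightArray) :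
    pairSum i (u + v) Φ = pairSum i u ((zeroStep ^ v) Φ) := by
  simp only [pairSum, pow_add, ← mul_assoc, LinearMap.comp_apply, Module.End.mul_apply]

lemma pairSum_eq_zero_of_forall_le (i u : ℕ) (Φ : WeightArray)
    (hΦ : ∀ a ≤ i + u, ∀ b ≤ i + u, Φ a b = 0) : pairSum i u Φ = 0 := by
  induction i generalizing Φ with
  | zero =>
    induction u generalizing Φ with
    | zero => exact hΦ 0 le_rfl 0 le_rfl
    | succ u ih =>
      rw [pairSum_add_right]
      refine ih _ fun a ha b hb ↦ ?_
      rw [pow_one, zeroStep_apply, hΦ _ (by omega) _ (by omega), hΦ _ (by omega) _ (by omega)]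
      rfl
  | succ i ih =>
    rw [pairSum_succ_left]
    refine ih _ fun a ha b hb ↦ ?_
    rw [nonzeroStep_apply, hΦ _ (by omega) _ (by omega), hΦ _ (by omega) _ (by omega),
      hΦ _ (by omega) _ (by omega)]
    rfl

lemma pairSum_congr {i : ℕ} {Φ Ψ : WeightArray} (h : ∀ a ≤ i, ∀ b ≤ i, Φ a b = Ψ a b) :
    pairSum i 0 Φ = pairSum i 0 Ψ := by
  rw [← sub_eq_zero, ← map_sub]
  exact pairSum_eq_zero_of_forall_le i 0 _ fun a ha b hb ↦ by simp [h a ha b hb]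

lemma pairSum_swap (i u : ℕ) (Φ : WeightArray) :
    pairSum i u (Function.swap Φ) = pairSum i u Φ := by
  induction i generalizing Φ with
  | zero =>
    induction u generalizing Φ with
    | zero => rfl
    | succ u ih =>
      rw [pairSum_add_right, pairSum_add_right, ← ih]
      rfl
  | succ i ih =>
    rw [pairSum_succ_left, pairSum_succ_left, ← ih]
    congr 1
    ext a b
    simp only [nonzeroStep_apply, Function.swap]
    ring

/-- The involution exchanging `z` and `x - z` pairs off all terms except the one with `z = -x`. -/
lemma pairSum_modEq_two_of_symm (i : ℕ) (Φ : WeightArray) (hΦ : ∀ a b, Φ a b = Φ b a) :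
    pairSum i 0 Φ ≡ Φ i i [ZMOD 2] := by
  induction i generalizing Φ with
  | zero => rfl
  | succ i ih =>
    rw [pairSum_succ_left]
    refine (ih _ fun a b ↦ ?_).trans ?_
    · simp only [nonzeroStep_apply, hΦ (a + 1) b, hΦ a (b + 1), hΦ (a + 1) (b + 1)]
      ring
    · rw [nonzeroStep_apply, hΦ (i + 1) i]
      exact Int.modEq_iff_dvd.2 ⟨-Φ i (i + 1), by ring⟩

lemma pairSum_eq_sum_antidiagonal (i : ℕ) (Φ : WeightArray)
    (hΦ : ∀ a ≤ i, ∀ b ≤ i, i < a + b → Φ a b = 0) :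
    pairSum i 0 Φ = ∑ p ∈ antidiagonal i, (i.choose p.1 : ℤ) * Φ p.1 p.2 := by
  induction i generalizing Φ with
  | zero => simp
  | succ i ih =>
    rw [pairSum_succ_left, ih, Finset.sum_antidiagonal_choose_succ_mul, ← Finset.sum_add_distrib]
    · refine Finset.sum_congr rfl fun p hp ↦ ?_
      have hp' := mem_antidiagonal.1 hp
      rw [nonzeroStep_apply, hΦ (p.1 + 1) (by omega) (p.2 + 1) (by omega) (by omega),
        ← Nat.choose_symm_of_eq_add (n := i) (a := p.2) (b := p.1) (by omega)]
      ring
    · intro a ha b hb hab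
      rw [nonzeroStep_apply, hΦ _ (by omega) _ (by omega) (by omega),
        hΦ _ (by omega) _ (by omega) (by omega), hΦ _ (by omega) _ (by omega) (by omega)]
      rfl

lemma pairSum_of_eq_zero_of_two_le (i : ℕ) (Φ : WeightArray) (hΦ : ∀ a b, 2 ≤ a → Φ a b = 0) :
    pairSum i 0 Φ = Φ 0 i + i * (Φ 1 (i - 1) + Φ 1 i) := by
  induction i generalizing Φ with
  | zero => simp
  | succ i ih =>
    rw [pairSum_succ_left, ih]
    · rcases i with _ | i
      all_goals
        simp [nonzeroStep_apply, hΦ]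
        ring
    · intro a b ha
      rw [nonzeroStep_apply, hΦ _ _ (by omega), hΦ _ _ ha, hΦ _ _ (by omega)]
      rfl

lemma pairSum_of_eq_zero_of_add_lt (i : ℕ) (Φ : WeightArray)
    (hΦ : ∀ a ≤ i, ∀ b ≤ i, a + b < 2 * i → Φ a b = 0) : pairSum i 0 Φ = Φ i i := by
  induction i generalizing Φ with
  | zero => rfl
  | succ i ih =>
    rw [pairSum_succ_left, ih, nonzeroStep_apply,
      hΦ (i + 1) le_rfl i (by omega) (by omega), hΦ i (by omega) (i + 1) le_rfl (by omega)]
    · ring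
    · intro a ha b hb hab
      rw [nonzeroStep_apply, hΦ _ (by omega) _ (by omega) (by omega),
        hΦ _ (by omega) _ (by omega) (by omega), hΦ _ (by omega) _ (by omega) (by omega)]
      rfl

/-! ### Expansion of powers of the zero step -/

lemma exists_one_add_two_mul_pow_eq {R : Type*} [CommRing R] (x : R) (u : ℕ) :
    ∃ q, (1 + 2 * x) ^ u = 1 + 2 * u * x + 4 * x ^ 2 * q := by
  induction u with
  | zero => exact ⟨0, by simp⟩
  | succ u ih =>
    obtain ⟨q, hq⟩ := ih
    refine ⟨u + q + 2 * x * q, ?_⟩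
    rw [pow_succ, hq]
    push_cast
    ring

lemma exists_one_add_two_mul_pow_two_pow_eq {R : Type*} [CommRing R] (x : R) (v : ℕ) :
    ∃ q, (1 + 2 * x) ^ 2 ^ (v + 1) = 1 + 2 * (2 ^ (v + 1) * (x + x ^ 2 + 2 * q)) := by
  induction v with
  | zero => exact ⟨0, by norm_num; ring⟩
  | succ v ih =>
    obtain ⟨q, hq⟩ := ih
    refine ⟨q + 2 ^ v * (x + x ^ 2 + 2 * q) ^ 2, ?_⟩
    rw [pow_succ 2 (v + 1), pow_mul, hq]
    ring

/-- The exponent `v` is the 2-adic valuation of `M`. -/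
lemma exists_one_add_two_mul_pow_eq_of_ne_zero {M : ℕ} (hM : M ≠ 0) :
    ∃ v : ℕ, ∀ {R : Type*} [CommRing R] (x : R), ∃ q, (1 + 2 * x) ^ M =
      1 + 2 ^ (v + 1) * (x + (if Even M then 1 else 0) * x ^ 2) + 2 ^ (v + 2) * q := by
  obtain ⟨v, t, ⟨s, rfl⟩, rfl⟩ := Nat.exists_eq_two_pow_mul_odd hM
  refine ⟨v, fun {R} _ x ↦ ?_⟩
  rcases v with _ | v
  · obtain ⟨q, hq⟩ := exists_one_add_two_mul_pow_eq x (2 * s + 1)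
    refine ⟨s * x + x ^ 2 * q, ?_⟩
    rw [pow_zero, one_mul, hq, if_neg (by simp)]
    push_cast
    ring
  · obtain ⟨q, hq⟩ := exists_one_add_two_mul_pow_two_pow_eq x v
    set y := x + x ^ 2 + 2 * q with hy
    obtain ⟨q', hq'⟩ := exists_one_add_two_mul_pow_eq (2 ^ (v + 1) * y) (2 * s + 1)
    refine ⟨q + s * y + 2 ^ v * 2 * y ^ 2 * q', ?_⟩
    rw [pow_mul, hq, hq', if_pos (by simp [Nat.even_pow, parity_simps])]
    push_cast
    rw [hy]
    ring

lemma zeroStep_eq_aeval :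
    zeroStep = Polynomial.aeval diagShift (1 + 2 * Polynomial.X : Polynomial ℤ) := by
  simp [zeroStep, map_ofNat]

lemma exists_zeroStep_pow_eq (u : ℕ) :
    ∃ Q, zeroStep ^ u = 1 + (2 * u : ℤ) • diagShift + (4 : ℤ) • Q := by
  obtain ⟨q, hq⟩ := exists_one_add_two_mul_pow_eq (Polynomial.X : Polynomial ℤ) u
  refine ⟨Polynomial.aeval diagShift (Polynomial.X ^ 2 * q), ?_⟩
  rw [zeroStep_eq_aeval, ← map_pow, hq]
  simp [mul_assoc, zsmul_eq_mul, map_ofNat]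

lemma exists_zeroStep_pow_eq_of_ne_zero {M : ℕ} (hM : M ≠ 0) :
    ∃ (v : ℕ) (Q : Module.End ℤ WeightArray), zeroStep ^ M = 1 +
      (2 ^ (v + 1) : ℤ) • (diagShift + (if Even M then 1 else 0 : ℤ) • diagShift ^ 2) +
        (2 ^ (v + 2) : ℤ) • Q := by
  obtain ⟨v, hv⟩ := exists_one_add_two_mul_pow_eq_of_ne_zero hM
  obtain ⟨q, hq⟩ := hv (Polynomial.X : Polynomial ℤ)
  refine ⟨v, Polynomial.aeval diagShift q, ?_⟩
  rw [zeroStep_eq_aeval, ← map_pow, hq]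
  split_ifs <;> simp [zsmul_eq_mul, map_ofNat, mul_add]

lemma pairSum_modEq_four (i u : ℕ) (Φ : WeightArray) :
    pairSum i u Φ ≡ pairSum i 0 Φ + 2 * u * pairSum i 0 (diagShift Φ) [ZMOD 4] := by
  obtain ⟨Q, hQ⟩ := exists_zeroStep_pow_eq u
  rw [← zero_add u, pairSum_add_right, hQ, zero_add]
  simp only [LinearMap.add_apply, LinearMap.smul_apply, Module.End.one_apply, map_add, map_smul,
    smul_eq_mul]
  exact Int.modEq_iff_dvd.2 ⟨-pairSum i 0 (Q Φ), by ring⟩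

lemma pairSum_modEq_two (i u : ℕ) (Φ : WeightArray) :
    pairSum i u Φ ≡ pairSum i 0 Φ [ZMOD 2] := by
  refine ((pairSum_modEq_four i u Φ).of_mul_left 2).trans (Int.modEq_iff_dvd.2 ?_)
  exact ⟨-(u * pairSum i 0 (diagShift Φ)), by ring⟩

lemma pairSum_modEq_four_of_symm (i u : ℕ) {Φ : WeightArray} (hΦ : ∀ a b, Φ a b = Φ b a) :
    pairSum i u Φ ≡ pairSum i 0 Φ + 2 * u * Φ (i + 1) (i + 1) [ZMOD 4] := by
  have hdiag := pairSum_modEq_two_of_symm i (diagShift Φ) fun a b ↦ hΦ _ _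
  refine (pairSum_modEq_four i u Φ).trans (Int.ModEq.add_left _ ?_)
  rw [mul_assoc, mul_assoc]
  exact (hdiag.mul_left u).mul_left' (c := 2)

section Fusion

/-! ### Fusions of the ternary Hamming scheme -/

/-- A weight array is invariant under a relation on weights if it factors through the classes. -/
def IsInvariant (r : ℕ → ℕ → Prop) (Φ : WeightArray) : Prop :=
  ∀ ⦃a a' b b'⦄, r a a' → r b b' → Φ a b = Φ a' b'

/-- An equivalence relation on the weights whose classes form a fusion scheme of the ternary
Hamming scheme of length `m`: convolutions of functions of the class of the weight are again
functions of the class of the weight. -/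
structure IsHammingFusion (m : ℕ) (r : ℕ → ℕ → Prop) : Prop where
  equivalence : Equivalence r
  eq_zero_of_rel_zero : ∀ ⦃j⦄, r 0 j → j = 0
  pairSum_eq : ∀ ⦃Φ⦄, IsInvariant r Φ → ∀ ⦃i j⦄, i ≤ m → j ≤ m → r i j →
    pairSum i (m - i) Φ = pairSum j (m - j) Φ

open Classical in
/-- The integer-valued indicator function of the class of `c`. -/
noncomputable def classIndicator (r : ℕ → ℕ → Prop) (c a : ℕ) : ℤ := if r c a then 1 else 0

/-- The sum of the products of the class indicators of `p.1` and `p.2` over `p ∈ S`. -/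
noncomputable def indicatorArray (r : ℕ → ℕ → Prop) (S : Finset (ℕ × ℕ)) : WeightArray :=
  ∑ p ∈ S, prodArray (classIndicator r p.1) (classIndicator r p.2)

/-- The weight `a` forms a class of its own among the weights at most `n`. -/
def IsIsolated (r : ℕ → ℕ → Prop) (n a : ℕ) : Prop := ∀ b ≤ n, r a b → b = a

variable {r : ℕ → ℕ → Prop}

lemma classIndicator_eq_zero_iff {c a : ℕ} : classIndicator r c a = 0 ↔ ¬ r c a := by
  simp [classIndicator]

lemma indicatorArray_apply (S : Finset (ℕ × ℕ)) (a b : ℕ) : indicatorArray r S a b =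
    ∑ p ∈ S, classIndicator r p.1 a * classIndicator r p.2 b := by
  simp [indicatorArray, prodArray, Finset.sum_apply]

lemma exists_mem_of_indicatorArray_ne_zero {S : Finset (ℕ × ℕ)} {a b : ℕ}
    (h : indicatorArray r S a b ≠ 0) : ∃ p ∈ S, r p.1 a ∧ r p.2 b := by
  rw [indicatorArray_apply] at h
  obtain ⟨p, hp, hne⟩ := Finset.exists_ne_zero_of_sum_ne_zero h
  obtain ⟨h1, h2⟩ := mul_ne_zero_iff.1 hne
  exact ⟨p, hp, not_not.1 (classIndicator_eq_zero_iff.not.1 h1),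
    not_not.1 (classIndicator_eq_zero_iff.not.1 h2)⟩

lemma indicatorArray_comm {S : Finset (ℕ × ℕ)} (hS : ∀ p ∈ S, p.swap ∈ S) (a b : ℕ) :
    indicatorArray r S a b = indicatorArray r S b a := by
  simp only [indicatorArray_apply]
  exact Finset.sum_nbij' Prod.swap Prod.swap hS hS (by simp) (by simp) (by simp [mul_comm])

lemma indicatorArray_of_isIsolated (hr : Equivalence r) {n : ℕ} {S : Finset (ℕ × ℕ)}
    (hS : ∀ p ∈ S, IsIsolated r n p.1 ∧ IsIsolated r n p.2) {a b : ℕ} (ha : a ≤ n) (hb : b ≤ n) :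
    indicatorArray r S a b = if (a, b) ∈ S then 1 else 0 := by
  have term : ∀ p ∈ S, classIndicator r p.1 a * classIndicator r p.2 b =
      if (a, b) = p then 1 else 0 := by
    rintro ⟨p, q⟩ hp
    have h1 : r p a ↔ a = p := ⟨(hS _ hp).1 a ha, fun h ↦ h ▸ hr.refl a⟩
    have h2 : r q b ↔ b = q := ⟨(hS _ hp).2 b hb, fun h ↦ h ▸ hr.refl b⟩
    simp [classIndicator, h1, h2, ← ite_and, and_comm]
  rw [indicatorArray_apply, Finset.sum_congr rfl term, Finset.sum_ite_eq]

lemma pairSum_indicatorArray (hr : Equivalence r) {n c w : ℕ} {S : Finset (ℕ × ℕ)}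
    (hSc : S ⊆ antidiagonal c) (hS : ∀ p ∈ S, IsIsolated r n p.1 ∧ IsIsolated r n p.2)
    (hwn : w ≤ n) (hwc : c ≤ w ∨ 2 * w < c) :
    pairSum w 0 (indicatorArray r S) = if w = c then ∑ p ∈ S, (c.choose p.1 : ℤ) else 0 := by
  have value : ∀ a ≤ n, ∀ b ≤ n, indicatorArray r S a b = if (a, b) ∈ S then 1 else 0 :=
    fun a ha b hb ↦ indicatorArray_of_isIsolated hr hS ha hb
  have vanish : ∀ a ≤ n, ∀ b ≤ n, a + b ≠ c → indicatorArray r S a b = 0 := fun a ha b hb hab ↦ by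
    rw [value a ha b hb, if_neg fun h ↦ hab (mem_antidiagonal.1 (hSc h))]
  rw [pairSum_eq_sum_antidiagonal w _ fun a ha b hb hab ↦
    vanish a (by omega) b (by omega) (by omega)]
  split_ifs with hw
  · subst hw
    rw [← Finset.sum_subset hSc]
    · refine Finset.sum_congr rfl fun p hp ↦ ?_
      have := mem_antidiagonal.1 (hSc hp)
      rw [value _ (by omega) _ (by omega), if_pos hp, mul_one]
    · intro p hp hpS
      have := mem_antidiagonal.1 hp
      rw [value _ (by omega) _ (by omega), if_neg hpS, mul_zero]
  · refine Finset.sum_eq_zero fun p hp ↦ ?_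
    have := mem_antidiagonal.1 hp
    rw [vanish _ (by omega) _ (by omega) (by omega), mul_zero]

lemma pairSum_classIndicator_one (hr : Equivalence r) {n : ℕ} (hn : 3 ≤ n) (h1n : r 1 n)
    (h0 : ¬ r 1 0) (hne : ∀ a, 2 ≤ a → a < n → ¬ r 1 a) :
    pairSum n 0 (prodArray (classIndicator r 1) (classIndicator r 1)) = 2 * n + 1 := by
  let δ (k : ℕ) : ℕ → ℤ := Pi.single k 1
  have split : ∀ a ≤ n, classIndicator r 1 a = δ 1 a + δ n a := by
    intro a ha
    rcases (by omega : a = 0 ∨ a = 1 ∨ (2 ≤ a ∧ a < n) ∨ a = n) with rfl | rfl | ⟨h2, hn'⟩ | rfl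
    · simp [δ, classIndicator, h0, Pi.single_apply]; omega
    · simp [δ, classIndicator, hr.refl, Pi.single_apply]; omega
    · simp [δ, classIndicator, hne a h2 hn', Pi.single_apply]; omega
    · simp [δ, classIndicator, h1n, Pi.single_apply]; omega
  have expand : pairSum n 0 (prodArray (classIndicator r 1) (classIndicator r 1)) =
      pairSum n 0 (prodArray (δ 1) (δ 1) + prodArray (δ 1) (δ n) +
        Function.swap (prodArray (δ 1) (δ n)) + prodArray (δ n) (δ n)) :=
    pairSum_congr fun a ha b hb ↦ by
      simp only [prodArray, split a ha, split b hb, Pi.add_apply, Function.swap]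
      ring
  have row_one (k : ℕ) : ∀ a b, 2 ≤ a → prodArray (δ 1) (δ k) a b = 0 := fun a b ha ↦ by
    simp [prodArray, δ, Pi.single_apply, show a ≠ 1 by omega]
  have corner : ∀ a ≤ n, ∀ b ≤ n, a + b < 2 * n → prodArray (δ n) (δ n) a b = 0 := by
    intro a _ b _ hab
    simp [prodArray, δ, Pi.single_apply]
    omega
  rw [expand, map_add, map_add, map_add, pairSum_swap n 0 (prodArray (δ 1) (δ n)),
    pairSum_of_eq_zero_of_two_le n _ (row_one 1),
    pairSum_of_eq_zero_of_two_le n _ (row_one n), pairSum_of_eq_zero_of_add_lt n _ corner]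
  simp [prodArray, δ, show n ≠ 1 by omega, show n - 1 ≠ 1 by omega,
    show n - 1 ≠ n by omega]
  ring

namespace IsHammingFusion

variable (H : IsHammingFusion m r)

include H

lemma symm {a b : ℕ} (h : r a b) : r b a := H.equivalence.symm h

lemma trans {a b c : ℕ} (hab : r a b) (hbc : r b c) : r a c := H.equivalence.trans hab hbc

lemma classIndicator_congr (c : ℕ) {a b : ℕ} (h : r a b) :
    classIndicator r c a = classIndicator r c b := by
  have : r c a ↔ r c b := ⟨fun hc ↦ H.trans hc h, fun hc ↦ H.trans hc (H.symm h)⟩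
  rw [classIndicator, classIndicator, propext this]

lemma isInvariant_indicatorArray (S : Finset (ℕ × ℕ)) : IsInvariant r (indicatorArray r S) := by
  intro a a' b b' ha hb
  simp only [indicatorArray_apply, H.classIndicator_congr _ ha, H.classIndicator_congr _ hb]

lemma pairSum_modEq_two {Φ : WeightArray} (hΦ : IsInvariant r Φ) {i j : ℕ} (hi : i ≤ m)
    (hj : j ≤ m) (hij : r i j) : pairSum i 0 Φ ≡ pairSum j 0 Φ [ZMOD 2] :=
  ((TernaryAbelianCode.pairSum_modEq_two i (m - i) Φ).symm.trans
    (H.pairSum_eq hΦ hi hj hij ▸ rfl)).trans (TernaryAbelianCode.pairSum_modEq_two j (m - j) Φ)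

lemma pairSum_modEq_four {Φ : WeightArray} (hΦ : IsInvariant r Φ) (hsymm : ∀ a b, Φ a b = Φ b a)
    {i j : ℕ} (hi : i ≤ m) (hj : j ≤ m) (hij : r i j) :
    pairSum i 0 Φ + 2 * (m - i : ℕ) * Φ (i + 1) (i + 1) ≡
      pairSum j 0 Φ + 2 * (m - j : ℕ) * Φ (j + 1) (j + 1) [ZMOD 4] :=
  ((pairSum_modEq_four_of_symm i (m - i) hsymm).symm.trans
    (H.pairSum_eq hΦ hi hj hij ▸ rfl)).trans (pairSum_modEq_four_of_symm j (m - j) hsymm)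

lemma sum_choose_add_modEq_zero {i j c : ℕ} (hij : i < j) (hj : j ≤ m) (hr : r i j)
    {S : Finset (ℕ × ℕ)} (hSc : S ⊆ antidiagonal c) (hswap : ∀ p ∈ S, p.swap ∈ S)
    (hS : ∀ p ∈ S, IsIsolated r j p.1) (hc : c = i ∨ (c = j ∧ 2 * (i + 1) < j)) :
    ∑ p ∈ S, (c.choose p.1 : ℤ) +
      2 * (m - j : ℕ) * indicatorArray r S (j + 1) (j + 1) ≡ 0 [ZMOD 4] := by
  have isolated : ∀ p ∈ S, IsIsolated r j p.1 ∧ IsIsolated r j p.2 :=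
    fun p hp ↦ ⟨hS p hp, hS _ (hswap p hp)⟩
  have key := H.pairSum_modEq_four (H.isInvariant_indicatorArray S) (indicatorArray_comm hswap)
    (by omega) hj hr
  have corner : indicatorArray r S (i + 1) (i + 1) = 0 := by
    rw [indicatorArray_of_isIsolated H.equivalence isolated hij hij, if_neg]
    intro h
    have := mem_antidiagonal.1 (hSc h)
    omega
  rw [corner, pairSum_indicatorArray H.equivalence hSc isolated (by omega) (by omega),
    pairSum_indicatorArray H.equivalence hSc isolated le_rfl (by omega)] at key
  set x := (m - j : ℕ) * indicatorArray r S (j + 1) (j + 1) with hx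
  simp only [mul_assoc, ← hx] at key ⊢
  rw [Int.modEq_iff_dvd] at key ⊢
  split_ifs at key <;> omega

lemma odd_and_exists_rel_of_sum_choose {i j c : ℕ} (hij : i < j) (hj : j ≤ m) (hr : r i j)
    {S : Finset (ℕ × ℕ)} (hSc : S ⊆ antidiagonal c) (hswap : ∀ p ∈ S, p.swap ∈ S)
    (hS : ∀ p ∈ S, IsIsolated r j p.1) (hc : c = i ∨ (c = j ∧ 2 * (i + 1) < j))
    (hsum : ∑ p ∈ S, (c.choose p.1 : ℤ) ≡ 2 [ZMOD 4]) :
    Odd (m - j) ∧ ∃ p ∈ S, r p.1 (j + 1) ∧ r p.2 (j + 1) := by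
  have key := H.sum_choose_add_modEq_zero hij hj hr hSc hswap hS hc
  have odd : Odd (((m - j : ℕ) : ℤ) * indicatorArray r S (j + 1) (j + 1)) := by
    rw [mul_assoc] at key
    have := (hsum.add_right _).symm.trans key
    rw [Int.odd_iff]
    rw [Int.modEq_zero_iff_dvd] at this
    omega
  obtain ⟨hodd, hne⟩ := Int.odd_mul.1 odd
  exact ⟨by exact_mod_cast hodd, exists_mem_of_indicatorArray_ne_zero fun h ↦ by simp [h] at hne⟩

lemma even_choose {i a b : ℕ} (hi : 2 * i < a + b) (hj : a + b ≤ m) (hr : r i (a + b))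
    (ha : IsIsolated r (a + b) a) (hb : IsIsolated r (a + b) b) : Even ((a + b).choose a) := by
  have hS : ({(a, b)} : Finset (ℕ × ℕ)) ⊆ antidiagonal (a + b) := by simp
  have isolated : ∀ p ∈ ({(a, b)} : Finset (ℕ × ℕ)),
      IsIsolated r (a + b) p.1 ∧ IsIsolated r (a + b) p.2 := by simp [ha, hb]
  have key := H.pairSum_modEq_two (H.isInvariant_indicatorArray {(a, b)}) (by omega) hj hr
  rw [pairSum_indicatorArray H.equivalence hS isolated (by omega) (by omega), if_neg (by omega),
    pairSum_indicatorArray H.equivalence hS isolated le_rfl (by omega), if_pos rfl,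
    Finset.sum_singleton] at key
  exact_mod_cast Int.even_iff.2 key.symm

/-- Compare the square of the class of weight one at the weights `1` and `n`. -/
lemma odd_iff_of_rel_one {n : ℕ} (hn : 3 ≤ n) (hnm : n ≤ m) (h1n : r 1 n)
    (hne : ∀ a, 2 ≤ a → a < n → ¬ r 1 a) : Odd n ↔ Odd (m - n) ∧ r 1 (n + 1) := by
  have h0 : ¬ r 1 0 := fun h ↦ by simpa using H.eq_zero_of_rel_zero (H.symm h)
  have h2 : ¬ r 1 2 := hne 2 le_rfl hn
  have inv : IsInvariant r (prodArray (classIndicator r 1) (classIndicator r 1)) :=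
    fun a a' b b' ha hb ↦ by
      simp only [prodArray, H.classIndicator_congr 1 ha, H.classIndicator_congr 1 hb]
  have key := H.pairSum_modEq_four inv (fun a b ↦ mul_comm _ _) (by omega) hnm h1n
  have at_one : pairSum 1 0 (prodArray (classIndicator r 1) (classIndicator r 1)) = 1 := by
    rw [pairSum_succ_left, pairSum_zero_zero, nonzeroStep_apply]
    simp [prodArray, classIndicator, h0, H.equivalence.refl 1]
  rw [at_one, pairSum_classIndicator_one H.equivalence hn h1n h0 hne] at key
  rw [Nat.odd_iff, Nat.odd_iff]
  by_cases h : r 1 (n + 1)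
  · simp [prodArray, classIndicator, h, h2, Int.modEq_iff_dvd] at key ⊢
    omega
  · simp [prodArray, classIndicator, h, h2, Int.modEq_iff_dvd] at key ⊢
    omega

end IsHammingFusion

/-- The pairs of numbers at least `l` with sum `c`. -/
def innerAntidiagonal (l c : ℕ) : Finset (ℕ × ℕ) :=
  (antidiagonal c).filter fun p ↦ l ≤ p.1 ∧ l ≤ p.2

lemma mem_innerAntidiagonal {l c : ℕ} {p : ℕ × ℕ} :
    p ∈ innerAntidiagonal l c ↔ p.1 + p.2 = c ∧ l ≤ p.1 ∧ l ≤ p.2 := by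
  simp [innerAntidiagonal]

lemma innerAntidiagonal_subset (l c : ℕ) : innerAntidiagonal l c ⊆ antidiagonal c :=
  Finset.filter_subset _ _

lemma swap_mem_innerAntidiagonal {l c : ℕ} : ∀ p ∈ innerAntidiagonal l c,
    p.swap ∈ innerAntidiagonal l c := by
  simp only [mem_innerAntidiagonal, Prod.fst_swap, Prod.snd_swap]
  omega

lemma sum_choose_innerAntidiagonal (l c : ℕ) :
    ∑ p ∈ innerAntidiagonal l c, (c.choose p.1 : ℤ) =
      2 ^ c - ∑ p ∈ (antidiagonal c).filter fun p ↦ ¬ (l ≤ p.1 ∧ l ≤ p.2), (c.choose p.1 : ℤ) := by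
  have total : ∑ p ∈ antidiagonal c, (c.choose p.1 : ℤ) = 2 ^ c := by
    rw [Finset.Nat.sum_antidiagonal_eq_sum_range_succ_mk]
    exact_mod_cast Nat.sum_range_choose c
  rw [← total, eq_sub_iff_add_eq]
  exact Finset.sum_filter_add_sum_filter_not _ _ _

lemma sum_choose_innerAntidiagonal_one {c : ℕ} (hc : 2 ≤ c) :
    ∑ p ∈ innerAntidiagonal 1 c, (c.choose p.1 : ℤ) ≡ 2 [ZMOD 4] := by
  have outer : ((antidiagonal c).filter fun p ↦ ¬ (1 ≤ p.1 ∧ 1 ≤ p.2)) = {(0, c), (c, 0)} := by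
    ext ⟨a, b⟩
    simp only [Finset.mem_filter, mem_antidiagonal, Finset.mem_insert, Finset.mem_singleton,
      Prod.mk.injEq]
    omega
  obtain ⟨c, rfl⟩ := Nat.exists_eq_add_of_le hc
  rw [sum_choose_innerAntidiagonal, outer, Finset.sum_pair (by simp)]
  simp [pow_add, Int.modEq_iff_dvd]
  omega

lemma sum_choose_innerAntidiagonal_two {c : ℕ} (hc : 4 ≤ c) (heven : Even c) :
    ∑ p ∈ innerAntidiagonal 2 c, (c.choose p.1 : ℤ) ≡ 2 [ZMOD 4] := by
  have outer : ((antidiagonal c).filter fun p ↦ ¬ (2 ≤ p.1 ∧ 2 ≤ p.2)) =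
      {(0, c), (c, 0), (1, c - 1), (c - 1, 1)} := by
    ext ⟨a, b⟩
    simp only [Finset.mem_filter, mem_antidiagonal, Finset.mem_insert, Finset.mem_singleton,
      Prod.mk.injEq]
    omega
  obtain ⟨k, rfl⟩ := heven
  have pred : (k + k).choose (k + k - 1) = k + k := by
    rw [Nat.choose_symm (by omega), Nat.choose_one_right]
  obtain ⟨c, hc⟩ := Nat.exists_eq_add_of_le hc
  rw [sum_choose_innerAntidiagonal, outer, Finset.sum_insert (by simp; omega),
    Finset.sum_insert (by simp; omega), Finset.sum_pair (by simp; omega)]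
  simp only [pred, Nat.choose_zero_right, Nat.choose_self, Nat.choose_one_right]
  rw [hc, pow_add, Int.modEq_iff_dvd]
  push_cast
  omega

namespace IsHammingFusion

variable (H : IsHammingFusion m r)

include H

/-- Compare, at the weights `c` and `n`, the convolutions of distinct isolated classes. -/
lemma odd_and_exists_rel_succ {c n : ℕ} (h2 : 2 ≤ c) (hcn : c < n) (hn : n ≤ m) (hr : r c n)
    (hiso : ∀ a, 1 ≤ a → a < c → IsIsolated r n a) :
    Odd (m - n) ∧ ∃ a, 1 ≤ a ∧ a < c ∧ r a (n + 1) ∧ r (c - a) (n + 1) := by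
  obtain ⟨hodd, ⟨a, b⟩, hp, ha, hb⟩ := H.odd_and_exists_rel_of_sum_choose hcn hn hr
    (innerAntidiagonal_subset 1 c) swap_mem_innerAntidiagonal
    (fun p hp ↦ by
      rw [mem_innerAntidiagonal] at hp
      exact hiso _ (by omega) (by omega))
    (.inl rfl) (sum_choose_innerAntidiagonal_one h2)
  obtain ⟨rfl, h1, h2⟩ := mem_innerAntidiagonal.1 hp
  exact ⟨hodd, a, h1, by omega, ha, by simpa using hb⟩

lemma rel_one_four_of_two_le {i n : ℕ} (hi : 2 ≤ i) (hin : i < n) (hn : n ≤ m)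
    (hr : r i n) (hiso : ∀ a, 1 ≤ a → a < n → a ≠ i → IsIsolated r n a) : r 1 4 ∧ 4 ≤ m := by
  obtain ⟨hodd, h, h1, hhi, hh, hh'⟩ := H.odd_and_exists_rel_succ hi hin hn hr
    fun a ha hai ↦ hiso a ha (by omega) hai.ne
  have hnm : n + 1 ≤ m := by obtain ⟨k, hk⟩ := hodd; omega
  have twice : i - h = h :=
    hiso h h1 (by omega) (by omega) _ (by omega) (H.trans hh (H.symm hh'))
  have h_eq_one : h = 1 := by
    by_contra hne
    have iso : ∀ a, 1 ≤ a → a < h → IsIsolated r (n + 1) a := fun a ha hah b hb hab ↦ by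
      rcases Nat.lt_succ_iff_lt_or_eq.1 (Nat.lt_succ_of_le hb) with hb | rfl
      · exact hiso a ha (by omega) (by omega) b (by omega) hab
      · have := hiso a ha (by omega) (by omega) h (by omega) (H.trans hab (H.symm hh))
        omega
    have hodd' := (H.odd_and_exists_rel_succ (by omega) (by omega) hnm hh iso).1
    rw [Nat.odd_iff] at hodd hodd'
    omega
  subst h_eq_one
  have n_odd : Odd n := by
    have := H.odd_iff_of_rel_one (by omega) hnm hh fun a ha han h1a ↦ by
      have := hiso 1 le_rfl (by omega) (by omega) a (by omega) h1a
      omega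
    simp only [Nat.odd_iff] at hodd this ⊢
    omega
  obtain rfl : n = 3 := by
    by_contra hne
    have hodd_n := Nat.odd_iff.1 n_odd
    have key := H.even_choose (i := i) (a := 1) (b := n - 1) (by omega) (by omega)
      (by rwa [show 1 + (n - 1) = n by omega])
      (by rw [show 1 + (n - 1) = n by omega]; exact hiso 1 le_rfl (by omega) (by omega))
      (by rw [show 1 + (n - 1) = n by omega]; exact hiso _ (by omega) (by omega) (by omega))
    rw [show 1 + (n - 1) = n by omega, Nat.choose_one_right] at key
    exact Nat.not_even_iff_odd.2 n_odd key
  exact ⟨hh, hnm⟩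

lemma rel_one_four_of_rel_one_odd {n : ℕ} (h3 : 3 ≤ n) (hn : n ≤ m) (hodd : Odd n) (hr : r 1 n)
    (hiso : ∀ a, 2 ≤ a → a < n → IsIsolated r n a) : r 1 4 ∧ 4 ≤ m := by
  have ne_one : ∀ a, 2 ≤ a → a < n → ¬ r 1 a := fun a ha han h1a ↦ by
    have := hiso a ha han 1 (by omega) (H.symm h1a)
    omega
  obtain ⟨modd, hsucc⟩ := (H.odd_iff_of_rel_one h3 hn hr ne_one).1 hodd
  have hnm : n + 1 ≤ m := by obtain ⟨k, hk⟩ := modd; omega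
  obtain rfl : n = 3 := by
    by_contra hne
    obtain ⟨k, rfl⟩ : ∃ k, n = 2 + k := ⟨n - 2, by omega⟩
    have iso : ∀ a, 2 ≤ a → a < 2 + k → IsIsolated r (2 + (k + 1)) a := fun a ha hak b hb hab ↦ by
      rcases (by omega : b ≤ 2 + k ∨ b = 2 + k + 1) with hb | rfl
      · exact hiso a ha hak b hb hab
      · exact absurd (H.trans hsucc (H.symm hab)) (ne_one a ha hak)
    have hk := Nat.odd_iff.1 hodd
    have choose_n := H.even_choose (i := 1) (by omega) hn hr (hiso 2 le_rfl (by omega))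
      (hiso k (by omega) (by omega))
    have choose_succ := H.even_choose (i := 1) (a := 2) (b := k + 1) (by omega) (by omega) hsucc
      (iso 2 le_rfl (by omega)) (iso (k + 1) (by omega) (by omega))
    rw [show 2 + (k + 1) = 2 + k + 1 by omega, Nat.choose_succ_succ' (2 + k) 1,
      Nat.choose_one_right, Nat.even_add] at choose_succ
    exact Nat.not_even_iff_odd.2 hodd (choose_succ.2 choose_n)
  exact ⟨hsucc, hnm⟩

lemma even_of_rel_one_add_self {h : ℕ} (h3 : 3 ≤ h) (hm : h + h ≤ m) (hr : r 1 (h + h))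
    (iso_two : IsIsolated r (h + h) 2) (iso_sub_two : IsIsolated r (h + h) (h + h - 2))
    (hne : ¬ r 2 (h + h + 1)) : Even h := by
  set S : Finset (ℕ × ℕ) := {(2, h + h - 2), (h + h - 2, 2)} with hS
  have mem_S {p : ℕ × ℕ} : p ∈ S ↔ p = (2, h + h - 2) ∨ p = (h + h - 2, 2) := by simp [hS]
  have not_rel : indicatorArray r S (h + h + 1) (h + h + 1) = 0 := by
    by_contra h_ne
    obtain ⟨p, hp, h1, h2⟩ := exists_mem_of_indicatorArray_ne_zero h_ne
    rcases mem_S.1 hp with rfl | rfl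
    exacts [hne h1, hne h2]
  have key := H.sum_choose_add_modEq_zero (c := h + h) (S := S) (by omega) hm hr
    (fun p hp ↦ by
      rw [mem_antidiagonal]
      rcases mem_S.1 hp with rfl | rfl <;> dsimp only <;> omega)
    (fun p hp ↦ by rcases mem_S.1 hp with rfl | rfl <;> simp [mem_S])
    (fun p hp ↦ by
      rcases mem_S.1 hp with rfl | rfl
      exacts [iso_two, iso_sub_two])
    (.inr ⟨rfl, by omega⟩)
  rw [not_rel, mul_zero, add_zero, Finset.sum_pair (by simp; omega),
    Nat.choose_symm (by omega : 2 ≤ h + h), Int.modEq_zero_iff_dvd] at key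
  have choose_even : Even ((h + h).choose 2) := by
    rw [Nat.even_iff]
    dsimp only at key
    omega
  have choose_eq : (h + h).choose 2 = h * (h + h - 1) := by
    rw [Nat.choose_two_right, ← two_mul, mul_assoc, Nat.mul_div_cancel_left _ two_pos]
  rw [choose_eq, Nat.even_mul] at choose_even
  exact choose_even.resolve_right (Nat.not_even_iff.2 (by omega))

lemma not_rel_one_of_even {n : ℕ} (h6 : 6 ≤ n) (hn : n ≤ m) (heven : Even n)
    (hiso : ∀ a, 2 ≤ a → a < n → IsIsolated r n a) : ¬ r 1 n := by
  intro hr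
  obtain ⟨modd, ⟨h, h'⟩, hp, hh, hh'⟩ := H.odd_and_exists_rel_of_sum_choose (by omega) hn hr
    (innerAntidiagonal_subset 2 n) swap_mem_innerAntidiagonal
    (fun p hp ↦ by
      rw [mem_innerAntidiagonal] at hp
      exact hiso _ (by omega) (by omega))
    (.inr ⟨rfl, by omega⟩) (sum_choose_innerAntidiagonal_two (by omega) heven)
  obtain ⟨hsum, h2, h2'⟩ := mem_innerAntidiagonal.1 hp
  obtain rfl : h = h' :=
    (hiso h h2 (by omega) h' (by omega) (H.trans hh (H.symm hh'))).symm
  obtain rfl : h + h = n := hsum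
  have hnm : h + h + 1 ≤ m := by obtain ⟨k, hk⟩ := modd; omega
  have not_rel_succ : ∀ a, 2 ≤ a → a < h + h → a ≠ h → ¬ r a (h + h + 1) :=
    fun a _ han hah har ↦
      hah (hiso h h2 (by omega) a (by omega) (H.trans hh (H.symm har)))
  have h_even : Even h := H.even_of_rel_one_add_self (by omega) hn hr
    (hiso 2 le_rfl (by omega)) (hiso _ (by omega) (by omega))
    (not_rel_succ 2 le_rfl (by omega) (by omega))
  have := (H.odd_and_exists_rel_of_sum_choose (by omega) hnm hh
    (innerAntidiagonal_subset 2 h) swap_mem_innerAntidiagonal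
    (fun p hp b hb hpb ↦ by
      rw [mem_innerAntidiagonal] at hp
      rcases (by omega : b ≤ h + h ∨ b = h + h + 1) with hb | rfl
      · exact hiso _ (by omega) (by omega) b hb hpb
      · exact absurd hpb (not_rel_succ _ (by omega) (by omega) (by omega)))
    (.inl rfl) (sum_choose_innerAntidiagonal_two (by rw [Nat.even_iff] at h_even; omega) h_even)).1
  rw [Nat.odd_iff] at modd this
  omega

/-- At the first coincidence `r i n` all other weights below `n` are isolated, which makes the
convolution identities explicit. -/
lemma rel_one_two_or_rel_one_four (hne : ∃ i j, 1 ≤ i ∧ i < j ∧ j ≤ m ∧ r i j) :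
    r 1 2 ∨ (r 1 4 ∧ 4 ≤ m) := by
  classical
  have hex : ∃ n, n ≤ m ∧ ∃ i, 1 ≤ i ∧ i < n ∧ r i n := by
    obtain ⟨i, j, h1, hij, hj, hr⟩ := hne
    exact ⟨j, hj, i, h1, hij, hr⟩
  obtain ⟨n, ⟨hn, i, hi, hin, hr⟩, hmin⟩ : ∃ n, (n ≤ m ∧ ∃ i, 1 ≤ i ∧ i < n ∧ r i n) ∧
      ∀ k < n, ¬ (k ≤ m ∧ ∃ i, 1 ≤ i ∧ i < k ∧ r i k) :=
    ⟨Nat.find hex, Nat.find_spec hex, fun k ↦ Nat.find_min hex⟩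
  have below : ∀ a b, 1 ≤ a → a < b → b < n → ¬ r a b := fun a b ha hab hb h ↦
    hmin b hb ⟨by omega, a, ha, hab, h⟩
  have hiso : ∀ a, 1 ≤ a → a < n → a ≠ i → IsIsolated r n a := fun a ha han hai b hb hab ↦ by
    by_contra hne
    have hb0 : b ≠ 0 := by rintro rfl; exact hne (H.eq_zero_of_rel_zero (H.symm hab)).symm
    rcases hb.eq_or_lt with rfl | hb
    · rcases lt_or_gt_of_ne hai with h | h
      · exact below a i ha h hin (H.trans hab (H.symm hr))
      · exact below i a hi h han (H.trans hr (H.symm hab))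
    · rcases lt_or_gt_of_ne hne with h | h
      · exact below b a (by omega) h han (H.symm hab)
      · exact below a b ha h hb hab
  rcases hi.eq_or_lt with rfl | hi
  · rcases Nat.even_or_odd n with heven | hodd
    · rcases (by rw [Nat.even_iff] at heven; omega : n = 2 ∨ n = 4 ∨ 6 ≤ n) with rfl | rfl | h6
      · exact .inl hr
      · exact .inr ⟨hr, hn⟩
      · exact absurd hr (H.not_rel_one_of_even h6 hn heven
          fun a ha han ↦ hiso a (by omega) han (by omega))
    · exact .inr (H.rel_one_four_of_rel_one_odd (by rw [Nat.odd_iff] at hodd; omega) hn hodd hr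
        fun a ha han ↦ hiso a (by omega) han (by omega))
  · exact .inr (H.rel_one_four_of_two_le hi hin hn hr hiso)

end IsHammingFusion

/-- The class of a weight `a` is periodic in `a` with period `s`, for `1 ≤ a ≤ n`. -/
def PeriodicUpTo (r : ℕ → ℕ → Prop) (s n : ℕ) : Prop := ∀ a, 1 ≤ a → a + s ≤ n → r a (a + s)

lemma exists_pairSum_modEq_of_eq_zero (n : ℕ) {M : ℕ} (hM : M ≠ 0) :
    ∃ v : ℕ, ∀ Φ : WeightArray, (∀ a b, Φ a b = Φ b a) → (∀ a ≤ n, ∀ b ≤ n, Φ a b = 0) →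
      ∀ w ≤ n, pairSum w (n - w + M) Φ ≡ 2 ^ (v + 1) * (Φ (w + 1) (w + 1) +
        (if Even M then 1 else 0) * Φ (w + 2) (w + 2)) [ZMOD 2 ^ (v + 2)] := by
  obtain ⟨v, Q, hQ⟩ := exists_zeroStep_pow_eq_of_ne_zero hM
  refine ⟨v, fun Φ hsymm hΦ w hw ↦ ?_⟩
  set ε : ℤ := if Even M then 1 else 0
  set Ψ := diagShift Φ + ε • (diagShift ^ 2) Φ with hΨ
  have expand : pairSum w (n - w + M) Φ =
      2 ^ (v + 1) * pairSum w (n - w) Ψ + 2 ^ (v + 2) * pairSum w (n - w) (Q Φ) := by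
    rw [pairSum_add_right, hQ]
    simp only [LinearMap.add_apply, LinearMap.smul_apply, Module.End.one_apply, map_add, map_smul,
      smul_eq_mul, hΨ]
    rw [pairSum_eq_zero_of_forall_le w (n - w) Φ fun a ha b hb ↦
      hΦ a (by omega) b (by omega), zero_add]
  have hdiag : pairSum w (n - w) Ψ ≡ Ψ w w [ZMOD 2] :=
    (pairSum_modEq_two w (n - w) Ψ).trans <| pairSum_modEq_two_of_symm w Ψ fun a b ↦ by
      simp only [hΨ, Pi.add_apply, Pi.smul_apply, pow_two, Module.End.mul_apply, diagShift_apply,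
        hsymm (a + 1), hsymm (a + 1 + 1)]
  have scaled := hdiag.mul_left' (c := 2 ^ (v + 1))
  rw [← pow_succ] at scaled
  rw [expand]
  exact Int.ModEq.trans (Int.modEq_iff_dvd.2 ⟨-pairSum w (n - w) (Q Φ), by ring⟩) scaled

lemma pairSum_prodArray_add_period {s : ℕ} (hs : s = 1 ∨ s = 3) {G : ℕ → ℤ}
    (hG : ∀ a, G (a + s) = G a) {i : ℕ} (hi : 1 ≤ i) (u : ℕ) :
    pairSum (i + s) u (prodArray G G) = pairSum i (u + s) (prodArray G G) := by
  obtain ⟨i, rfl⟩ := Nat.exists_eq_add_of_le' hi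
  rw [pairSum_add_right]
  rcases hs with rfl | rfl
  · simp only [pairSum_succ_left, pow_one]
    congr 1
    ext a b
    simp only [nonzeroStep_apply, zeroStep_apply, prodArray, hG]
    ring
  · rw [show i + 1 + 3 = i + 1 + 1 + 1 + 1 by ring]
    simp only [pairSum_succ_left, pow_succ, pow_zero, one_mul, Module.End.mul_apply]
    congr 1
    ext a b
    simp only [nonzeroStep_apply, zeroStep_apply, prodArray, hG]
    ring

namespace IsHammingFusion

variable (H : IsHammingFusion m r)

include H

/-- Both convolution squares take the same values at `w` and `w + s`, and their difference,
divided by the largest possible power of two, is known modulo two. -/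
lemma sq_sub_sq_modEq {s n : ℕ} (hs : s = 1 ∨ s = 3) (hnm : n < m) {F G : ℕ → ℤ}
    (hF : IsInvariant r (prodArray F F)) (hG : ∀ a, G (a + s) = G a) (hFG : ∀ a ≤ n, F a = G a)
    {w : ℕ} (hw : 1 ≤ w) (hws : w + s ≤ n) (hr : r w (w + s)) :
    F (w + 1) ^ 2 - G (w + 1) ^ 2 +
        (if Even (m - n) then 1 else 0) * (F (w + 2) ^ 2 - G (w + 2) ^ 2) ≡
      F (w + s + 1) ^ 2 - G (w + s + 1) ^ 2 +
        (if Even (m - n) then 1 else 0) * (F (w + s + 2) ^ 2 - G (w + s + 2) ^ 2) [ZMOD 2] := by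
  obtain ⟨v, hv⟩ := exists_pairSum_modEq_of_eq_zero n (Nat.sub_ne_zero_of_lt hnm)
  set Φ := prodArray F F - prodArray G G with hΦ
  have symm : ∀ a b, Φ a b = Φ b a := fun a b ↦ by
    simp only [hΦ, Pi.sub_apply, prodArray]
    ring
  have vanish : ∀ a ≤ n, ∀ b ≤ n, Φ a b = 0 := fun a ha b hb ↦ by
    simp only [hΦ, Pi.sub_apply, prodArray, hFG a ha, hFG b hb, sub_self]
  have diag : ∀ a, Φ a a = F a ^ 2 - G a ^ 2 := fun a ↦ by
    simp only [hΦ, Pi.sub_apply, prodArray, sq]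
  have equal : pairSum w (n - w + (m - n)) Φ = pairSum (w + s) (n - (w + s) + (m - n)) Φ := by
    rw [hΦ, map_sub, map_sub, show n - w + (m - n) = m - w by omega,
      show n - (w + s) + (m - n) = m - (w + s) by omega, pairSum_prodArray_add_period hs hG hw,
      show m - (w + s) + s = m - w by omega, H.pairSum_eq hF (by omega) (by omega) hr]
  have key := (hv Φ symm vanish w (by omega)).symm.trans
    (equal ▸ hv Φ symm vanish (w + s) hws)
  rw [pow_succ 2 (v + 1)] at key
  simpa only [diag] using Int.ModEq.mul_left_cancel' (by positivity) key

lemma exists_periodic_extension {s n : ℕ} (hs : s = 1 ∨ s = 3) (hnm : n < m)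
    (hper : PeriodicUpTo r s n) (c : ℕ) :
    ∃ g : ℕ → ℤ, (∀ a, g (a + s) = g a) ∧ (∀ a, 1 ≤ a → a ≤ n → classIndicator r c a = g a) ∧
      ∀ w, 1 ≤ w → w + s ≤ n →
        classIndicator r c (w + 1) ^ 2 - g (w + 1) ^ 2 +
          (if Even (m - n) then 1 else 0) * (classIndicator r c (w + 2) ^ 2 - g (w + 2) ^ 2) ≡
        classIndicator r c (w + s + 1) ^ 2 - g (w + s + 1) ^ 2 + (if Even (m - n) then 1 else 0) *
          (classIndicator r c (w + s + 2) ^ 2 - g (w + s + 2) ^ 2) [ZMOD 2] := by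
  -- The weight zero is a class of its own, so the value there is free.
  let F : ℕ → ℤ := fun a ↦ if a = 0 then classIndicator r c s else classIndicator r c a
  have F_eq : ∀ a, a ≠ 0 → F a = classIndicator r c a := fun a ha ↦ if_neg ha
  have F_congr : ∀ a b, r a b → F a = F b := fun a b hab ↦ by
    rcases eq_or_ne a 0 with rfl | ha
    · rw [H.eq_zero_of_rel_zero hab]
    · have hb : b ≠ 0 := by
        rintro rfl
        exact ha (H.eq_zero_of_rel_zero (H.symm hab))
      rw [F_eq a ha, F_eq b hb, H.classIndicator_congr c hab]
  have F_mod : ∀ a ≤ n, F a = F (a % s) := fun a ↦ by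
    induction a using Nat.strong_induction_on with
    | _ a ih =>
      intro ha
      rcases lt_or_ge a s with has | has
      · rw [Nat.mod_eq_of_lt has]
      · obtain ⟨b, rfl⟩ := Nat.exists_eq_add_of_le' has
        rw [Nat.add_mod_right, ← ih b (by omega) (by omega)]
        rcases Nat.eq_zero_or_pos b with rfl | hb
        · simp [F]
        · exact (F_congr _ _ (hper b hb ha)).symm
  have F_inv : IsInvariant r (prodArray F F) := fun a a' b b' ha hb ↦ by
    simp only [prodArray, F_congr _ _ ha, F_congr _ _ hb]
  refine ⟨fun a ↦ F (a % s), fun a ↦ by simp only [Nat.add_mod_right],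
    fun a h1 ha ↦ (F_eq a (by omega)).symm.trans (F_mod a ha), fun w hw hws ↦ ?_⟩
  have key := H.sq_sub_sq_modEq hs hnm F_inv (G := fun a ↦ F (a % s))
    (fun a ↦ by simp only [Nat.add_mod_right]) F_mod hw hws (hper w hw hws)
  simpa only [F_eq _ (Nat.succ_ne_zero _)] using key

lemma rel_of_sq_sub_sq_modEq_zero {c a : ℕ}
    (h : classIndicator r c a ^ 2 - classIndicator r c c ^ 2 ≡ 0 [ZMOD 2]) : r c a := by
  by_contra hne
  simp [classIndicator, H.equivalence.refl c, hne, Int.modEq_iff_dvd] at h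

lemma periodicUpTo_succ {s n : ℕ} (hs : s = 1 ∨ s = 3) (hnm : n < m) (hper : PeriodicUpTo r s n)
    (hn : s + 2 ≤ n ∨ (s + 1 ≤ n ∧ Odd (m - n))) : PeriodicUpTo r s (n + 1) := by
  intro a h1 ha
  rcases (by omega : a + s ≤ n ∨ a + s = n + 1) with ha | ha
  · exact hper a h1 ha
  obtain ⟨g, g_per, g_eq, key⟩ := H.exists_periodic_extension hs hnm hper a
  have vanish : ∀ b, 1 ≤ b → b ≤ n → classIndicator r a b ^ 2 - g b ^ 2 = 0 := fun b hb hbn ↦ by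
    rw [g_eq b hb hbn, sub_self]
  have target : classIndicator r a (a + s) ^ 2 - g (a + s) ^ 2 ≡ 0 [ZMOD 2] := by
    rcases Nat.even_or_odd (m - n) with heven | hodd
    · have hn := hn.resolve_right fun h ↦ Nat.not_odd_iff_even.2 heven h.2
      obtain ⟨b, rfl⟩ : ∃ b, a = b + 2 := ⟨a - 2, by omega⟩
      have := key b (by omega) (by omega)
      rw [if_pos heven, vanish (b + 1) (by omega) (by omega),
        vanish (b + 2) (by omega) (by omega), vanish (b + s + 1) (by omega) (by omega)] at this
      simpa [add_right_comm] using this.symm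
    · obtain ⟨b, rfl⟩ : ∃ b, a = b + 1 := ⟨a - 1, by omega⟩
      have := key b (by omega) (by omega)
      rw [if_neg (Nat.not_even_iff_odd.2 hodd), vanish (b + 1) (by omega) (by omega)] at this
      simpa [add_right_comm] using this.symm
  rw [g_per, ← g_eq a h1 (by omega)] at target
  exact H.rel_of_sq_sub_sq_modEq_zero target

lemma periodicUpTo_of_add_two_le {s n : ℕ} (hs : s = 1 ∨ s = 3) (hn : s + 2 ≤ n) (hnm : n ≤ m)
    (hper : PeriodicUpTo r s n) : PeriodicUpTo r s m := by
  suffices ∀ k, n ≤ k → k ≤ m → PeriodicUpTo r s k from this m hnm le_rfl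
  intro k hk
  induction k, hk using Nat.le_induction with
  | base => exact fun _ ↦ hper
  | succ k hnk ih =>
    exact fun hkm ↦ H.periodicUpTo_succ hs hkm (ih (by omega)) (.inl (by omega))

lemma periodicUpTo_of_add_one_le {s n : ℕ} (hs : s = 1 ∨ s = 3) (hn : s + 1 ≤ n) (hnm : n ≤ m)
    (hper : PeriodicUpTo r s n) (hodd : n = m ∨ Odd (m - n)) : PeriodicUpTo r s m := by
  rcases hodd with rfl | hodd
  · exact hper
  · have hlt : n < m := by
      obtain ⟨k, hk⟩ := hodd
      omega
    exact H.periodicUpTo_of_add_two_le hs (by omega) hlt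
      (H.periodicUpTo_succ hs hlt hper (.inr ⟨hn, hodd⟩))

lemma periodicUpTo_one_or_rel_one_four (h2 : 2 ≤ m) (hr : r 1 2) :
    PeriodicUpTo r 1 m ∨ (r 1 4 ∧ 4 ≤ m) := by
  have per : PeriodicUpTo r 1 2 := fun a h1 ha ↦ by
    obtain rfl : a = 1 := by omega
    exact hr
  by_cases hm : 2 = m ∨ Odd (m - 2)
  · exact .inl (H.periodicUpTo_of_add_one_le (.inl rfl) le_rfl h2 per hm)
  · obtain ⟨hne, heven⟩ := not_or.1 hm
    rw [Nat.not_odd_iff_even] at heven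
    have h4 : 4 ≤ m := by
      obtain ⟨k, hk⟩ := heven
      omega
    obtain ⟨g, g_per, g_eq, key⟩ :=
      H.exists_periodic_extension (.inl rfl) (by omega : 2 < m) per 1
    have key := key 1 le_rfl le_rfl
    simp only [if_pos heven, Nat.reduceAdd, g_per 3, g_per 2, g_per 1, ← g_eq 1 le_rfl (by omega),
      H.classIndicator_congr 1 (H.symm hr)] at key
    refine .inr ⟨H.rel_of_sq_sub_sq_modEq_zero (Int.modEq_iff_dvd.2 ?_), h4⟩
    convert Int.modEq_iff_dvd.1 key.symm using 1
    ring

lemma sum_classIndicator_modEq_zero (h6 : 6 ≤ m) (heven : Even m) (hr : r 1 4) (c : ℕ) :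
    classIndicator r c 2 + classIndicator r c 3 + classIndicator r c 5 + classIndicator r c 6 ≡ 0
      [ZMOD 2] := by
  have per : PeriodicUpTo r 3 4 := fun a h1 ha ↦ by
    obtain rfl : a = 1 := by omega
    exact hr
  obtain ⟨g, g_per, g_eq, key⟩ :=
    H.exists_periodic_extension (.inr rfl) (by omega : 4 < m) per c
  have key := key 1 le_rfl le_rfl
  have hε : Even (m - 4) := heven.tsub (by decide)
  have sq_mod : ∀ a, classIndicator r c a ^ 2 ≡ classIndicator r c a [ZMOD 2] := fun a ↦ by
    rw [classIndicator]
    split_ifs <;> rfl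
  simp only [if_pos hε, Nat.reduceAdd, g_per 2, g_per 3, ← g_eq 2 (by omega) (by omega),
    ← g_eq 3 (by omega) (by omega)] at key
  have h2 := sq_mod 2
  have h3 := sq_mod 3
  have h5 := sq_mod 5
  have h6 := sq_mod 6
  rw [Int.modEq_iff_dvd] at *
  omega

/-- The weights 2, 3, 5 and 6 split into classes of even cardinality. -/
lemma rel_two_cases (h6 : 6 ≤ m) (heven : Even m) (hr : r 1 4) :
    (r 2 5 ∧ r 3 6) ∨ (r 2 3 ∧ r 5 6) ∨ (r 2 6 ∧ r 3 5) := by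
  have class_two := H.sum_classIndicator_modEq_zero h6 heven hr 2
  have class_three := H.sum_classIndicator_modEq_zero h6 heven hr 3
  have class_five := H.sum_classIndicator_modEq_zero h6 heven hr 5
  have refl := H.equivalence.refl
  have symm : ∀ a b, r a b → r b a := fun a b ↦ H.symm
  have trans : ∀ a b c, r a b → r b c → r a c := fun a b c ↦ H.trans
  simp only [classIndicator, Int.modEq_iff_dvd] at class_two class_three class_five
  grind

/-- For the square of a class, the correction term of `pairSum_modEq_four` at `i` vanishes if
`m - i` is even or if `i + 1` is not in the class. -/
lemma pairSum_indicator_modEq_four {n : ℕ} {S : Finset ℕ} {c : ℕ} (hS : ∀ a ≤ n, r c a ↔ a ∈ S)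
    {i j : ℕ} (hij : r i j) (hin : i ≤ n) (hjn : j ≤ n) (hnm : n ≤ m)
    (hi : Even (m - i) ∨ (i < n ∧ i + 1 ∉ S)) (hj : Even (m - j) ∨ (j < n ∧ j + 1 ∉ S)) :
    pairSum i 0 (fun a b ↦ if a ∈ S ∧ b ∈ S then 1 else 0) ≡
      pairSum j 0 (fun a b ↦ if a ∈ S ∧ b ∈ S then 1 else 0) [ZMOD 4] := by
  set Φ := prodArray (classIndicator r c) (classIndicator r c) with hΦ
  have inv : IsInvariant r Φ := fun a a' b b' ha hb ↦ by
    simp only [hΦ, prodArray, H.classIndicator_congr c ha, H.classIndicator_congr c hb]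
  have square : ∀ k ≤ n, pairSum k 0 Φ =
      pairSum k 0 (fun a b ↦ if a ∈ S ∧ b ∈ S then 1 else 0) := fun k hk ↦
    pairSum_congr fun a ha b hb ↦ by
      simp only [hΦ, prodArray, classIndicator, hS a (by omega), hS b (by omega), ite_and, ite_mul,
        one_mul, zero_mul]
  have correction : ∀ k, Even (m - k) ∨ (k < n ∧ k + 1 ∉ S) →
      2 * (m - k : ℕ) * Φ (k + 1) (k + 1) ≡ 0 [ZMOD 4] := by
    rintro k (⟨t, ht⟩ | ⟨hk, hkS⟩)
    · rw [ht]
      exact Int.modEq_zero_iff_dvd.2 ⟨t * Φ (k + 1) (k + 1), by push_cast; ring⟩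
    · simp [hΦ, prodArray, classIndicator, hS (k + 1) hk, hkS]
  have key := H.pairSum_modEq_four inv (fun a b ↦ mul_comm _ _) (hin.trans hnm) (hjn.trans hnm) hij
  rw [square i hin, square j hjn] at key
  simpa using ((Int.ModEq.add_left _ (correction i hi)).symm.trans key).trans
    (Int.ModEq.add_left _ (correction j hj))

lemma rel_one_two_of_rel_two_three (h6 : 6 ≤ m) (heven : Even m) (h14 : r 1 4) (h23 : r 2 3)
    (h56 : r 5 6) (h25 : ¬ r 2 5) : r 1 2 := by
  by_contra h12
  have hS : ∀ a ≤ 6, r 2 a ↔ a ∈ ({2, 3} : Finset ℕ) := by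
    have h0 := @H.eq_zero_of_rel_zero
    have refl := H.equivalence.refl
    have symm : ∀ a b, r a b → r b a := fun a b ↦ H.symm
    have trans : ∀ a b c, r a b → r b c → r a c := fun a b c ↦ H.trans
    intro a ha
    interval_cases a <;> grind
  have key := H.pairSum_indicator_modEq_four hS h56 (by omega) le_rfl h6 (.inr (by decide))
    (.inl (heven.tsub (by decide)))
  revert key
  decide +kernel

lemma rel_two_three_of_rel_two_six (h6 : 6 ≤ m) (heven : Even m) (h14 : r 1 4) (h26 : r 2 6)
    (h35 : r 3 5) : r 2 3 := by
  have h0 := @H.eq_zero_of_rel_zero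
  have refl := H.equivalence.refl
  have symm : ∀ a b, r a b → r b a := fun a b ↦ H.symm
  have trans : ∀ a b c, r a b → r b c → r a c := fun a b c ↦ H.trans
  by_contra h23
  by_cases h12 : r 1 2
  · have hS : ∀ a ≤ 6, r 3 a ↔ a ∈ ({3, 5} : Finset ℕ) := by
      intro a ha
      interval_cases a <;> grind
    have key := H.pairSum_indicator_modEq_four hS h35 (by omega) (by omega) h6
      (.inr (by decide)) (.inr (by decide))
    revert key
    decide +kernel
  · have hS : ∀ a ≤ 6, r 2 a ↔ a ∈ ({2, 6} : Finset ℕ) := by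
      intro a ha
      interval_cases a <;> grind
    have key := H.pairSum_indicator_modEq_four hS h26 (by omega) le_rfl h6
      (.inr (by decide)) (.inl (heven.tsub (by decide)))
    revert key
    decide +kernel

lemma periodicUpTo_of_rel_one_four (h4 : 4 ≤ m) (h14 : r 1 4) :
    PeriodicUpTo r 1 m ∨ PeriodicUpTo r 3 m := by
  have per_four : PeriodicUpTo r 3 4 := fun a h1 ha ↦ by
    obtain rfl : a = 1 := by omega
    exact h14
  by_cases hm : 4 = m ∨ Odd (m - 4)
  · exact .inr (H.periodicUpTo_of_add_one_le (.inr rfl) le_rfl h4 per_four hm)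
  obtain ⟨h_ne, h_even⟩ := not_or.1 hm
  obtain ⟨k, hk⟩ := Nat.not_odd_iff_even.1 h_even
  have heven : Even m := ⟨k + 2, by omega⟩
  have h6 : 6 ≤ m := by omega
  have per_six (h25 : r 2 5) (h36 : r 3 6) : PeriodicUpTo r 3 m := by
    refine H.periodicUpTo_of_add_two_le (.inr rfl) (by omega : 3 + 2 ≤ 6) h6 fun a h1 ha ↦ ?_
    obtain ⟨h1, h3⟩ : 1 ≤ a ∧ a ≤ 3 := ⟨h1, by omega⟩
    interval_cases a
    exacts [h14, h25, h36]
  have const_four (h12 : r 1 2) (h23 : r 2 3) : PeriodicUpTo r 1 m := by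
    refine H.periodicUpTo_of_add_two_le (.inl rfl) (by omega : 1 + 2 ≤ 4) h4 fun a h1 ha ↦ ?_
    obtain ⟨h1, h3⟩ : 1 ≤ a ∧ a ≤ 3 := ⟨h1, by omega⟩
    interval_cases a
    exacts [h12, h23, H.trans (H.symm (H.trans h12 h23)) h14]
  rcases H.rel_two_cases h6 heven h14 with ⟨h25, h36⟩ | ⟨h23, h56⟩ | ⟨h26, h35⟩
  · exact .inr (per_six h25 h36)
  · by_cases h25 : r 2 5
    · exact .inr (per_six h25 (H.trans (H.trans (H.symm h23) h25) h56))
    · exact .inl (const_four (H.rel_one_two_of_rel_two_three h6 heven h14 h23 h56 h25) h23)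
  · have h23 := H.rel_two_three_of_rel_two_six h6 heven h14 h26 h35
    exact .inr (per_six (H.trans h23 h35) (H.trans (H.symm h23) h26))

theorem trivial_or_periodicUpTo : (∀ i j, i ≤ m → j ≤ m → r i j → i = j) ∨
    PeriodicUpTo r 1 m ∨ (PeriodicUpTo r 3 m ∧ 4 ≤ m) := by
  by_cases htriv : ∀ i j, i ≤ m → j ≤ m → r i j → i = j
  · exact .inl htriv
  have coincidence : ∃ i j, 1 ≤ i ∧ i < j ∧ j ≤ m ∧ r i j := by
    push Not at htriv
    obtain ⟨i, j, hi, hj, hij, hne⟩ := htriv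
    have hi0 : i ≠ 0 := by
      rintro rfl
      exact hne (H.eq_zero_of_rel_zero hij).symm
    have hj0 : j ≠ 0 := by
      rintro rfl
      exact hne (H.eq_zero_of_rel_zero (H.symm hij))
    rcases lt_or_gt_of_ne hne with h | h
    · exact ⟨i, j, by omega, h, hj, hij⟩
    · exact ⟨j, i, by omega, h, hi, H.symm hij⟩
  have h2 : 2 ≤ m := by
    obtain ⟨i, j, hi, hij, hj, -⟩ := coincidence
    omega
  have four (h : r 1 4 ∧ 4 ≤ m) : PeriodicUpTo r 1 m ∨ (PeriodicUpTo r 3 m ∧ 4 ≤ m) :=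
    (H.periodicUpTo_of_rel_one_four h.2 h.1).imp_right fun hper ↦ ⟨hper, h.2⟩
  refine .inr ?_
  rcases H.rel_one_two_or_rel_one_four coincidence with h12 | h14
  · exact (H.periodicUpTo_one_or_rel_one_four h2 h12).elim .inl four
  · exact four h14

end IsHammingFusion

end Fusion

/-! ### Lines in directions of given norm -/

section DotProduct

variable {ι F : Type*} [Fintype ι]

lemma dotProduct_add_self [CommRing F] (x y : ι → F) :
    (x + y) ⬝ᵥ (x + y) = x ⬝ᵥ x + 2 * (x ⬝ᵥ y) + y ⬝ᵥ y := by
  rw [add_dotProduct, dotProduct_add, dotProduct_add, dotProduct_comm y x]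
  ring

lemma dotProduct_sub_self [CommRing F] (x y : ι → F) :
    (x - y) ⬝ᵥ (x - y) = x ⬝ᵥ x - 2 * (x ⬝ᵥ y) + y ⬝ᵥ y := by
  rw [sub_dotProduct, dotProduct_sub, dotProduct_sub, dotProduct_comm y x]
  ring

variable [Field F]

lemma exists_dotProduct_eq {k : ι → F} (hk : k ≠ 0) (a : F) : ∃ w, w ⬝ᵥ k = a := by
  classical
  obtain ⟨i, hi⟩ := Function.ne_iff.1 hk
  exact ⟨Pi.single i (a / k i), by simp [single_dotProduct, div_mul_cancel₀ a hi]⟩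

lemma exists_dotProduct_self_add_smul_eq (two : (2 : F) ≠ 0) {u n : ι → F} (hn : n ⬝ᵥ n = 0)
    (hun : u ⬝ᵥ n ≠ 0) (d : F) : ∃ a : F, (u + a • n) ⬝ᵥ (u + a • n) = d := by
  refine ⟨(d - u ⬝ᵥ u) / (2 * (u ⬝ᵥ n)), ?_⟩
  simp only [dotProduct_add_self u, dotProduct_smul, smul_dotProduct, hn, smul_eq_mul]
  field_simp
  ring

lemma exists_dotProduct_eq_zero_and_eq_one {h k : ι → F} (hk : ∀ a : F, k ≠ a • h) :
    ∃ w, w ⬝ᵥ h = 0 ∧ w ⬝ᵥ k = 1 := by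
  classical
  rcases eq_or_ne h 0 with rfl | hh
  · obtain ⟨w, hw⟩ := exists_dotProduct_eq (by simpa using hk 0) (1 : F)
    exact ⟨w, dotProduct_zero w, hw⟩
  obtain ⟨i, hi⟩ := Function.ne_iff.1 hh
  obtain ⟨j, hj⟩ := Function.ne_iff.1 (hk (k i / h i))
  have minor : h i * k j - h j * k i ≠ 0 := by
    contrapose! hj
    simp only [Pi.smul_apply, smul_eq_mul]
    rw [div_mul_eq_mul_div, eq_div_iff hi]
    linear_combination hj
  refine ⟨(h i * k j - h j * k i)⁻¹ • (Pi.single j (h i) - Pi.single i (h j)), ?_, ?_⟩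
  · simp only [smul_dotProduct, sub_dotProduct, single_dotProduct, smul_eq_mul]
    ring
  · simp only [smul_dotProduct, sub_dotProduct, single_dotProduct, smul_eq_mul]
    exact inv_mul_cancel₀ minor

end DotProduct

/-- Ternary words of length `m`. -/
abbrev Word (m : ℕ) := Fin m → ZMod 3

lemma exists_dotProduct_self_eq_of_ne_zero {c : ZMod 3} (hc : c ≠ 0) {h k : Word m}
    (hh : h ⬝ᵥ h = c) (hk : k ⬝ᵥ k = c) (hhk : (h - k) ⬝ᵥ (h - k) = c) (hne : h + k ≠ 0) :
    ∃ w, w ⬝ᵥ w = c ∧ (w - h) ⬝ᵥ (w - h) = c ∧ (w - k) ⬝ᵥ (w - k) = c := by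
  have three : (3 : ZMod 3) = 0 := rfl
  have h_k : h ⬝ᵥ k = -c := by
    rw [dotProduct_sub_self, hh, hk] at hhk
    linear_combination hhk + (h ⬝ᵥ k) * three
  -- `h + k` is an isotropic vector orthogonal to `h` and `k`, so moving along it from a vector `v`
  -- with `v ⬝ᵥ h = v ⬝ᵥ k = -c` changes only the norm.
  have norm_add : (h + k) ⬝ᵥ (h + k) = 0 := by
    rw [dotProduct_add_self, hh, hk, h_k]
    ring
  obtain ⟨u, hu⟩ := exists_dotProduct_eq hne c
  rw [dotProduct_add] at hu
  let v := u - (1 + (u ⬝ᵥ h) / c) • h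
  have v_h : v ⬝ᵥ h = -c := by
    simp only [v, sub_dotProduct, smul_dotProduct, hh, smul_eq_mul]
    field_simp
    ring
  have v_k : v ⬝ᵥ k = -c := by
    simp only [v, sub_dotProduct, smul_dotProduct, h_k, smul_eq_mul]
    field_simp
    linear_combination hu + c * three
  have v_add : v ⬝ᵥ (h + k) = c := by
    rw [dotProduct_add, v_h, v_k]
    linear_combination -c * three
  obtain ⟨a, norm_w⟩ :=
    exists_dotProduct_self_add_smul_eq (by decide) norm_add (v_add.trans_ne hc) c
  refine ⟨v + a • (h + k), norm_w, ?_, ?_⟩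
  · rw [dotProduct_sub_self, norm_w, add_dotProduct, smul_dotProduct, add_dotProduct, v_h, hh,
      dotProduct_comm k, h_k]
    linear_combination (exp := 1) c * three
  · rw [dotProduct_sub_self, norm_w, add_dotProduct, smul_dotProduct, add_dotProduct, v_k, hk, h_k]
    linear_combination (exp := 1) c * three

lemma exists_dotProduct_self_sub_ne_zero {h k : Word m} (hh : h ⬝ᵥ h = 0) (hk : k ⬝ᵥ k = 0)
    (hhk : (h - k) ⬝ᵥ (h - k) = 0) (hk0 : k ≠ 0) (hne : h ≠ k) (hne' : h + k ≠ 0) :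
    ∃ w, w ⬝ᵥ w = 0 ∧ (w - h) ⬝ᵥ (w - h) = 0 ∧ (w - k) ⬝ᵥ (w - k) ≠ 0 := by
  have three : (3 : ZMod 3) = 0 := rfl
  have h_k : k ⬝ᵥ h = 0 := by
    rw [dotProduct_sub_self, hh, hk] at hhk
    rw [dotProduct_comm]
    linear_combination hhk + (h ⬝ᵥ k) * three
  have not_smul : ∀ a : ZMod 3, k ≠ a • h := by
    have scalars : ∀ a : ZMod 3, a = 0 ∨ a = 1 ∨ a = -1 := by decide
    rintro a rfl
    rcases scalars a with rfl | rfl | rfl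
    · exact hk0 (zero_smul _ h)
    · exact hne (one_smul _ h).symm
    · exact hne' (by rw [neg_one_smul, add_neg_cancel])
  obtain ⟨u, u_h, u_k⟩ := exists_dotProduct_eq_zero_and_eq_one not_smul
  -- Moving along `k` changes the norm of `u`, but neither `u ⬝ᵥ h` nor `u ⬝ᵥ k`.
  obtain ⟨a, norm_w⟩ :=
    exists_dotProduct_self_add_smul_eq (by decide) hk (u_k.trans_ne one_ne_zero) 0
  refine ⟨u + a • k, norm_w, ?_, ?_⟩
  · rw [dotProduct_sub_self, norm_w, add_dotProduct, smul_dotProduct, u_h, h_k, hh]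
    simp
  · rw [dotProduct_sub_self, norm_w, add_dotProduct, smul_dotProduct, u_k, hk]
    simpa using (by decide : (2 : ZMod 3) ≠ 0)

lemma add_eq_zero_iff_forall_dotProduct_self {c : ZMod 3} {h k : Word m}
    (hh : h ⬝ᵥ h = c) (hk : k ⬝ᵥ k = c) (hhk : (h - k) ⬝ᵥ (h - k) = c) (hk0 : k ≠ 0) (hne : h ≠ k) :
    h + k = 0 ↔ ∀ w, w ⬝ᵥ w = c → (w - h) ⬝ᵥ (w - h) = c → ((w - k) ⬝ᵥ (w - k) = c ↔ c = 0) := by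
  have three : (3 : ZMod 3) = 0 := rfl
  refine ⟨fun hadd w hw hwh ↦ ?_, fun hall ↦ ?_⟩
  · have : (w - k) ⬝ᵥ (w - k) = 0 := by
      rw [dotProduct_sub_self] at hwh ⊢
      rw [eq_neg_of_add_eq_zero_right hadd, neg_dotProduct_neg, dotProduct_neg, hh, hw] at *
      linear_combination -hwh + c * three
    rw [this, eq_comm]
  · by_contra hadd
    rcases eq_or_ne c 0 with rfl | hc
    · obtain ⟨w, hw, hwh, hwk⟩ := exists_dotProduct_self_sub_ne_zero hh hk hhk hk0 hne hadd
      exact hwk ((hall w hw hwh).2 rfl)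
    · obtain ⟨w, hw, hwh, hwk⟩ := exists_dotProduct_self_eq_of_ne_zero hc hh hk hhk hadd
      exact hc ((hall w hw hwh).1 hwk)

lemma add_add_eq_zero_iff_forall_dotProduct_self {c : ZMod 3} {x y z : Word m}
    (hxy : (x - y) ⬝ᵥ (x - y) = c) (hxz : (x - z) ⬝ᵥ (x - z) = c) (hyz : (y - z) ⬝ᵥ (y - z) = c)
    (hxz' : x ≠ z) (hyz' : y ≠ z) :
    x + y + z = 0 ↔ ∀ w, (x - w) ⬝ᵥ (x - w) = c → (y - w) ⬝ᵥ (y - w) = c →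
      ((z - w) ⬝ᵥ (z - w) = c ↔ c = 0) := by
  have norm_comm (u v : Word m) : (u - v) ⬝ᵥ (u - v) = (v - u) ⬝ᵥ (v - u) := by
    rw [← neg_sub, neg_dotProduct_neg]
  have three : ∀ a : ZMod 3, a + a + a = 0 := by decide
  have key := add_eq_zero_iff_forall_dotProduct_self (h := y - x) (k := z - x) (c := c)
    (by rw [norm_comm, hxy]) (by rw [norm_comm, hxz]) (by rwa [sub_sub_sub_cancel_right])
    (sub_ne_zero.2 hxz'.symm) (by simpa using hyz')
  have add_eq : x + y + z = y - x + (z - x) := by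
    ext i
    simp only [Pi.add_apply, Pi.sub_apply]
    linear_combination three (x i)
  rw [add_eq, key, ← (Equiv.subRight x).forall_congr_right]
  simp only [Equiv.subRight_apply, sub_sub_sub_cancel_right, norm_comm x, norm_comm y, norm_comm z]

/-- `π` preserves the graph joining two words whenever their difference has norm `c` with respect to
the dot product. -/
def PreservesNorm (c : ZMod 3) (π : Equiv.Perm (Word m)) : Prop :=
  ∀ x y, (π x - π y) ⬝ᵥ (π x - π y) = c ↔ (x - y) ⬝ᵥ (x - y) = c

lemma add_self_eq_neg (x : Word m) : x + x = -x := by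
  have : ∀ a : ZMod 3, a + a = -a := by decide
  exact funext fun i ↦ this (x i)

lemma PreservesNorm.map_add_map_add_map_eq_zero {c : ZMod 3} {π : Equiv.Perm (Word m)}
    (hπ : PreservesNorm c π) {h : Word m} (hh : h ⬝ᵥ h = c) (x : Word m) :
    π x + π (x + h) + π (x - h) = 0 := by
  rcases eq_or_ne h 0 with rfl | h0
  · rw [add_zero, sub_zero, add_self_eq_neg, neg_add_cancel]
  have sub₁ : x - (x + h) = -h := sub_add_cancel_left x h
  have sub₂ : x - (x - h) = h := sub_sub_cancel x h
  have sub₃ : x + h - (x - h) = -h := by rw [add_sub_sub_cancel, add_self_eq_neg]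
  have ne₂ : x ≠ x - h := by rwa [← sub_ne_zero, sub₂]
  have ne₃ : x + h ≠ x - h := by rwa [← sub_ne_zero, sub₃, neg_ne_zero]
  have norm_neg : -h ⬝ᵥ -h = c := by rw [neg_dotProduct_neg, hh]
  have line : x + (x + h) + (x - h) = 0 := by
    rw [show x + (x + h) + (x - h) = x + x + x by abel, add_self_eq_neg, neg_add_cancel]
  have norm₁ : (x - (x + h)) ⬝ᵥ (x - (x + h)) = c := by rw [sub₁, norm_neg]
  have norm₂ : (x - (x - h)) ⬝ᵥ (x - (x - h)) = c := by rw [sub₂, hh]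
  have norm₃ : (x + h - (x - h)) ⬝ᵥ (x + h - (x - h)) = c := by rw [sub₃, norm_neg]
  rw [add_add_eq_zero_iff_forall_dotProduct_self norm₁ norm₂ norm₃ ne₂ ne₃] at line
  rw [add_add_eq_zero_iff_forall_dotProduct_self ((hπ _ _).2 norm₁) ((hπ _ _).2 norm₂)
    ((hπ _ _).2 norm₃) (π.injective.ne ne₂) (π.injective.ne ne₃), ← π.forall_congr_right]
  exact fun w hx hxh ↦ (hπ _ _).trans (line w ((hπ _ _).1 hx) ((hπ _ _).1 hxh))

section Bilinear

variable {M : Type*} [AddCommGroup M] [Module (ZMod 3) M]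

lemma exists_dotProduct_self_eq_and_apply_eq_zero (hm : 4 ≤ m) (i j : Fin m) (d : ZMod 3) :
    ∃ u : Word m, u ⬝ᵥ u = d ∧ u i = 0 ∧ u j = 0 := by
  have two_squares : ∀ d : ZMod 3, ∃ a b, a * a + b * b = d := by decide
  obtain ⟨a, b, rfl⟩ := two_squares d
  obtain ⟨s, hs, s_card⟩ : ∃ s ⊆ ({i, j} : Finset (Fin m))ᶜ, s.card = 2 := by
    refine Finset.exists_subset_card_eq ?_
    rw [Finset.card_compl, Fintype.card_fin]
    have := Finset.card_le_two (a := i) (b := j)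
    omega
  obtain ⟨k, l, hkl, rfl⟩ := Finset.card_eq_two.1 s_card
  simp only [Finset.insert_subset_iff, Finset.singleton_subset_iff, Finset.mem_compl,
    Finset.mem_insert, Finset.mem_singleton, not_or] at hs
  obtain ⟨⟨hki, hkj⟩, hli, hlj⟩ := hs
  refine ⟨Pi.single k a + Pi.single l b, ?_, ?_, ?_⟩
  · simp [hkl, hkl.symm]
  · simp [Ne.symm hki, Ne.symm hli]
  · simp [Ne.symm hkj, Ne.symm hlj]

variable {c : ZMod 3} {B : Word m →ₗ[ZMod 3] Word m →ₗ[ZMod 3] M}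

lemma apply_single_single_eq_zero (hm : 4 ≤ m) (symm : ∀ x y, B x y = B y x)
    (hB : ∀ h : Word m, h ⬝ᵥ h = c → B h h = 0) {i j : Fin m} (hij : i ≠ j) :
    B (Pi.single i 1) (Pi.single j 1) = 0 := by
  obtain ⟨u, hu, hui, huj⟩ := exists_dotProduct_self_eq_and_apply_eq_zero hm i j (c - 2)
  set e : Word m := Pi.single i 1 with he
  set f : Word m := Pi.single j 1 with hf
  have expand (a b : ZMod 3) (ha : a * a = 1) (hb : b * b = 1) :
      B u u + B e e + B f f + (2 * a) • B u e + (2 * b) • B u f + (2 * (a * b)) • B e f = 0 := by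
    rw [← hB (u + a • e + b • f)]
    · simp only [map_add, map_smul, LinearMap.add_apply, LinearMap.smul_apply, symm f e, symm _ u]
      linear_combination (norm := module) -ha • B e e - hb • B f f
    · simp [he, hf, hu, hui, huj, hij, hij.symm, ha, hb]
      ring
  have eight : (8 : ZMod 3) • B e f = 0 := by
    linear_combination (norm := module) expand 1 1 rfl rfl - expand 1 (-1) rfl rfl
      - expand (-1) 1 rfl rfl + expand (-1) (-1) rfl rfl
  exact (smul_eq_zero.1 eight).resolve_left (by decide)

lemma apply_single_self_eq (hm : 4 ≤ m) (symm : ∀ x y, B x y = B y x)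
    (hB : ∀ h : Word m, h ⬝ᵥ h = c → B h h = 0) (i j : Fin m) :
    B (Pi.single i 1) (Pi.single i 1) = B (Pi.single j 1) (Pi.single j 1) := by
  obtain ⟨u, hu, hui, huj⟩ := exists_dotProduct_self_eq_and_apply_eq_zero hm i j (c - 1)
  have eq_neg {k : Fin m} (huk : u k = 0) :
      B (Pi.single k 1) (Pi.single k 1) = -B u u := by
    set e : Word m := Pi.single k 1 with he
    have expand (a : ZMod 3) (ha : a * a = 1) : B u u + B e e + (2 * a) • B u e = 0 := by
      rw [← hB (u + a • e)]
      · simp only [map_add, map_smul, LinearMap.add_apply, LinearMap.smul_apply, symm _ u]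
        linear_combination (norm := module) -ha • B e e
      · simp [he, hu, huk, ha]
    have double : (2 : ZMod 3) • (B e e + B u u) = 0 := by
      linear_combination (norm := module) expand 1 rfl + expand (-1) rfl
    exact eq_neg_of_add_eq_zero_left ((smul_eq_zero.1 double).resolve_left (by decide))
  rw [eq_neg hui, eq_neg huj]

lemma eq_dotProduct_smul_of_forall_dotProduct_self (hm : 4 ≤ m) (symm : ∀ x y, B x y = B y x)
    (hB : ∀ h : Word m, h ⬝ᵥ h = c → B h h = 0) (k : Fin m) (x y : Word m) :
    B x y = (x ⬝ᵥ y) • B (Pi.single k 1) (Pi.single k 1) := by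
  suffices B = (dotProductBilin (ZMod 3) (ZMod 3)).compr₂
      (LinearMap.toSpanSingleton (ZMod 3) M (B (Pi.single k 1) (Pi.single k 1))) by
    conv_lhs => rw [this]
    rfl
  refine LinearMap.ext_basis (Pi.basisFun (ZMod 3) (Fin m)) (Pi.basisFun (ZMod 3) (Fin m))
    fun i j ↦ ?_
  rcases eq_or_ne i j with rfl | hij
  · simpa using apply_single_self_eq hm symm hB i k
  · simpa [hij.symm] using apply_single_single_eq_zero hm symm hB hij

end Bilinear

section CommRing

open scoped Pointwise

variable {S : Type*} [CommRing S]

/-- The ideal generated by all `T x - 1`: the image of the augmentation ideal of the group ring. -/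
def augmentationIdeal (T : AddChar (Word m) S) : Ideal S :=
  Ideal.span (Set.range fun x ↦ T x - 1)

lemma sub_one_mem_augmentationIdeal (T : AddChar (Word m) S) (x : Word m) :
    T x - 1 ∈ augmentationIdeal T :=
  Ideal.subset_span ⟨x, rfl⟩

variable [Algebra (ZMod 3) S] {T : AddChar (Word m) S} {c : ZMod 3}

lemma sub_one_mul_sub_one_of_mul_mul_eq_zero (hm : 4 ≤ m)
    (hT : ∀ h : Word m, h ⬝ᵥ h = c → (T h - 1) * (T h - 1) = 0)
    (cubic : ∀ x y z, (T x - 1) * (T y - 1) * (T z - 1) = 0) (k : Fin m) (x y : Word m) :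
    (T x - 1) * (T y - 1) =
      (x ⬝ᵥ y) • ((T (Pi.single k 1) - 1) * (T (Pi.single k 1) - 1)) := by
  let B : Word m →ₗ[ZMod 3] Word m →ₗ[ZMod 3] S :=
    AddMonoidHom.toZModLinearMap 3 <| AddMonoidHom.mk'
      (fun x ↦ AddMonoidHom.toZModLinearMap 3 <| AddMonoidHom.mk' (fun y ↦ (T x - 1) * (T y - 1))
        fun y z ↦ by rw [T.map_add_eq_mul]; linear_combination cubic x y z)
      fun x y ↦ LinearMap.ext fun z ↦ by
        change (T (x + y) - 1) * (T z - 1) = (T x - 1) * (T z - 1) + (T y - 1) * (T z - 1)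
        rw [T.map_add_eq_mul]
        linear_combination cubic x y z
  exact eq_dotProduct_smul_of_forall_dotProduct_self (B := B) hm (fun x y ↦ mul_comm _ _) hT k x y

lemma sub_one_pow_three_eq_zero (T : AddChar (Word m) S) (x : Word m) : (T x - 1) ^ 3 = 0 := by
  have three : (3 : S) = 0 := by
    rw [← map_ofNat (algebraMap (ZMod 3) S) 3]
    exact map_zero _
  have cube : T x ^ 3 = 1 := by
    rw [← T.map_nsmul_eq_pow, succ_nsmul, two_nsmul, add_self_eq_neg, neg_add_cancel,
      T.map_zero_eq_one]
  linear_combination cube - (T x ^ 2 - T x) * three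

lemma isNilpotent_augmentationIdeal (T : AddChar (Word m) S) :
    IsNilpotent (augmentationIdeal T) := by
  have fg : (augmentationIdeal T).FG := Submodule.fg_span (Set.finite_range _)
  rw [fg.isNilpotent_iff_le_nilradical, augmentationIdeal, Ideal.span_le]
  rintro _ ⟨x, rfl⟩
  exact ⟨3, sub_one_pow_three_eq_zero T x⟩

lemma sub_dotProduct_smul_mem_augmentationIdeal_pow_three (hm : 4 ≤ m)
    (hT : ∀ h : Word m, h ⬝ᵥ h = c → (T h - 1) * (T h - 1) = 0) (k : Fin m) (x y : Word m) :
    (T x - 1) * (T y - 1) - (x ⬝ᵥ y) • ((T (Pi.single k 1) - 1) * (T (Pi.single k 1) - 1)) ∈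
      augmentationIdeal T ^ 3 := by
  set J := augmentationIdeal T
  have mem_J : ∀ x, T x - 1 ∈ J := sub_one_mem_augmentationIdeal T
  let T' := (Ideal.Quotient.mk (J ^ 3)).toMonoidHom.compAddChar T
  have mk_sub_one (x : Word m) : T' x - 1 = Ideal.Quotient.mk (J ^ 3) (T x - 1) := by
    rw [map_sub, map_one]
    rfl
  have mk_smul (a : ZMod 3) (s : S) :
      Ideal.Quotient.mk (J ^ 3) (a • s) = a • Ideal.Quotient.mk (J ^ 3) s := rfl
  rw [← Ideal.Quotient.mk_eq_mk_iff_sub_mem, mk_smul, map_mul, map_mul, ← mk_sub_one,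
    ← mk_sub_one, ← mk_sub_one]
  refine sub_one_mul_sub_one_of_mul_mul_eq_zero (c := c) hm (fun h hh ↦ ?_) (fun x y z ↦ ?_) k x y
  · rw [mk_sub_one, ← map_mul, hT h hh, map_zero]
  · rw [mk_sub_one, mk_sub_one, mk_sub_one, ← map_mul, ← map_mul, Ideal.Quotient.eq_zero_iff_mem,
      pow_succ, pow_two]
    exact Ideal.mul_mem_mul (Ideal.mul_mem_mul (mem_J x) (mem_J y)) (mem_J z)

lemma augmentationIdeal_pow_three_le_pow_four (hm : 4 ≤ m)
    (hT : ∀ h : Word m, h ⬝ᵥ h = c → (T h - 1) * (T h - 1) = 0) :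
    augmentationIdeal T ^ 3 ≤ augmentationIdeal T ^ 4 := by
  have mem_ideal := sub_one_mem_augmentationIdeal T
  have quadratic := sub_dotProduct_smul_mem_augmentationIdeal_pow_three hm hT
  let e : Word m := Pi.single ⟨0, by omega⟩ 1
  let d := T e - 1
  have generators : augmentationIdeal T ^ 3 =
      Ideal.span (Set.range (fun x ↦ T x - 1) * Set.range (fun x ↦ T x - 1) *
        Set.range fun x ↦ T x - 1) := by
    rw [pow_succ, pow_two, augmentationIdeal, Ideal.span_mul_span', Ideal.span_mul_span']
  rw [generators, Ideal.span_le]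
  rintro _ ⟨_, ⟨_, ⟨x, rfl⟩, _, ⟨y, rfl⟩, rfl⟩, _, ⟨z, rfl⟩, rfl⟩
  have split : (T x - 1) * (T y - 1) * (T z - 1) =
      ((T x - 1) * (T y - 1) - (x ⬝ᵥ y) • (d * d)) * (T z - 1) +
        (d * (T z - 1) - (e ⬝ᵥ z) • (d * d)) * ((x ⬝ᵥ y) • d) := by
    simp only [Algebra.smul_def]
    linear_combination (algebraMap (ZMod 3) S (x ⬝ᵥ y) * algebraMap (ZMod 3) S (e ⬝ᵥ z)) *
      sub_one_pow_three_eq_zero T e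
  beta_reduce
  rw [SetLike.mem_coe, split, pow_succ _ 3]
  exact add_mem (Ideal.mul_mem_mul (quadratic _ x y) (mem_ideal z))
    (Ideal.mul_mem_mul (quadratic _ e z) (Submodule.smul_of_tower_mem _ _ (mem_ideal e)))

lemma augmentationIdeal_pow_three_eq_bot (hm : 4 ≤ m)
    (hT : ∀ h : Word m, h ⬝ᵥ h = c → (T h - 1) * (T h - 1) = 0) :
    augmentationIdeal T ^ 3 = ⊥ := by
  set J := augmentationIdeal T
  have le_add (n : ℕ) : J ^ 3 ≤ J ^ (3 + n) := by
    induction n with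
    | zero => rfl
    | succ n ih =>
      calc J ^ 3 ≤ J ^ 4 := augmentationIdeal_pow_three_le_pow_four hm hT
        _ = J ^ 3 * J := pow_succ J 3
        _ ≤ J ^ (3 + n) * J := Ideal.mul_mono_left ih
        _ = J ^ (3 + (n + 1)) := (pow_succ J (3 + n)).symm
  obtain ⟨n, hn⟩ := isNilpotent_augmentationIdeal T
  refine le_bot_iff.1 ((le_add n).trans ?_)
  rw [pow_add, hn, mul_zero]
  rfl

theorem sub_one_mul_sub_one_eq_dotProduct_smul (hm : 4 ≤ m)
    (hT : ∀ h : Word m, h ⬝ᵥ h = c → (T h - 1) * (T h - 1) = 0) (k : Fin m) (x y : Word m) :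
    (T x - 1) * (T y - 1) =
      (x ⬝ᵥ y) • ((T (Pi.single k 1) - 1) * (T (Pi.single k 1) - 1)) := by
  have := sub_dotProduct_smul_mem_augmentationIdeal_pow_three hm hT k x y
  rwa [augmentationIdeal_pow_three_eq_bot hm hT, Ideal.mem_bot, sub_eq_zero] at this

end CommRing

section GroupRing

variable {M : Type*} [AddCommGroup M] [Module (ZMod 3) M]

/-- The action of the group ring of `Word m` on functions, group elements acting by translation. -/
noncomputable def translationAction (m : ℕ) (M : Type*) [AddCommGroup M] [Module (ZMod 3) M] :
    AddMonoidAlgebra (ZMod 3) (Word m) →ₐ[ZMod 3] Module.End (ZMod 3) (Word m → M) :=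
  AddMonoidAlgebra.lift (ZMod 3) _ (Word m)
    { toFun h := LinearMap.funLeft (ZMod 3) M fun x ↦ x + h.toAdd
      map_one' := LinearMap.ext fun F ↦ funext fun x ↦ congr_arg F (add_zero x)
      map_mul' h k := LinearMap.ext fun F ↦ funext fun x ↦
        congr_arg F (add_assoc x h.toAdd k.toAdd).symm }

lemma translationAction_single (h : Word m) (F : Word m → M) (x : Word m) :
    translationAction m M (.single h 1) F x = F (x + h) := by
  rw [translationAction, AddMonoidAlgebra.lift_single, one_smul]
  rfl

lemma translationAction_sub_one_mul_sub_one (h k : Word m) (F : Word m → M) (x : Word m) :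
    translationAction m M ((.single h 1 - 1) * (.single k 1 - 1)) F x =
      F (x + h + k) - F (x + h) - F (x + k) + F x := by
  simp only [map_mul, map_sub, map_one, Module.End.mul_apply, LinearMap.sub_apply,
    Module.End.one_apply, Pi.sub_apply, translationAction_single]
  abel

/-- The annihilator of `F` under `translationAction`. -/
noncomputable def translationAnnihilator (F : Word m → M) :
    Ideal (AddMonoidAlgebra (ZMod 3) (Word m)) where
  carrier := {r | translationAction m M r F = 0}
  add_mem' {r s} (hr : _ = 0) (hs : _ = 0) := by
    change translationAction m M (r + s) F = 0
    rw [map_add, LinearMap.add_apply, hr, hs, add_zero]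
  zero_mem' := by
    change translationAction m M 0 F = 0
    rw [map_zero, LinearMap.zero_apply]
  smul_mem' s r (hr : _ = 0) := by
    change translationAction m M (s * r) F = 0
    rw [map_mul, Module.End.mul_apply, hr, map_zero]

theorem map_add_sub_eq_dotProduct_smul (hm : 4 ≤ m) {c : ZMod 3} {F : Word m → M}
    (hF : ∀ h : Word m, h ⬝ᵥ h = c → ∀ x, F x + F (x + h) + F (x - h) = 0) :
    ∃ v, ∀ x y, F (x + y) - F x - F y + F 0 = (x ⬝ᵥ y) • v := by
  let I := translationAnnihilator F
  let q (x : Word m) : AddMonoidAlgebra (ZMod 3) (Word m) := .single x 1 - 1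
  let T : AddChar (Word m) (AddMonoidAlgebra (ZMod 3) (Word m) ⧸ I) :=
    AddChar.toMonoidHomEquiv.symm
      ((Ideal.Quotient.mk I).toMonoidHom.comp (AddMonoidAlgebra.of (ZMod 3) (Word m)))
  have sub_one (x : Word m) : T x - 1 = Ideal.Quotient.mk I (q x) := by
    rw [map_sub, map_one]
    rfl
  have hT (h : Word m) (hh : h ⬝ᵥ h = c) : (T h - 1) * (T h - 1) = 0 := by
    rw [sub_one, ← map_mul, Ideal.Quotient.eq_zero_iff_mem]
    funext x
    rw [translationAction_sub_one_mul_sub_one, add_assoc, add_self_eq_neg, ← sub_eq_add_neg,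
      Pi.zero_apply]
    have three : (3 : ZMod 3) • F (x + h) = 0 := zero_smul (ZMod 3) _
    linear_combination (norm := module) hF h hh x - three
  let k : Fin m := ⟨0, by omega⟩
  let e : Word m := Pi.single k 1
  refine ⟨translationAction m M (q e * q e) F 0, fun x y ↦ ?_⟩
  have mem : q x * q y - (x ⬝ᵥ y) • (q e * q e) ∈ I := by
    have := sub_one_mul_sub_one_eq_dotProduct_smul hm hT k x y
    rw [sub_one, sub_one, sub_one, ← map_mul, ← map_mul] at this
    exact (Ideal.Quotient.mk_eq_mk_iff_sub_mem _ _).1 this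
  have eval := congr_fun (show translationAction m M _ F = 0 from mem) 0
  rw [map_sub, map_smul, LinearMap.sub_apply, LinearMap.smul_apply, Pi.sub_apply, Pi.smul_apply,
    translationAction_sub_one_mul_sub_one, zero_add, zero_add] at eval
  exact sub_eq_zero.1 eval

end GroupRing

section Affine

variable {π : Equiv.Perm (Word m)}

lemma mem_aglSet_of_map_add (h : ∀ x y, π (x + y) - π x - π y + π 0 = 0) : π ∈ aglSet m := by
  let φ : Word m →ₗ[ZMod 3] Word m := AddMonoidHom.toZModLinearMap 3 <|
    AddMonoidHom.mk' (fun x ↦ π x - π 0) fun x y ↦ by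
      linear_combination (exp := 1) h x y
  have φ_apply (x : Word m) : (LinearMap.toMatrix' φ) *ᵥ x = π x - π 0 := by
    rw [LinearMap.toMatrix'_mulVec]
    rfl
  refine ⟨LinearMap.toMatrix' φ, π 0, ?_, fun x ↦ by rw [φ_apply, sub_add_cancel]⟩
  rw [← Matrix.mulVec_injective_iff_isUnit]
  intro x y hxy
  rw [φ_apply, φ_apply, sub_left_inj] at hxy
  exact π.injective hxy

lemma eq_zero_of_forall_dotProduct_map_eq_zero {v : Word m}
    (hv : ∀ x, (π x - π 0) ⬝ᵥ v = 0) : v = 0 := by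
  by_contra hne
  obtain ⟨w, hw⟩ := exists_dotProduct_eq hne 1
  have const (y : Word m) : y ⬝ᵥ v = π 0 ⬝ᵥ v := by
    simpa [sub_dotProduct, sub_eq_zero] using hv (π.symm y)
  rw [const, ← const 0, zero_dotProduct] at hw
  exact zero_ne_one hw

theorem mem_aglSet_of_dotProduct_self_sub
    (h : ∀ x y, (π x - π y) ⬝ᵥ (π x - π y) = (x - y) ⬝ᵥ (x - y)) : π ∈ aglSet m := by
  let φ (x : Word m) := π x - π 0
  have φ_self (x : Word m) : φ x ⬝ᵥ φ x = x ⬝ᵥ x := by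
    rw [h, sub_zero]
  have φ_dot (x y : Word m) : φ x ⬝ᵥ φ y = x ⬝ᵥ y := by
    have sub : (φ x - φ y) ⬝ᵥ (φ x - φ y) = (x - y) ⬝ᵥ (x - y) := by
      rw [sub_sub_sub_cancel_right, h]
    rw [dotProduct_sub_self (φ x), dotProduct_sub_self x, φ_self, φ_self] at sub
    exact mul_left_cancel₀ (show (2 : ZMod 3) ≠ 0 by decide) (by linear_combination -sub)
  refine mem_aglSet_of_map_add fun x y ↦ ?_
  suffices φ (x + y) - φ x - φ y = 0 by
    refine Eq.trans ?_ this
    simp only [φ]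
    abel
  refine eq_zero_of_forall_dotProduct_map_eq_zero (π := π) fun z ↦ ?_
  change φ z ⬝ᵥ _ = 0
  rw [dotProduct_sub, dotProduct_sub, φ_dot, φ_dot, φ_dot, dotProduct_add]
  ring

lemma eq_zero_of_forall_dotProduct_self (hm : 4 ≤ m) {M : Type*} [AddCommGroup M]
    [Module (ZMod 3) M] {c : ZMod 3} {g : Word m →ₗ[ZMod 3] M}
    (hg : ∀ h : Word m, h ⬝ᵥ h = c → g h = 0) : g = 0 := by
  refine (Pi.basisFun (ZMod 3) (Fin m)).ext fun i ↦ ?_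
  rw [Pi.basisFun_apply, LinearMap.zero_apply]
  obtain ⟨u, hu, hui, -⟩ := exists_dotProduct_self_eq_and_apply_eq_zero hm i i (c - 1)
  have vanish (a : ZMod 3) (ha : a * a = 1) : g u + a • g (Pi.single i 1) = 0 := by
    rw [← map_smul, ← map_add]
    apply hg
    simp [hu, hui, ha]
  have double : (2 : ZMod 3) • g (Pi.single i 1) = 0 := by
    linear_combination (norm := module) vanish 1 rfl - vanish (-1) rfl
  exact (smul_eq_zero.1 double).resolve_left (by decide)

lemma dotProduct_eq_zero_of_forall_add_smul {c : ZMod 3} {p v : Word m}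
    (h : ∀ a : ZMod 3, (p + a • v) ⬝ᵥ (p + a • v) = c) : v ⬝ᵥ v = 0 ∧ p ⬝ᵥ v = 0 := by
  have two : (2 : ZMod 3) ≠ 0 := by decide
  have expand (a : ZMod 3) : p ⬝ᵥ p + 2 * (a * p ⬝ᵥ v) + a * (a * v ⬝ᵥ v) = c := by
    rw [← h a, dotProduct_add_self, dotProduct_smul, smul_dotProduct, dotProduct_smul]
    rfl
  have v_v : v ⬝ᵥ v = 0 := mul_left_cancel₀ two <| by
    linear_combination expand 1 + expand (-1) - 2 * expand 0
  refine ⟨v_v, mul_left_cancel₀ two ?_⟩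
  linear_combination expand 1 - expand 0 - v_v

theorem PreservesNorm.mem_aglSet (hm : 4 ≤ m) {c : ZMod 3} (hπ : PreservesNorm c π) :
    π ∈ aglSet m := by
  obtain ⟨v, hv⟩ := map_add_sub_eq_dotProduct_smul hm fun h hh ↦
    hπ.map_add_map_add_map_eq_zero hh
  let φ (x : Word m) := π x - π 0
  have φ_add (x y : Word m) : φ (x + y) = φ x + φ y + (x ⬝ᵥ y) • v := by
    rw [← hv]
    simp only [φ]
    abel
  have norm_line (h : Word m) (hh : h ⬝ᵥ h = c) (h0 : h ≠ 0) (a : ZMod 3) :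
      (φ h + a • v) ⬝ᵥ (φ h + a • v) = c := by
    obtain ⟨x, rfl⟩ := exists_dotProduct_eq h0 a
    have : φ h + (x ⬝ᵥ h) • v = π (x + h) - π x := by
      rw [← hv]
      simp only [φ]
      abel
    rw [this, hπ, add_sub_cancel_left, hh]
  have v_self : v ⬝ᵥ v = 0 := by
    let i : Fin m := ⟨0, by omega⟩
    obtain ⟨u, hu, hui, -⟩ := exists_dotProduct_self_eq_and_apply_eq_zero hm i i (c - 1)
    have u_ne : u + Pi.single i 1 ≠ 0 := fun h0 ↦ by simpa [hui] using congr_fun h0 i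
    refine (dotProduct_eq_zero_of_forall_add_smul (norm_line (u + Pi.single i 1) ?_ u_ne)).1
    simp [hu, hui]
  have φ_v (h : Word m) (hh : h ⬝ᵥ h = c) : φ h ⬝ᵥ v = 0 := by
    rcases eq_or_ne h 0 with rfl | h0
    · simp [φ]
    · exact (dotProduct_eq_zero_of_forall_add_smul (norm_line h hh h0)).2
  let g : Word m →ₗ[ZMod 3] ZMod 3 := AddMonoidHom.toZModLinearMap 3 <|
    AddMonoidHom.mk' (fun x ↦ φ x ⬝ᵥ v) fun x y ↦ by
      rw [φ_add, add_dotProduct, add_dotProduct, smul_dotProduct, v_self, smul_zero, add_zero]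
  have g_zero : g = 0 := eq_zero_of_forall_dotProduct_self hm φ_v
  have v_zero : v = 0 :=
    eq_zero_of_forall_dotProduct_map_eq_zero fun x ↦ LinearMap.congr_fun g_zero x
  exact mem_aglSet_of_map_add fun x y ↦ by rw [hv, v_zero, smul_zero]

end Affine

section Permutation

/-! ### The fusion of a permutation -/

lemma hammingNorm_cons (a : ZMod 3) (x : Word m) :
    hammingNorm (vecCons a x) = (if a = 0 then 0 else 1) + hammingNorm x := by
  simp only [hammingNorm, Finset.card_filter, Fin.sum_univ_succ, cons_val_zero, cons_val_succ]
  split_ifs <;> simp_all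

lemma hammingNorm_le_length (x : Word m) : hammingNorm x ≤ m := by
  simpa using hammingNorm_le_card_fintype (x := x)

lemma hammingNorm_neg (x : Word m) : hammingNorm (-x) = hammingNorm x := by
  simp [hammingNorm]

lemma hammingNorm_sub_comm (x y : Word m) : hammingNorm (x - y) = hammingNorm (y - x) := by
  simp [hammingNorm, sub_eq_zero, eq_comm]

lemma cast_hammingNorm (x : Word m) : (hammingNorm x : ZMod 3) = x ⬝ᵥ x := by
  have indicator_eq_sq : ∀ a : ZMod 3, ((if a ≠ 0 then 1 else 0 : ℕ) : ZMod 3) = a * a := by decide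
  rw [hammingNorm, Finset.card_filter, Nat.cast_sum]
  exact Finset.sum_congr rfl fun k _ ↦ indicator_eq_sq (x k)

lemma sum_hammingNorm_cons (Φ : WeightArray) (a : ZMod 3) (x z : Word m) :
    ∑ b, Φ (hammingNorm (vecCons b z)) (hammingNorm (vecCons a x - vecCons b z)) =
      (if a = 0 then zeroStep Φ else nonzeroStep Φ) (hammingNorm z) (hammingNorm (x - z)) := by
  simp only [cons_sub_cons, hammingNorm_cons]
  generalize hammingNorm z = p
  generalize hammingNorm (x - z) = q
  have sum_zmod (f : ZMod 3 → ℤ) : ∑ b, f b = f 0 + f 1 + f 2 := Fin.sum_univ_three f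
  obtain rfl | rfl | rfl : a = 0 ∨ a = 1 ∨ a = 2 := by revert a; decide
  all_goals
    simp +decide only [sum_zmod, reduceIte, zeroStep_apply, nonzeroStep_apply, zero_add, add_comm 1]
    ring

theorem sum_hammingNorm_eq_pairSum (Φ : WeightArray) (x : Word m) :
    ∑ z, Φ (hammingNorm z) (hammingNorm (x - z)) =
      pairSum (hammingNorm x) (m - hammingNorm x) Φ := by
  induction m generalizing Φ with
  | zero =>
    obtain rfl := Subsingleton.elim x 0
    rw [Fintype.sum_subsingleton _ 0, sub_zero, hammingNorm_zero, pairSum_zero_zero]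
  | succ n ih =>
    obtain ⟨a, x, rfl⟩ : ∃ a y, x = vecCons a y := ⟨_, _, (cons_head_tail x).symm⟩
    have hx := hammingNorm_le_length x
    rw [← (Fin.consEquiv fun _ ↦ ZMod 3).sum_comp, Fintype.sum_prod_type_right]
    refine (Finset.sum_congr rfl fun z _ ↦ sum_hammingNorm_cons Φ a x z).trans ?_
    rw [ih, hammingNorm_cons]
    split_ifs
    · rw [zero_add, Nat.succ_sub hx, Nat.succ_eq_add_one, pairSum_add_right, pow_one]
    · rw [add_comm 1, Nat.add_sub_add_right, pairSum_succ_left]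

theorem sum_hammingNorm_sub_eq_pairSum (Φ : WeightArray) (x y : Word m) :
    ∑ z, Φ (hammingNorm (z - y)) (hammingNorm (x - z)) =
      pairSum (hammingNorm (x - y)) (m - hammingNorm (x - y)) Φ := by
  refine (Equiv.sum_comp (Equiv.addRight y) _).symm.trans ?_
  rw [← sum_hammingNorm_eq_pairSum]
  simp only [Equiv.coe_addRight, add_sub_cancel_right, sub_add_eq_sub_sub_swap]

/-- The finest equivalence relation on weights that identifies the weight of `π x - π y` with that
of `x - y` for all words `x` and `y`. -/
def fusionRel (π : Equiv.Perm (Word m)) : ℕ → ℕ → Prop :=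
  Relation.EqvGen fun i j ↦ ∃ x y, hammingNorm (π x - π y) = i ∧ hammingNorm (x - y) = j

variable {π : Equiv.Perm (Word m)}

lemma fusionRel_hammingNorm (π : Equiv.Perm (Word m)) (x y : Word m) :
    fusionRel π (hammingNorm (π x - π y)) (hammingNorm (x - y)) :=
  .rel _ _ ⟨x, y, rfl, rfl⟩

lemma eq_of_fusionRel {X : Sort*} {g : ℕ → X}
    (hg : ∀ x y, g (hammingNorm (π x - π y)) = g (hammingNorm (x - y))) {i j : ℕ}
    (h : fusionRel π i j) : g i = g j := by
  induction h with
  | rel _ _ h => obtain ⟨x, y, rfl, rfl⟩ := h; exact hg x y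
  | refl => rfl
  | symm _ _ _ ih => exact ih.symm
  | trans _ _ _ _ _ ih₁ ih₂ => exact ih₁.trans ih₂

theorem isHammingFusion_fusionRel (π : Equiv.Perm (Word m)) : IsHammingFusion m (fusionRel π) where
  equivalence := Relation.EqvGen.is_equivalence _
  eq_zero_of_rel_zero j h := by
    have := eq_of_fusionRel (g := fun i ↦ i = 0)
      (by simp [hammingNorm_eq_zero, sub_eq_zero]) h
    simpa using this
  pairSum_eq Φ hΦ i j _ _ h := by
    refine eq_of_fusionRel (g := fun i ↦ pairSum i (m - i) Φ) (fun x y ↦ ?_) h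
    simp only [← sum_hammingNorm_sub_eq_pairSum]
    rw [← Equiv.sum_comp π]
    exact Finset.sum_congr rfl fun z _ ↦
      hΦ (fusionRel_hammingNorm π z y) (fusionRel_hammingNorm π x z)

lemma PeriodicUpTo.rel_of_modEq {r : ℕ → ℕ → Prop} {s n : ℕ} (hr : Equivalence r)
    (h : PeriodicUpTo r s n) {i j : ℕ} (hi : 1 ≤ i) (hin : i ≤ n) (hj : 1 ≤ j) (hjn : j ≤ n)
    (hij : i ≡ j [MOD s]) : r i j := by
  have rel_add_mul (i k : ℕ) (hi : 1 ≤ i) (hik : i + s * k ≤ n) : r i (i + s * k) := by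
    induction k with
    | zero => exact hr.refl i
    | succ k ih =>
      rw [mul_add_one, ← add_assoc] at hik ⊢
      exact hr.trans (ih (by omega)) (h _ (by omega) hik)
  wlog hle : i ≤ j generalizing i j
  · exact hr.symm (this hj hjn hi hin hij.symm (by omega))
  obtain ⟨k, hk⟩ := (Nat.modEq_iff_dvd' hle).1 hij
  obtain rfl : j = i + s * k := by omega
  exact rel_add_mul i k hi hjn

/-- A nonconstant `F₂`-valued function on three residue classes takes one of its values once. -/
lemma exists_eq_iff_of_periodic {P : ℕ → ZMod 2} (hm : 3 ≤ m)
    (hP : ∀ i j, 1 ≤ i → i ≤ m → 1 ≤ j → j ≤ m → i ≡ j [MOD 3] → P i = P j)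
    (hne : ∃ i j, 1 ≤ i ∧ i ≤ m ∧ 1 ≤ j ∧ j ≤ m ∧ P i ≠ P j) :
    ∃ (c : ZMod 3) (e : ZMod 2), ∀ i, 1 ≤ i → i ≤ m → (P i = e ↔ (i : ZMod 3) = c) := by
  obtain ⟨p, hp⟩ : ∃ p : ZMod 3 → ZMod 2, ∀ i, 1 ≤ i → i ≤ m → P i = p i := by
    refine ⟨fun c ↦ P (if c = 0 then 3 else c.val), fun i hi him ↦ ?_⟩
    by_cases hi0 : (i : ZMod 3) = 0
    · simp only [if_pos hi0]
      refine hP i 3 hi him (by omega) hm ?_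
      exact (ZMod.natCast_eq_natCast_iff _ _ _).1 (hi0.trans (ZMod.natCast_self 3).symm)
    · simp only [if_neg hi0]
      have hpos : 0 < (i : ZMod 3).val := ZMod.val_pos.2 hi0
      have hlt := ZMod.val_lt (i : ZMod 3)
      refine hP i _ hi him hpos (by omega) ?_
      rw [ZMod.val_natCast]
      exact (Nat.mod_modEq i 3).symm
  have singleton_fiber :
      ∀ p : ZMod 3 → ZMod 2, (∃ a b, p a ≠ p b) → ∃ c e, ∀ a, p a = e ↔ a = c := by
    decide
  obtain ⟨i, j, hi, him, hj, hjm, hij⟩ := hne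
  obtain ⟨c, e, hce⟩ := singleton_fiber p ⟨i, j, by rwa [← hp i hi him, ← hp j hj hjm]⟩
  exact ⟨c, e, fun i hi him ↦ by rw [hp i hi him, hce]⟩

theorem mem_aglSet_of_weight_invariant {P : ℕ → ZMod 2}
    (hP : ∀ x y, P (hammingNorm (π x - π y)) = P (hammingNorm (x - y)))
    (hne : ∃ i j, 1 ≤ i ∧ i ≤ m ∧ 1 ≤ j ∧ j ≤ m ∧ P i ≠ P j) : π ∈ aglSet m := by
  have hF := isHammingFusion_fusionRel π
  have P_eq (s : ℕ) (h : PeriodicUpTo (fusionRel π) s m) (i j : ℕ) (hi : 1 ≤ i) (him : i ≤ m)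
      (hj : 1 ≤ j) (hjm : j ≤ m) (hij : i ≡ j [MOD s]) : P i = P j :=
    eq_of_fusionRel hP (h.rel_of_modEq hF.equivalence hi him hj hjm hij)
  rcases hF.trivial_or_periodicUpTo with h | h | ⟨h, hm⟩
  · refine mem_aglSet_of_dotProduct_self_sub fun x y ↦ ?_
    rw [← cast_hammingNorm, ← cast_hammingNorm,
      h _ _ (hammingNorm_le_length _) (hammingNorm_le_length _) (fusionRel_hammingNorm π x y)]
  · obtain ⟨i, j, hi, him, hj, hjm, hij⟩ := hne
    exact absurd (P_eq 1 h i j hi him hj hjm (Nat.modEq_one)) hij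
  · obtain ⟨c, e, hce⟩ := exists_eq_iff_of_periodic (by omega) (P_eq 3 h) hne
    refine PreservesNorm.mem_aglSet hm (c := c) fun x y ↦ ?_
    rcases eq_or_ne x y with rfl | hxy
    · simp
    have norm_eq_iff {u v : Word m} (huv : u ≠ v) :
        P (hammingNorm (u - v)) = e ↔ (u - v) ⬝ᵥ (u - v) = c := by
      rw [hce _ (hammingNorm_pos_iff.2 (sub_ne_zero.2 huv)) (hammingNorm_le_length _),
        cast_hammingNorm]
    rw [← norm_eq_iff hxy, ← norm_eq_iff (π.injective.ne hxy), hP]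

end Permutation

/-! ### The binomial transform modulo two -/

/-- The binomial transform `n ↦ ∑ w, f w * (n choose w)` of a sequence. -/
def binomialTransform {R : Type*} [Semiring R] (f : ℕ → R) (n : ℕ) : R :=
  ∑ w ∈ Finset.range (n + 1), f w * (n.choose w : R)

lemma binomialTransform_eq_sum_range {R : Type*} [Semiring R] (f : ℕ → R) {n N : ℕ}
    (hnN : n < N) : binomialTransform f n = ∑ w ∈ Finset.range N, f w * (n.choose w : R) := by
  refine Finset.sum_subset (Finset.range_subset_range.2 hnN) fun w _ hw ↦ ?_
  rw [Nat.choose_eq_zero_of_lt (by simpa using hw), Nat.cast_zero, mul_zero]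

lemma map_binomialTransform {R S : Type*} [Semiring R] [Semiring S] (φ : R →+* S) (f : ℕ → R)
    (n : ℕ) : φ (binomialTransform f n) = binomialTransform (φ ∘ f) n := by
  simp [binomialTransform]

lemma eq_of_binomialTransform_eq {R : Type*} [Ring R] {f g : ℕ → R} {m : ℕ}
    (h : ∀ n ≤ m, binomialTransform f n = binomialTransform g n) : ∀ n ≤ m, f n = g n := by
  intro n
  induction n using Nat.strong_induction_on with
  | _ n ih =>
    intro hn
    have hsum := h n hn
    simp only [binomialTransform, Finset.sum_range_succ, Nat.choose_self, Nat.cast_one,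
      mul_one] at hsum
    rwa [Finset.sum_congr rfl fun w hw ↦ by
      rw [ih w (Finset.mem_range.1 hw) ((Finset.mem_range.1 hw).le.trans hn)],
      add_right_inj] at hsum

lemma binomialTransform_ite_eq_zero {R : Type*} [CommRing R] [CharP R 2] (a b : R) {n : ℕ}
    (hn : 1 ≤ n) : binomialTransform (fun w ↦ if w = 0 then a else b) n = a + b := by
  have two_pow : ((2 ^ n : ℕ) : R) = 0 := by
    rw [Nat.cast_pow, Nat.cast_two, CharTwo.two_eq_zero, zero_pow (by omega)]
  rw [← Nat.sum_range_choose, Nat.cast_sum, Finset.sum_range_succ'] at two_pow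
  rw [binomialTransform, Finset.sum_range_succ']
  simp only [Nat.add_one_ne_zero, if_false, if_true, ← Finset.mul_sum, Nat.choose_zero_right,
    Nat.cast_one] at two_pow ⊢
  linear_combination b * two_pow - b * CharTwo.two_eq_zero (R := R)

lemma binomialTransform_eq_const_iff {R : Type*} [CommRing R] [CharP R 2] {f : ℕ → R} {m : ℕ}
    {c : R} : (∀ n, 1 ≤ n → n ≤ m → binomialTransform f n = f 0 + c) ↔
      ∀ n, 1 ≤ n → n ≤ m → f n = c := by
  set g : ℕ → R := fun n ↦ if n = 0 then f 0 else c
  constructor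
  · intro h
    have hg : ∀ n ≤ m, binomialTransform f n = binomialTransform g n := by
      intro n hn
      rcases Nat.eq_zero_or_pos n with rfl | hpos
      · simp [binomialTransform, g]
      · rw [h n hpos hn, binomialTransform_ite_eq_zero _ _ hpos]
    intro n hn hnm
    exact (eq_of_binomialTransform_eq hg n hnm).trans (if_neg (by omega))
  · intro h n hn hnm
    rw [← binomialTransform_ite_eq_zero _ _ hn]
    refine Finset.sum_congr rfl fun w hw ↦ ?_
    rw [Finset.mem_range] at hw
    rcases Nat.eq_zero_or_pos w with rfl | hw0
    · simp
    · simp only [if_neg hw0.ne', h w hw0 (by omega)]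

/-! ### The reproducing kernel of the code -/

section Character

open Polynomial

lemma pow_hammingNorm {R : Type*} [CommMonoid R] (t : R) (x : Word m) :
    t ^ hammingNorm x = ∏ k, if x k = 0 then 1 else t := by
  rw [hammingNorm, Finset.prod_ite, Finset.prod_const_one, one_mul, Finset.prod_const]

variable {K : Type*} [Field K] [CharP K 2] {χ : AddChar (ZMod 3) K}

lemma sum_ite_mul_char (hχ : χ.IsPrimitive) (c : ZMod 3) :
    ∑ b, (if b = 0 then 1 else X) * C (χ (c * b)) = if c = 0 then 1 else (1 + X : K[X]) := by
  have split_zero (b : ZMod 3) : (if b = 0 then 1 else X) * C (χ (c * b)) =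
      X * C (χ (b * c)) + if b = 0 then 1 - X else 0 := by
    rcases eq_or_ne b 0 with rfl | hb
    · simp
    · rw [if_neg hb, if_neg hb, add_zero, mul_comm c]
  have two_eq_zero : (2 : K[X]) = 0 := CharTwo.two_eq_zero
  simp_rw [split_zero, Finset.sum_add_distrib, ← Finset.mul_sum, ← map_sum,
    AddChar.sum_mulShift c hχ, Finset.sum_ite_eq', Finset.mem_univ, if_true, ZMod.card]
  split_ifs
  · rw [Nat.cast_ofNat, map_ofNat]
    linear_combination X * two_eq_zero
  · rw [Nat.cast_zero, map_zero]
    linear_combination -X * two_eq_zero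

lemma sum_X_pow_hammingNorm_mul_char (hχ : χ.IsPrimitive) (z : Word m) :
    ∑ j : Word m, X ^ hammingNorm j * C (χ (z ⬝ᵥ j)) = (1 + X : K[X]) ^ hammingNorm z := by
  have char_dotProduct (j : Word m) : χ (z ⬝ᵥ j) = ∏ k, χ (z k * j k) :=
    map_prod χ.toMonoidHom (fun k ↦ Multiplicative.ofAdd (z k * j k)) Finset.univ
  simp_rw [pow_hammingNorm, char_dotProduct, map_prod, ← Finset.prod_mul_distrib,
    ← sum_ite_mul_char hχ, Fintype.prod_sum]

lemma sum_char_dotProduct (hχ : χ.IsPrimitive) (z : Word m) :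
    ∑ j, χ (z ⬝ᵥ j) = if z = 0 then 1 else 0 := by
  simpa [eval_finsetSum, CharTwo.add_self_eq_zero, zero_pow_eq] using
    congrArg (eval 1) (sum_X_pow_hammingNorm_mul_char hχ z)

lemma sum_char_of_hammingNorm_eq (hχ : χ.IsPrimitive) (z : Word m) (w : ℕ) :
    ∑ j with hammingNorm j = w, χ (z ⬝ᵥ j) = ((hammingNorm z).choose w : K) := by
  rw [← coeff_one_add_X_pow, ← sum_X_pow_hammingNorm_mul_char hχ z, finsetSum_coeff,
    Finset.sum_filter]
  simp [coeff_X_pow, eq_comm]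

theorem binomialTransform_hammingNorm (hχ : χ.IsPrimitive) (f : ℕ → K) (z : Word m) :
    binomialTransform f (hammingNorm z) = ∑ j, f (hammingNorm j) * χ (z ⬝ᵥ j) := by
  have lt_length_succ (x : Word m) : hammingNorm x < m + 1 :=
    Nat.lt_succ_of_le (hammingNorm_le_length x)
  rw [binomialTransform_eq_sum_range f (lt_length_succ z), ← Finset.sum_fiberwise_of_maps_to
    fun j _ ↦ Finset.mem_range.2 (lt_length_succ j)]
  refine Finset.sum_congr rfl fun w _ ↦ ?_
  rw [← sum_char_of_hammingNorm_eq hχ, Finset.mul_sum]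
  exact Finset.sum_congr rfl fun j hj ↦ by rw [(Finset.mem_filter.1 hj).2]

end Character

/-- The kernel of the projection of `F₂^(3^m)` onto the code with weight set `W`, as a function of
the weight of the difference of its two arguments. -/
noncomputable def codeKernel (W : Set ℕ) : ℕ → ZMod 2 :=
  binomialTransform (W.indicator 1)

section Reproducing

variable {K : Type} [Field K] [CharP K 2] {α : K}

local notation "φ" => ZMod.castHom (dvd_refl 2) K

lemma castHom_codeKernel {χ : AddChar (ZMod 3) K} (hχ : χ.IsPrimitive) (W : Set ℕ) (z : Word m) :
    φ (codeKernel W (hammingNorm z)) =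
      ∑ j, W.indicator 1 (hammingNorm j) * χ (z ⬝ᵥ j) := by
  rw [codeKernel, map_binomialTransform, binomialTransform_hammingNorm hχ,
    ← Set.indicator_comp_of_zero (map_zero φ)]
  simp [Pi.one_def, Function.comp_def]

lemma mem_abelianCode_iff (hα : IsPrimitiveRoot α 3) {W : Set ℕ} {a : Word m → ZMod 2} :
    a ∈ abelianCode 3 m W K α ↔ ∀ j, hammingNorm j ∉ W →
      ∑ x, φ (a x) * AddChar.zmodChar 3 hα.pow_eq_one (x ⬝ᵥ j) = 0 := by
  have ite_eq_castHom (b : ZMod 2) : (if b = 1 then (1 : K) else 0) = φ b := by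
    obtain rfl | rfl : b = 0 ∨ b = 1 := by revert b; decide
    all_goals simp
  simp only [← ite_eq_castHom, AddChar.zmodChar_apply]
  rfl

lemma sum_castHom_codeKernel_mul_char {χ : AddChar (ZMod 3) K} (hχ : χ.IsPrimitive) {W : Set ℕ}
    (y : Word m) {i : Word m} (hi : hammingNorm i ∉ W) :
    ∑ x, φ (codeKernel W (hammingNorm (x - y))) * χ (x ⬝ᵥ i) = 0 := by
  simp only [castHom_codeKernel hχ, Finset.sum_mul]
  rw [Finset.sum_comm]
  refine Finset.sum_eq_zero fun j _ ↦ ?_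
  have collect_char (x : Word m) : W.indicator 1 (hammingNorm j) * χ ((x - y) ⬝ᵥ j) * χ (x ⬝ᵥ i) =
      W.indicator 1 (hammingNorm j) * χ (-(y ⬝ᵥ j)) * χ ((i + j) ⬝ᵥ x) := by
    rw [mul_assoc, mul_assoc, ← AddChar.map_add_eq_mul, ← AddChar.map_add_eq_mul, sub_dotProduct,
      add_dotProduct, dotProduct_comm i, dotProduct_comm j]
    ring_nf
  rw [Finset.sum_congr rfl fun x _ ↦ collect_char x, ← Finset.mul_sum, sum_char_dotProduct hχ]
  split_ifs with hij
  · rw [← neg_eq_of_add_eq_zero_right hij, hammingNorm_neg, Set.indicator_of_notMem hi]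
    simp
  · exact mul_zero _

lemma codeKernel_column_mem (hα : IsPrimitiveRoot α 3) (W : Set ℕ) (y : Word m) :
    (fun x ↦ codeKernel W (hammingNorm (x - y))) ∈ abelianCode 3 m W K α :=
  (mem_abelianCode_iff hα).2 fun _ hi ↦ sum_castHom_codeKernel_mul_char
    (AddChar.zmodChar_primitive_of_primitive_root 3 hα) y hi

theorem mem_abelianCode_iff_reproducing (hα : IsPrimitiveRoot α 3) {W : Set ℕ}
    {a : Word m → ZMod 2} : a ∈ abelianCode 3 m W K α ↔
      ∀ x, ∑ y, codeKernel W (hammingNorm (x - y)) * a y = a x := by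
  have hχ := AddChar.zmodChar_primitive_of_primitive_root 3 hα
  rw [mem_abelianCode_iff hα]
  set χ := AddChar.zmodChar 3 hα.pow_eq_one
  constructor
  · intro ha x
    have spectrum (j : Word m) :
        ∑ y, W.indicator 1 (hammingNorm j) * χ ((x - y) ⬝ᵥ j) * φ (a y) =
          ∑ y, χ ((x - y) ⬝ᵥ j) * φ (a y) := by
      by_cases hj : hammingNorm j ∈ W
      · simp [hj]
      have factor_char (y : Word m) :
          χ ((x - y) ⬝ᵥ j) * φ (a y) = χ (x ⬝ᵥ j) * (φ (a y) * χ (y ⬝ᵥ -j)) := by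
        rw [sub_dotProduct, dotProduct_neg, sub_eq_add_neg, AddChar.map_add_eq_mul]
        ring
      rw [Finset.sum_congr rfl fun y _ ↦ factor_char y, ← Finset.mul_sum,
        ha (-j) (by rwa [hammingNorm_neg])]
      simp [hj]
    apply (φ).injective
    simp only [map_sum, map_mul, castHom_codeKernel hχ, Finset.sum_mul]
    rw [Finset.sum_comm, Finset.sum_congr rfl fun j _ ↦ spectrum j, Finset.sum_comm]
    simp_rw [← Finset.sum_mul, sum_char_dotProduct hχ, sub_eq_zero, ite_mul, one_mul, zero_mul]
    rw [Finset.sum_ite_eq, if_pos (Finset.mem_univ x)]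
  · intro ha i hi
    have expand (x : Word m) : φ (a x) * χ (x ⬝ᵥ i) =
        ∑ y, φ (codeKernel W (hammingNorm (x - y))) * χ (x ⬝ᵥ i) * φ (a y) := by
      rw [← ha, map_sum, Finset.sum_mul]
      exact Finset.sum_congr rfl fun y _ ↦ by rw [map_mul, mul_right_comm]
    rw [Finset.sum_congr rfl fun x _ ↦ expand x, Finset.sum_comm]
    refine Finset.sum_eq_zero fun y _ ↦ ?_
    rw [← Finset.sum_mul, sum_castHom_codeKernel_mul_char hχ y hi, zero_mul]

end Reproducing

/-! ### Automorphisms preserve the kernel -/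

lemma mem_codeAut_iff {I : Type} {C : Set (I → ZMod 2)} {π : Equiv.Perm I} :
    π ∈ codeAut C ↔ ∀ a, a ∘ π ∈ C ↔ a ∈ C := by
  change (fun c ↦ c ∘ π.symm) '' C = C ↔ _
  simp only [Set.ext_iff, Set.mem_image, Equiv.comp_symm_eq, exists_eq_right]

theorem mem_codeAut_iff_of_reproducing {I : Type} [Fintype I] {C : Set (I → ZMod 2)}
    {k : I → I → ZMod 2} (symm : ∀ x y, k x y = k y x) (column_mem : ∀ y, (fun x ↦ k x y) ∈ C)
    (reproducing : ∀ a, a ∈ C ↔ ∀ x, ∑ y, k x y * a y = a x) {π : Equiv.Perm I} :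
    π ∈ codeAut C ↔ ∀ x y, k (π x) (π y) = k x y := by
  rw [mem_codeAut_iff]
  constructor
  · intro h x y
    have eval_column := (reproducing _).1 ((h _).2 (column_mem (π y))) x
    have eval_shifted := (reproducing (fun z ↦ k (π.symm z) x)).1
      ((h _).1 (by simpa [Function.comp_def] using column_mem x)) (π y)
    rw [← Equiv.sum_comp π] at eval_shifted
    simp only [Function.comp_apply, Equiv.symm_apply_apply] at eval_column eval_shifted
    rw [← eval_column, symm x y, ← eval_shifted]
    exact Finset.sum_congr rfl fun z _ ↦ by rw [symm x z, symm (π z), mul_comm]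
  · intro h a
    rw [reproducing, reproducing, ← π.forall_congr_right (q := fun x ↦ ∑ y, k x y * a y = a x)]
    refine forall_congr' fun x ↦ ?_
    rw [← Equiv.sum_comp π fun y ↦ k (π x) y * a y]
    simp only [h, Function.comp_apply]

theorem mem_codeAut_abelianCode_iff {K : Type} [Field K] [CharP K 2] {α : K}
    (hα : IsPrimitiveRoot α 3) {W : Set ℕ} {π : Equiv.Perm (Word m)} :
    π ∈ codeAut (abelianCode 3 m W K α) ↔ ∀ x y,
      codeKernel W (hammingNorm (π x - π y)) = codeKernel W (hammingNorm (x - y)) :=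
  mem_codeAut_iff_of_reproducing (fun x y ↦ by rw [hammingNorm_sub_comm])
    (codeKernel_column_mem hα W) (fun _ ↦ mem_abelianCode_iff_reproducing hα)

/-! ### Boundary weight sets -/

lemma boundaryW_iff {W : Set ℕ} (hW : W ⊆ Set.Iic m) :
    BoundaryW m W ↔ ∃ c : ZMod 2, ∀ n, 1 ≤ n → n ≤ m → W.indicator 1 n = c := by
  constructor
  · rintro (rfl | rfl | rfl | rfl)
    · exact ⟨0, by simp⟩
    · exact ⟨0, fun n hn _ ↦ Set.indicator_of_notMem (by simp; omega) _⟩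
    · exact ⟨1, fun n hn hnm ↦ Set.indicator_of_mem (Set.mem_Icc.2 ⟨hn, hnm⟩) _⟩
    · exact ⟨1, fun n _ hnm ↦ Set.indicator_of_mem (Set.mem_Iic.2 hnm) _⟩
  · rintro ⟨c, hc⟩
    have mem_iff (n : ℕ) (hn : 1 ≤ n) (hnm : n ≤ m) : n ∈ W ↔ c = 1 := by
      rw [← hc n hn hnm, Set.indicator_eq_one_iff_mem]
    have le_of_mem (n : ℕ) (hn : n ∈ W) : n ≤ m := hW hn
    simp only [BoundaryW, Set.ext_iff, Set.mem_empty_iff_false, Set.mem_singleton_iff, Set.mem_Icc,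
      Set.mem_Iic]
    by_cases h0 : 0 ∈ W <;> by_cases h1 : c = 1 <;> grind

theorem boundaryW_iff_codeKernel {W : Set ℕ} (hW : W ⊆ Set.Iic m) :
    BoundaryW m W ↔ ∃ c, ∀ n, 1 ≤ n → n ≤ m → codeKernel W n = c := by
  rw [boundaryW_iff hW, exists_congr fun _ ↦ binomialTransform_eq_const_iff.symm]
  exact ((add_left_surjective (W.indicator 1 0)).exists
    (p := fun c ↦ ∀ n, 1 ≤ n → n ≤ m → codeKernel W n = c)).symm

end TernaryAbelianCode

/-- For `m ≥ 1` and `W ⊆ {0, 1, …, m}` not a boundary case, the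
automorphism group of `C(3, m, W)` is a subgroup of the affine general linear group
`AGL(m, 3)`; in the boundary cases it is the full symmetric group `S_{3^m}`. -/
theorem statement2 (m : ℕ) (hm : 1 ≤ m) (W : Set ℕ) (hW : W ⊆ Set.Iic m)
    (K : Type) [Field K] [CharP K 2] (α : K) (hα : IsPrimitiveRoot α 3) :
    (¬ BoundaryW m W → codeAut (abelianCode 3 m W K α) ⊆ aglSet m) ∧
    (BoundaryW m W → codeAut (abelianCode 3 m W K α) = Set.univ) := by
  open TernaryAbelianCode in
  rw [boundaryW_iff_codeKernel hW]
  refine ⟨fun hB π hπ ↦ ?_, fun ⟨c, hc⟩ ↦ Set.eq_univ_of_forall fun π ↦ ?_⟩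
  · refine mem_aglSet_of_weight_invariant ((mem_codeAut_abelianCode_iff hα).1 hπ) ?_
    by_contra! hconst
    exact hB ⟨_, fun n hn hnm ↦ hconst n 1 hn hnm le_rfl hm⟩
  · refine (mem_codeAut_abelianCode_iff hα).2 fun x y ↦ ?_
    rcases eq_or_ne x y with rfl | hxy
    · simp only [sub_self]
    have codeKernel_eq {u v : Word m} (huv : u ≠ v) : codeKernel W (hammingNorm (u - v)) = c :=
      hc _ (hammingNorm_pos_iff.2 (sub_ne_zero.2 huv)) (hammingNorm_le_length _)
    rw [codeKernel_eq hxy, codeKernel_eq (π.injective.ne hxy)]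
end

section
/- Let m ≥ 4 and 1 ≤ w ≤ m. If 3 does not divide w, or if m is odd, then the automorphism group of the abelian code C(3,m,{w}) is a subgroup of AO(m,3) = Z_3^m ⋊ O(m,3) (acting on F_3^m by x ↦ Ax + b with A ∈ O(m,3)), and equality holds if and only if (m,w) = (4,2) or (m,w) = (5,3). -/
open Matrix

/-- The group `AO(m, 3) = Z_3^m ⋊ O(m, 3)`, realized as the set of permutations of
`F_3^m` of the form `x ↦ A x + b` with `A` invertible and `AᵀA = I`. -/
def aoSet (m : ℕ) : Set (Equiv.Perm (Fin m → ZMod 3)) :=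
  { f | ∃ (A : Matrix (Fin m) (Fin m) (ZMod 3)) (b : Fin m → ZMod 3),
      IsUnit A ∧ Aᵀ * A = 1 ∧ ∀ x, f x = A.mulVec x + b }

/-!
A symmetric idempotent matrix is determined by its fixed space, so `π` is an automorphism of
`C(3, m, {w})` if and only if it preserves the reduction modulo `2` of the matrix `K` of Krawtchouk
values `K_w(d(x, y))`. Since `K ^ 2 = 3 ^ m K`, powers of a lift of this reduction converge
`2`-adically to odd multiples of `K`, so `π` preserves `K` over the integers.

The functions whose Fourier multipliers commute with `π` form an algebra under both the pointwise
product and convolution. It contains the indicator of weight `w`, hence also the level sets of the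
number of words of weight `w` at distance `w` from `x`. Except for five pairs `(m, w)`, this number
is smaller at every weight `k ≥ 3` than at weight `1`. The level set of weight `1` then consists of
weight `1` and possibly weight `2`, the latter only if `3 w = 2 m + 1`; as `K_1`, respectively
`K_1 + K_2`, separates distances, `π` is an isometry. The exceptional pairs other than `(4, 3)`
still allow one to recover all distances modulo `3`, and the permutations preserving these are
precisely those of `AO(m, 3)`, because `d(x, y)` modulo `3` is the quadratic form of `x - y`.

Conversely, `π` is an automorphism if and only if it preserves `choose (d(x, y)) w` modulo `2`. A
reflection in a word of weight `4` turns some distance `s + 1` into `s + 4`, and this violates the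
condition unless `(m, w)` is `(4, 2)` or `(5, 3)`.
-/

namespace AbelianCode

open Polynomial

section InvariantMatrices

variable {I : Type*} [Fintype I] [DecidableEq I]

/-- The algebra of matrices whose entries do not change when a permutation `π` is applied to the
row and column index simultaneously, that is, the commutant of the permutation matrix of `π`. -/
def invariantMatrices (R : Type*) [CommSemiring R] (π : Equiv.Perm I) :
    Subalgebra R (Matrix I I R) where
  carrier := {A | ∀ x y, A (π x) (π y) = A x y}
  mul_mem' {A B} hA hB x y := by
    rw [mul_apply, ← Equiv.sum_comp π, mul_apply]
    exact Finset.sum_congr rfl fun z _ => by rw [hA, hB]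
  add_mem' {A B} hA hB x y := by rw [Matrix.add_apply, hA, hB, Matrix.add_apply]
  algebraMap_mem' r x y := by simp only [algebraMap_matrix_apply, π.injective.eq_iff]

variable {R S : Type*} [CommSemiring R] [CommSemiring S] {π : Equiv.Perm I} {A B : Matrix I I R}

lemma mem_invariantMatrices : A ∈ invariantMatrices R π ↔ ∀ x y, A (π x) (π y) = A x y := Iff.rfl

lemma hadamard_mem_invariantMatrices (hA : A ∈ invariantMatrices R π)
    (hB : B ∈ invariantMatrices R π) : A ⊙ B ∈ invariantMatrices R π := fun x y => by
  simp only [hadamard_apply, hA x y, hB x y]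

lemma map_mem_invariantMatrices (f : R → S) (hA : A ∈ invariantMatrices R π) :
    A.map f ∈ invariantMatrices S π := fun x y => congrArg f (hA x y)

end InvariantMatrices

section FixedVectors

lemma mem_codeAut {I : Type} {C : Set (I → ZMod 2)} {π : Equiv.Perm I} :
    π ∈ codeAut C ↔ ∀ a, a ∘ π.symm ∈ C ↔ a ∈ C := by
  have himage : (fun a : I → ZMod 2 => a ∘ π.symm) '' C = (fun a => a ∘ π) ⁻¹' C :=
    (π.arrowCongr (Equiv.refl (ZMod 2))).image_eq_preimage_symm C
  simp only [codeAut, Set.mem_ofPred_eq, himage, Set.ext_iff, Set.mem_preimage]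
  refine ⟨fun h a => ?_, fun h a => ?_⟩
  · simpa [Function.comp_assoc] using (h (a ∘ π.symm)).symm
  · simpa [Function.comp_assoc] using (h (a ∘ π)).symm

variable {I R : Type*} [Fintype I] [CommSemiring R] {P Q : Matrix I I R}

lemma mul_eq_right_of_mulVec_fixed (hQ : IsIdempotentElem Q)
    (h : ∀ a, Q *ᵥ a = a → P *ᵥ a = a) : P * Q = Q := by
  classical
  exact ext_of_mulVec_single fun i => by
    rw [← mulVec_mulVec, h _ (by rw [mulVec_mulVec, hQ.eq])]

/-- A symmetric idempotent is the projection onto its fixed space along its orthogonal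
complement. -/
lemma eq_of_isSymm_of_isIdempotentElem (hPs : P.IsSymm) (hQs : Q.IsSymm)
    (hP : IsIdempotentElem P) (hQ : IsIdempotentElem Q)
    (h : ∀ a, Q *ᵥ a = a ↔ P *ᵥ a = a) : Q = P := by
  have hQP : Q * P = P := mul_eq_right_of_mulVec_fixed hP fun a => (h a).2
  have hPQ : P * Q = Q := mul_eq_right_of_mulVec_fixed hQ fun a => (h a).1
  calc Q = (P * Q)ᵀ := by rw [hPQ, hQs]
    _ = P := by rw [transpose_mul, hQs, hPs, hQP]

lemma mem_codeAut_fixedVectors {I : Type} [Fintype I] [DecidableEq I]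
    {P : Matrix I I (ZMod 2)} (hPs : P.IsSymm) (hP : IsIdempotentElem P) {π : Equiv.Perm I} :
    π ∈ codeAut {a | P *ᵥ a = a} ↔ P ∈ invariantMatrices (ZMod 2) π := by
  have hconj : ∀ a, P *ᵥ (a ∘ π.symm) = a ∘ π.symm ↔ P.submatrix π π *ᵥ a = a := fun a => by
    rw [submatrix_mulVec_equiv, ← Equiv.eq_comp_symm]
  have hidem : IsIdempotentElem (P.submatrix π π) := by
    rw [IsIdempotentElem, submatrix_mul_equiv, hP.eq]
  simp only [mem_codeAut, Set.mem_ofPred_eq, hconj]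
  refine ⟨fun h x y => congr_fun₂
    (eq_of_isSymm_of_isIdempotentElem hPs (hPs.submatrix _) hP hidem h) x y, fun h a => ?_⟩
  rw [show P.submatrix π π = P from ext h]

end FixedVectors

section Lifting

lemma two_pow_dvd_pow_sub_pow {R : Type*} [Ring R] {a b : R} (hab : Commute a b)
    (h : 2 ∣ a - b) (k : ℕ) : 2 ^ (k + 1) ∣ a ^ 2 ^ k - b ^ 2 ^ k := by
  induction k with
  | zero => simpa using h
  | succ k ih =>
    obtain ⟨c, hc⟩ := ih
    have hsum : a ^ 2 ^ k + b ^ 2 ^ k = 2 * (2 ^ k * c + b ^ 2 ^ k) := by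
      rw [mul_add, ← mul_assoc, ← pow_succ', ← hc, two_mul]; abel
    refine ⟨(2 ^ k * c + b ^ 2 ^ k) * c, ?_⟩
    rw [pow_succ 2 k, pow_mul, pow_mul, sq, sq, (hab.pow_pow _ _).mul_self_sub_mul_self_eq, hsum,
      hc, pow_succ' 2 (k + 1)]
    have hcomm : Commute (2 ^ (k + 1) : R) (2 ^ k * c + b ^ 2 ^ k) :=
      (Commute.ofNat_left _ _).pow_left _
    simp only [mul_assoc, hcomm.left_comm]

variable {I : Type*} [Fintype I] [DecidableEq I]

lemma intCast_dvd_iff {c : ℤ} {A : Matrix I I ℤ} :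
    (c : Matrix I I ℤ) ∣ A ↔ ∀ i j, c ∣ A i j := by
  refine ⟨fun ⟨B, hB⟩ i j => ⟨B i j, ?_⟩, fun h => ?_⟩
  · rw [hB, ← zsmul_eq_mul, Matrix.smul_apply, smul_eq_mul]
  · choose B hB using h
    exact ⟨of B, ext fun i j => by
      rw [← zsmul_eq_mul, Matrix.smul_apply, hB, smul_eq_mul, of_apply]⟩

/-- The entrywise lift `A` of `E mod 2` is circulant, so it commutes with `E`, and it is invariant
under `π`. Hence the invariant matrices `A ^ 2 ^ k` agree with `E ^ 2 ^ k`, a multiple of `E` by an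
odd number, modulo `2 ^ (k + 1)`. -/
lemma circulant_mem_invariantMatrices_of_mod_two [AddCommGroup I] {v : I → ℤ} {c : ℤ}
    (hc : Odd c) (hv : circulant v * circulant v = c • circulant v) {π : Equiv.Perm I}
    (hπ : (circulant v).map (Int.cast : ℤ → ZMod 2) ∈ invariantMatrices (ZMod 2) π) :
    circulant v ∈ invariantMatrices ℤ π := fun x y => by
  set E := circulant v
  set A : Matrix I I ℤ := (E.map (Int.cast : ℤ → ZMod 2)).map fun a => (a.val : ℤ)
  have hA : A ∈ invariantMatrices ℤ π := map_mem_invariantMatrices _ hπ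
  have hcomm : Commute E A := circulant_mul_comm v fun i => ((v i : ZMod 2).val : ℤ)
  have hEA : 2 ∣ E - A := by
    rw [← Int.cast_ofNat, intCast_dvd_iff]
    intro i j
    have hval : A i j = E i j % 2 := ZMod.val_intCast (n := 2) _
    rw [Matrix.sub_apply, hval]
    exact Int.dvd_self_sub_emod
  have hpow : ∀ j : ℕ, E ^ (j + 1) = c ^ j • E := fun j => by
    induction j with
    | zero => simp
    | succ j ih => rw [pow_succ, ih, smul_mul_assoc, hv, smul_smul, ← pow_succ]
  have hdvd : ∀ k : ℕ, (2 : ℤ) ^ (k + 1) ∣ E (π x) (π y) - E x y := fun k => by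
    have hodd : ∀ i j, (2 : ℤ) ^ (k + 1) ∣ c ^ (2 ^ k - 1) * E i j - (A ^ 2 ^ k) i j := by
      have h := two_pow_dvd_pow_sub_pow hcomm hEA k
      rw [← Nat.sub_add_cancel (Nat.one_le_two_pow (n := k)), hpow,
        Nat.sub_add_cancel Nat.one_le_two_pow, ← Int.cast_ofNat, ← Int.cast_pow] at h
      exact intCast_dvd_iff.1 h
    have h := dvd_sub (hodd (π x) (π y)) (hodd x y)
    rw [pow_mem hA, sub_sub_sub_cancel_right, ← mul_sub] at h
    exact ((Int.isCoprime_two_left.2 hc).pow).dvd_of_dvd_mul_left h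
  have hlt : |E (π x) (π y) - E x y| < 2 ^ ((E (π x) (π y) - E x y).natAbs + 1) := by
    rw [Int.abs_eq_natAbs]
    exact_mod_cast Nat.lt_two_pow_self.trans (Nat.pow_lt_pow_succ one_lt_two)
  exact sub_eq_zero.1 (Int.eq_zero_of_abs_lt_dvd (hdvd _) hlt)

end Lifting

section Krawtchouk

/-- The value at `t` of the `w`-th Krawtchouk polynomial of the Hamming scheme of words of length
`n` over an alphabet of size `q`, for `t ≤ n`. -/
def krawtchouk (q n w t : ℕ) : ℤ :=
  ∑ i ∈ Finset.range (w + 1), (-1) ^ i * (q - 1) ^ (w - i) * t.choose i * (n - t).choose (w - i)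

lemma coeff_one_add_C_mul_X_pow {R : Type*} [CommSemiring R] (r : R) (n k : ℕ) :
    ((1 + C r * X) ^ n).coeff k = r ^ k * n.choose k := by
  have hcomp : (1 + C r * X) ^ n = ((1 + X) ^ n : R[X]).comp (C r * X) := by simp
  rw [hcomp, comp_C_mul_X_coeff, coeff_one_add_X_pow, mul_comm]

lemma coeff_krawtchouk {R : Type*} [CommRing R] (q n w t : ℕ) :
    ((1 - X) ^ t * (1 + C (q - 1 : R) * X) ^ (n - t)).coeff w =
      ((krawtchouk q n w t : ℤ) : R) := by
  have hneg : (1 - X : R[X]) = 1 + C (-1) * X := by simp [sub_eq_add_neg]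
  rw [hneg, coeff_mul, Finset.Nat.sum_antidiagonal_eq_sum_range_succ_mk, krawtchouk]
  push_cast
  refine Finset.sum_congr rfl fun i _ => ?_
  rw [coeff_one_add_C_mul_X_pow, coeff_one_add_C_mul_X_pow]
  ring

lemma krawtchouk_mod_two {q : ℕ} (hq : Odd q) (n w t : ℕ) :
    (krawtchouk q n w t : ZMod 2) = t.choose w := by
  have hq1 : (q : ZMod 2) - 1 = 0 := by rw [ZMod.natCast_eq_one_iff_odd.2 hq, sub_self]
  rw [krawtchouk, Int.cast_sum, Finset.sum_eq_single_of_mem w (Finset.self_mem_range_succ w)]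
  · simp [ZMod.neg_eq_self_mod_two]
  · intro i hi hne
    have hiw : w - i ≠ 0 := by
      have := Finset.mem_range_succ_iff.1 hi
      omega
    push_cast
    rw [hq1, zero_pow hiw]
    ring

end Krawtchouk

section HammingNorm

variable {ι M : Type*} [Fintype ι] [DecidableEq M]

lemma hammingDist_le {m : ℕ} (x y : Fin m → M) : hammingDist x y ≤ m :=
  hammingDist_le_card_fintype.trans_eq (Fintype.card_fin m)

lemma hammingNorm_neg [AddGroup M] (x : ι → M) : hammingNorm (-x) = hammingNorm x :=
  hammingNorm_comp (fun _ => Neg.neg) (fun _ => neg_injective) fun _ => neg_zero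

lemma hammingDist_eq_hammingNorm_sub [AddCommGroup M] (x y : ι → M) :
    hammingDist x y = hammingNorm (x - y) := by
  rw [hammingDist_comm, hammingDist_eq_hammingNorm, neg_add_eq_sub]

lemma prod_ite_eq_zero [Zero M] {S : Type*} [CommMonoid S] (u v : S) (x : ι → M) :
    ∏ k, (if x k = 0 then u else v) =
      u ^ (Fintype.card ι - hammingNorm x) * v ^ hammingNorm x := by
  have hcard := Finset.card_filter_add_card_filter_not (s := Finset.univ) fun k => x k = 0
  rw [Finset.prod_ite, Finset.prod_const, Finset.prod_const, hammingNorm, ← Finset.card_univ,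
    ← hcard, Nat.add_sub_cancel]

end HammingNorm

section CharacterSums

lemma addChar_sum {ι A M : Type*} [AddCommMonoid A] [CommMonoid M] (ψ : AddChar A M)
    (s : Finset ι) (f : ι → A) : ψ (∑ k ∈ s, f k) = ∏ k ∈ s, ψ (f k) :=
  map_prod ψ.toMonoidHom (fun k => Multiplicative.ofAdd (f k)) s

variable {ι R L : Type*} [Fintype ι] [DecidableEq ι] [CommRing R] [Fintype R] [DecidableEq R]
  [CommRing L] [IsDomain L] {ψ : AddChar R L}

lemma sum_addChar_dotProduct (hψ : ψ.IsPrimitive) (x : ι → R) :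
    ∑ j, ψ (j ⬝ᵥ x) = if x = 0 then (Fintype.card (ι → R) : L) else 0 := by
  have hprod : ∑ j, ψ (j ⬝ᵥ x) = ∏ k, (if x k = 0 then (Fintype.card R : L) else 0) := by
    simp only [dotProduct, addChar_sum]
    rw [← Fintype.prod_sum fun k a => ψ (a * x k)]
    exact Finset.prod_congr rfl fun k _ => by
      rw [AddChar.sum_mulShift _ hψ, Nat.cast_ite, Nat.cast_zero]
  rw [hprod, prod_ite_eq_zero]
  split_ifs with hx
  · simp [hx]
  · rw [zero_pow (mt hammingNorm_eq_zero.1 hx), mul_zero]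

lemma sum_X_pow_hammingNorm_mul_addChar (hψ : ψ.IsPrimitive) (x : ι → R) :
    ∑ j : ι → R, X ^ hammingNorm j * C (ψ (j ⬝ᵥ x)) =
      (1 - X) ^ hammingNorm x *
        (1 + C (Fintype.card R - 1 : L) * X) ^ (Fintype.card ι - hammingNorm x) := by
  have hterm : ∀ j : ι → R, X ^ hammingNorm j * C (ψ (j ⬝ᵥ x)) =
      ∏ k, ((if j k = 0 then 1 else X) * C (ψ (j k * x k))) := fun j => by
    rw [Finset.prod_mul_distrib, prod_ite_eq_zero, one_pow, one_mul, ← map_prod, ← addChar_sum,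
      dotProduct]
  have hfactor : ∀ b : R, ∑ a, (if a = 0 then 1 else X) * C (ψ (a * b)) =
      if b = 0 then 1 + C (Fintype.card R - 1 : L) * X else 1 - X := fun b => by
    have hsplit : ∀ a, (if a = 0 then 1 else X) * C (ψ (a * b)) =
        X * C (ψ (a * b)) + if a = 0 then 1 - X else 0 := fun a => by
      split_ifs with ha
      · simp [ha]
      · rw [add_zero]
    simp only [hsplit, Finset.sum_add_distrib, Finset.sum_ite_eq', Finset.mem_univ, if_true]
    rw [← Finset.mul_sum, ← map_sum, AddChar.sum_mulShift b hψ]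
    split_ifs <;> simp; ring
  rw [Finset.sum_congr rfl fun j _ => hterm j,
    ← Fintype.prod_sum fun k a => (if a = 0 then 1 else X) * C (ψ (a * x k)),
    Finset.prod_congr rfl fun k _ => hfactor (x k), prod_ite_eq_zero, mul_comm]

lemma sum_addChar_hammingNorm_eq (hψ : ψ.IsPrimitive) (w : ℕ) (x : ι → R) :
    ∑ j : ι → R, (if hammingNorm j = w then 1 else 0) * ψ (j ⬝ᵥ x) =
      krawtchouk (Fintype.card R) (Fintype.card ι) w (hammingNorm x) := by
  rw [← coeff_krawtchouk, ← sum_X_pow_hammingNorm_mul_addChar hψ, finsetSum_coeff]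
  simp only [coeff_mul_C, coeff_X_pow, eq_comm]

end CharacterSums

section Fourier

variable {ι R L : Type*} [Fintype ι] [CommRing R] [CommRing L]

/-- The matrix of the discrete Fourier transform of functions on `R ^ ι` with respect to an
additive character `ψ` of `R`. -/
def fourierMatrix (ψ : AddChar R L) : Matrix (ι → R) (ι → R) L :=
  of fun x j => ψ (x ⬝ᵥ j)

variable [Fintype R] [DecidableEq ι] [DecidableEq R]

/-- The Fourier multiplier with symbol `c`: the operator that multiplies the Fourier transform by
`c`, scaled by the number of words since the inverse transform is not normalised. -/
def multiplier (ψ : AddChar R L) (c : (ι → R) → L) : Matrix (ι → R) (ι → R) L :=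
  fourierMatrix ψ⁻¹ * diagonal c * fourierMatrix ψ

lemma multiplier_apply (ψ : AddChar R L) (c : (ι → R) → L) (x y : ι → R) :
    multiplier ψ c x y = ∑ j, c j * ψ (j ⬝ᵥ (y - x)) := by
  rw [multiplier, mul_apply]
  refine Finset.sum_congr rfl fun j _ => ?_
  rw [mul_diagonal, fourierMatrix, fourierMatrix, of_apply, of_apply, AddChar.inv_apply,
    dotProduct_sub, sub_eq_neg_add, AddChar.map_add_eq_mul, dotProduct_comm x j]
  ring

lemma multiplier_hadamard (ψ : AddChar R L) (c d : (ι → R) → L) :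
    multiplier ψ c ⊙ multiplier ψ d = multiplier ψ (circulant d *ᵥ c) := by
  ext x y
  have hconv : ∀ s, (circulant d *ᵥ c) s = ∑ i, d (s - i) * c i := fun _ => rfl
  simp only [hadamard_apply, multiplier_apply, hconv, Finset.sum_mul]
  conv_rhs => rw [Finset.sum_comm]
  refine Finset.sum_congr rfl fun i _ => ?_
  rw [Finset.mul_sum,
    ← Equiv.sum_comp (Equiv.addRight i) fun s => d (s - i) * c i * ψ (s ⬝ᵥ (y - x))]
  refine Finset.sum_congr rfl fun j _ => ?_
  rw [Equiv.coe_addRight, add_sub_cancel_right, add_dotProduct, AddChar.map_add_eq_mul]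
  ring

lemma multiplier_add (ψ : AddChar R L) (c d : (ι → R) → L) :
    multiplier ψ (c + d) = multiplier ψ c + multiplier ψ d := by
  simp only [multiplier, ← Matrix.add_mul, ← Matrix.mul_add, diagonal_add, Pi.add_def]

lemma multiplier_smul (ψ : AddChar R L) (r : L) (c : (ι → R) → L) :
    multiplier ψ (r • c) = r • multiplier ψ c := by
  simp only [multiplier, diagonal_smul, Matrix.mul_smul, Matrix.smul_mul]

variable [IsDomain L] {ψ : AddChar R L}

lemma fourierMatrix_mul_inv (hψ : ψ.IsPrimitive) :
    (fourierMatrix ψ * fourierMatrix ψ⁻¹ : Matrix (ι → R) (ι → R) L) =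
      (Fintype.card (ι → R) : L) • 1 := by
  ext x y
  have hterm : ∀ j, fourierMatrix ψ x j * fourierMatrix ψ⁻¹ j y = ψ (j ⬝ᵥ (x - y)) := fun j => by
    rw [fourierMatrix, fourierMatrix, of_apply, of_apply, AddChar.inv_apply,
      ← AddChar.map_add_eq_mul, dotProduct_sub, dotProduct_comm x j, sub_eq_add_neg]
  simp only [mul_apply, hterm, sum_addChar_dotProduct hψ, sub_eq_zero, Matrix.smul_apply, one_apply,
    smul_eq_mul, mul_ite, mul_one, mul_zero]

lemma multiplier_one (hψ : ψ.IsPrimitive) :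
    multiplier ψ (1 : (ι → R) → L) = (Fintype.card (ι → R) : L) • 1 := by
  ext x y
  simp only [multiplier_apply, Pi.one_apply, one_mul, sum_addChar_dotProduct hψ, sub_eq_zero,
    Matrix.smul_apply, one_apply, smul_eq_mul, mul_ite, mul_one, mul_zero, eq_comm]

lemma multiplier_mul (hψ : ψ.IsPrimitive) (c d : (ι → R) → L) :
    multiplier ψ c * multiplier ψ d = (Fintype.card (ι → R) : L) • multiplier ψ (c * d) := by
  calc multiplier ψ c * multiplier ψ d
      = fourierMatrix ψ⁻¹ * diagonal c * (fourierMatrix ψ * fourierMatrix ψ⁻¹) * diagonal d *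
          fourierMatrix ψ := by simp only [multiplier, Matrix.mul_assoc]
    _ = (Fintype.card (ι → R) : L) • multiplier ψ (c * d) := by
      rw [fourierMatrix_mul_inv hψ, Matrix.mul_smul, Matrix.mul_one, Matrix.smul_mul,
        Matrix.smul_mul, Matrix.mul_assoc _ (diagonal c), diagonal_mul_diagonal']
      rfl

lemma multiplier_mulVec_eq_self_iff (hψ : ψ.IsPrimitive) (hcard : (Fintype.card (ι → R) : L) = 1)
    (c a : (ι → R) → L) :
    multiplier ψ c *ᵥ a = a ↔ ∀ j, c j * (fourierMatrix ψ *ᵥ a) j = (fourierMatrix ψ *ᵥ a) j := by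
  have hmul : (fourierMatrix ψ * fourierMatrix ψ⁻¹ : Matrix (ι → R) (ι → R) L) = 1 := by
    rw [fourierMatrix_mul_inv hψ, hcard, one_smul]
  have hinj : Function.Injective fun a : (ι → R) → L => fourierMatrix ψ *ᵥ a :=
    mulVec_injective_of_isUnit (.of_mul_eq_one _ hmul)
  rw [← hinj.eq_iff, mulVec_mulVec, multiplier, ← Matrix.mul_assoc, ← Matrix.mul_assoc, hmul,
    Matrix.one_mul, ← mulVec_mulVec, funext_iff]
  simp only [mulVec_diagonal]

end Fourier

section KrawtchoukMatrix

/-- The indicator function of the set of words of Hamming weight `w`. -/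
def weightIndicator {ι M : Type*} [Fintype ι] [Zero M] [DecidableEq M] (L : Type*) [Zero L]
    [One L] (w : ℕ) (x : ι → M) : L :=
  if hammingNorm x = w then 1 else 0

lemma weightIndicator_mul_self {ι M L : Type*} [Fintype ι] [Zero M] [DecidableEq M]
    [MulZeroOneClass L] (w : ℕ) :
    weightIndicator L w * weightIndicator L w = (weightIndicator L w : (ι → M) → L) := by
  ext x
  simp only [Pi.mul_apply, weightIndicator, mul_ite, mul_one, mul_zero]
  split_ifs <;> rfl

section Scheme

variable (ι R : Type*) [Fintype ι] [AddCommGroup R] [Fintype R] [DecidableEq R]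

/-- The matrix of Krawtchouk values at Hamming distances. Over a field in which the number of words
is invertible it is a multiple of the projection onto the span of the characters of weight `w`. -/
def krawtchoukMatrix (w : ℕ) : Matrix (ι → R) (ι → R) ℤ :=
  circulant fun z => krawtchouk (Fintype.card R) (Fintype.card ι) w (hammingNorm z)

variable {ι R}

lemma krawtchoukMatrix_apply (w : ℕ) (x y : ι → R) :
    krawtchoukMatrix ι R w x y =
      krawtchouk (Fintype.card R) (Fintype.card ι) w (hammingDist x y) := by
  rw [krawtchoukMatrix, circulant_apply, hammingDist_eq_hammingNorm_sub]

lemma krawtchoukMatrix_isSymm (w : ℕ) : (krawtchoukMatrix ι R w).IsSymm :=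
  circulant_isSymm_iff.2 fun z => by rw [hammingNorm_neg]

end Scheme

variable {ι R L : Type*} [Fintype ι] [DecidableEq ι] [CommRing R] [Fintype R] [DecidableEq R]
  [CommRing L] [IsDomain L] {ψ : AddChar R L}

lemma map_krawtchoukMatrix (hψ : ψ.IsPrimitive) (w : ℕ) :
    (krawtchoukMatrix ι R w).map (Int.cast : ℤ → L) = multiplier ψ (weightIndicator L w) := by
  ext x y
  rw [map_apply, krawtchoukMatrix_apply, hammingDist_comm, hammingDist_eq_hammingNorm_sub,
    ← sum_addChar_hammingNorm_eq hψ, multiplier_apply]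
  rfl

lemma krawtchoukMatrix_mul_self [CharZero L] (hψ : ψ.IsPrimitive) (w : ℕ) :
    krawtchoukMatrix ι R w * krawtchoukMatrix ι R w =
      (Fintype.card (ι → R) : ℤ) • krawtchoukMatrix ι R w := by
  have hinj : Function.Injective ((Int.castRingHom L).mapMatrix (m := ι → R)) :=
    Matrix.map_injective Int.cast_injective
  have hmap : (Int.castRingHom L).mapMatrix (krawtchoukMatrix ι R w) =
      multiplier ψ (weightIndicator L w) := map_krawtchoukMatrix hψ w
  apply hinj
  rw [map_mul, map_zsmul, hmap, multiplier_mul hψ, weightIndicator_mul_self,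
    ← Int.cast_smul_eq_zsmul L, Int.cast_natCast]

end KrawtchoukMatrix

section AbelianCode

variable {n m : ℕ} [NeZero n] (w : ℕ) {K : Type} [Field K] [CharP K 2] {α : K}

lemma odd_of_isPrimitiveRoot (hα : IsPrimitiveRoot α n) : Odd n := by
  have := hα.neZero'
  rw [← Nat.not_even_iff_odd, even_iff_two_dvd, ← CharP.cast_eq_zero_iff K 2]
  exact NeZero.ne _

lemma natCast_card_of_odd_card {ι R S : Type*} [Fintype ι] [DecidableEq ι] [Fintype R]
    [CommRing S] [CharP S 2] (hR : Odd (Fintype.card R)) : (Fintype.card (ι → R) : S) = 1 := by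
  obtain ⟨k, hk⟩ := (hR.pow : Odd (Fintype.card R ^ Fintype.card ι))
  rw [Fintype.card_fun, hk]
  push_cast
  rw [CharTwo.two_eq_zero, zero_mul, zero_add]

lemma mem_abelianCode_iff (hα : IsPrimitiveRoot α n) (W : Set ℕ) (a : (Fin m → ZMod n) → ZMod 2) :
    a ∈ abelianCode n m W K α ↔ ∀ j : Fin m → ZMod n, hammingNorm j ∉ W →
      (fourierMatrix (AddChar.zmodChar n hα.pow_eq_one) *ᵥ
        (ZMod.castHom (dvd_refl 2) K ∘ a)) j = 0 := by
  have hcast : ∀ b : ZMod 2, (if b = 1 then (1 : K) else 0) = ZMod.castHom (dvd_refl 2) K b := by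
    intro b
    rcases (by decide : ∀ b : ZMod 2, b = 0 ∨ b = 1) b with rfl | rfl <;> simp
  refine forall₂_congr fun j _ => ?_
  simp only [mulVec, dotProduct, fourierMatrix, of_apply, AddChar.zmodChar_apply,
    Function.comp_apply, hcast, mul_comm]

lemma abelianCode_singleton (hα : IsPrimitiveRoot α n) :
    abelianCode n m {w} K α =
      {a | (krawtchoukMatrix (Fin m) (ZMod n) w).map (Int.cast : ℤ → ZMod 2) *ᵥ a = a} := by
  have hψ := AddChar.zmodChar_primitive_of_primitive_root n hα
  have hcard : (Fintype.card (Fin m → ZMod n) : K) = 1 :=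
    natCast_card_of_odd_card (by rw [ZMod.card]; exact odd_of_isPrimitiveRoot hα)
  set f := ZMod.castHom (dvd_refl 2) K
  have hmap : ((krawtchoukMatrix (Fin m) (ZMod n) w).map (Int.cast : ℤ → ZMod 2)).map f =
      multiplier (AddChar.zmodChar n hα.pow_eq_one) (weightIndicator K w) := by
    rw [← map_krawtchoukMatrix hψ]
    ext x y
    simp only [map_apply, map_intCast]
  ext a
  rw [Set.mem_ofPred_eq, ← f.injective.comp_left.eq_iff,
    show f ∘ _ = _ from funext (RingHom.map_mulVec f _ a), hmap, mem_abelianCode_iff hα,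
    multiplier_mulVec_eq_self_iff hψ hcard]
  refine forall_congr' fun j => ?_
  by_cases hj : hammingNorm j = w
  · simp [weightIndicator, hj]
  · simp [weightIndicator, hj, f, eq_comm]

lemma mem_codeAut_abelianCode (hα : IsPrimitiveRoot α n) {π : Equiv.Perm (Fin m → ZMod n)} :
    π ∈ codeAut (abelianCode n m {w} K α) ↔
      (krawtchoukMatrix (Fin m) (ZMod n) w).map (Int.cast : ℤ → ZMod 2) ∈
        invariantMatrices (ZMod 2) π := by
  set P := (Int.castRingHom (ZMod 2)).mapMatrix (krawtchoukMatrix (Fin m) (ZMod n) w)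
  have hidem : IsIdempotentElem P := by
    have hodd : Odd (Fintype.card (ZMod n)) := by rw [ZMod.card]; exact odd_of_isPrimitiveRoot hα
    rw [IsIdempotentElem, ← map_mul, krawtchoukMatrix_mul_self (ZMod.isPrimitive_stdAddChar n),
      map_zsmul, ← Int.cast_smul_eq_zsmul (ZMod 2), Int.cast_natCast, natCast_card_of_odd_card hodd,
      one_smul]
  rw [abelianCode_singleton w hα]
  exact mem_codeAut_fixedVectors ((krawtchoukMatrix_isSymm w).map _) hidem

lemma mem_codeAut_abelianCode_iff_choose (hα : IsPrimitiveRoot α n)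
    {π : Equiv.Perm (Fin m → ZMod n)} :
    π ∈ codeAut (abelianCode n m {w} K α) ↔
      ∀ x y, ((hammingDist (π x) (π y)).choose w : ZMod 2) = (hammingDist x y).choose w := by
  simp only [mem_codeAut_abelianCode w hα, mem_invariantMatrices, map_apply, krawtchoukMatrix_apply,
    krawtchouk_mod_two (odd_of_isPrimitiveRoot hα), ZMod.card]

lemma krawtchoukMatrix_mem_invariantMatrices (hα : IsPrimitiveRoot α n)
    {π : Equiv.Perm (Fin m → ZMod n)} (hπ : π ∈ codeAut (abelianCode n m {w} K α)) :
    krawtchoukMatrix (Fin m) (ZMod n) w ∈ invariantMatrices ℤ π := by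
  have hodd : Odd (Fintype.card (Fin m → ZMod n) : ℤ) := by
    rw [Int.odd_coe_nat, Fintype.card_fun, ZMod.card]
    exact (odd_of_isPrimitiveRoot hα).pow
  exact circulant_mem_invariantMatrices_of_mod_two hodd
    (krawtchoukMatrix_mul_self (ZMod.isPrimitive_stdAddChar n) w)
    ((mem_codeAut_abelianCode w hα).1 hπ)

end AbelianCode

section DualAlgebra

/-- Lagrange interpolation: the indicator is a polynomial in `c`. -/
lemma levelSet_indicator_mem {X L : Type*} [Finite X] [Field L] [DecidableEq L]
    {A : Subalgebra L (X → L)} {c : X → L} (hc : c ∈ A) (v : L) :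
    (fun x => if c x = v then 1 else 0) ∈ A := by
  classical
  have := Fintype.ofFinite X
  set s := insert v (Finset.univ.image c)
  have hp : (fun x => if c x = v then 1 else 0) = aeval c (Lagrange.basis s id v) := by
    ext x
    rw [aeval_fn_apply]
    have hv : v ∈ s := Finset.mem_insert_self _ _
    have hx : c x ∈ s := Finset.mem_insert_of_mem (Finset.mem_image_of_mem _ (Finset.mem_univ x))
    split_ifs with h
    · rw [h]
      exact (Lagrange.eval_basis_self Function.injective_id.injOn hv).symm
    · exact (Lagrange.eval_basis_of_ne (v := id) (Ne.symm h) hx).symm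
  rw [hp]
  exact Algebra.adjoin_le (Set.singleton_subset_iff.2 hc) (aeval_mem_adjoin_singleton L c)

variable {ι R L : Type*} [Fintype ι] [DecidableEq ι] [CommRing R] [Fintype R] [DecidableEq R]
  [Field L] {ψ : AddChar R L}

/-- The symbols whose Fourier multiplier is invariant under `π`: an algebra for the pointwise
product, and closed under convolution. -/
def dualAlgebra (hψ : ψ.IsPrimitive) (hcard : (Fintype.card (ι → R) : L) ≠ 0)
    (π : Equiv.Perm (ι → R)) : Subalgebra L ((ι → R) → L) where
  carrier := {c | multiplier ψ c ∈ invariantMatrices L π}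
  add_mem' {c d} hc hd := by
    rw [Set.mem_ofPred_eq, multiplier_add]
    exact add_mem hc hd
  mul_mem' {c d} hc hd := by
    have hmul : multiplier ψ (c * d) =
        (Fintype.card (ι → R) : L)⁻¹ • (multiplier ψ c * multiplier ψ d) := by
      rw [multiplier_mul hψ, inv_smul_smul₀ hcard]
    rw [Set.mem_ofPred_eq, hmul]
    exact Subalgebra.smul_mem _ (mul_mem hc hd) _
  algebraMap_mem' r := by
    rw [Set.mem_ofPred_eq, Algebra.algebraMap_eq_smul_one, multiplier_smul, multiplier_one hψ]
    exact Subalgebra.smul_mem _ (Subalgebra.smul_mem _ (one_mem _) _) _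

variable {hψ : ψ.IsPrimitive} {hcard : (Fintype.card (ι → R) : L) ≠ 0} {π : Equiv.Perm (ι → R)}

lemma convolution_mem_dualAlgebra {c d : (ι → R) → L} (hc : c ∈ dualAlgebra hψ hcard π)
    (hd : d ∈ dualAlgebra hψ hcard π) : circulant d *ᵥ c ∈ dualAlgebra hψ hcard π := by
  change multiplier ψ _ ∈ invariantMatrices L π
  rw [← multiplier_hadamard]
  exact hadamard_mem_invariantMatrices hc hd

end DualAlgebra

section IntersectionNumber

/-- The number of words of weight `w` at Hamming distance `w` from a given word of length `n + k`
and weight `k`, over an alphabet of size `q`. In the `j`-th summand, `j` is the number of nonzero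
entries of the counted word on the support of the given one. -/
def intersectionNumber (q n k w : ℕ) : ℕ :=
  ∑ j ∈ Finset.range (w + 1),
    k.choose j * j.choose (k - j) * (q - 2) ^ (2 * j - k) * (q - 1) ^ (w - j) * n.choose (w - j)

section Count

variable {ι R L : Type*} [Fintype ι] [AddCommGroup R] [Fintype R] [DecidableEq R] [CommRing L]

lemma sum_ite_mul_ite (u v : L) (b : R) :
    ∑ a, (if a = 0 then 1 else u) * (if b - a = 0 then 1 else v) =
      if b = 0 then 1 + ((Fintype.card R - 1 : ℕ) : L) * v * u
      else v + (1 + ((Fintype.card R - 2 : ℕ) : L) * v) * u := by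
  have hcard : 1 ≤ Fintype.card R := Fintype.card_pos
  split_ifs with hb
  · have hterm : ∀ a, (if a = 0 then 1 else u) * (if b - a = 0 then 1 else v) =
        u * v + if a = 0 then 1 - u * v else 0 := fun a => by
      simp only [hb, zero_sub, neg_eq_zero]
      split_ifs <;> ring
    simp only [hterm, Finset.sum_add_distrib, Finset.sum_const, Finset.sum_ite_eq', Finset.mem_univ,
      if_true, Finset.card_univ, nsmul_eq_mul]
    push_cast [hcard]
    ring
  · have hcard : 2 ≤ Fintype.card R := Fintype.one_lt_card_iff.2 ⟨b, 0, hb⟩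
    have hterm : ∀ a, (if a = 0 then 1 else u) * (if b - a = 0 then 1 else v) =
        u * v + (if a = 0 then v - u * v else 0) + if a = b then u - u * v else 0 := fun a => by
      simp only [sub_eq_zero, eq_comm (a := b)]
      split_ifs with h0 hab
      · exact absurd (hab.symm.trans h0) hb
      all_goals ring
    simp only [hterm, Finset.sum_add_distrib, Finset.sum_const, Finset.sum_ite_eq', Finset.mem_univ,
      if_true, Finset.card_univ, nsmul_eq_mul]
    push_cast [hcard]
    ring

lemma sum_pow_hammingNorm_mul_pow [DecidableEq ι] (u v : L) (x : ι → R) :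
    ∑ y, u ^ hammingNorm y * v ^ hammingNorm (x - y) =
      (1 + ((Fintype.card R - 1 : ℕ) : L) * v * u) ^ (Fintype.card ι - hammingNorm x) *
        (v + (1 + ((Fintype.card R - 2 : ℕ) : L) * v) * u) ^ hammingNorm x := by
  have hterm : ∀ y : ι → R, u ^ hammingNorm y * v ^ hammingNorm (x - y) =
      ∏ k, ((if y k = 0 then 1 else u) * if x k - y k = 0 then 1 else v) := fun y => by
    simp only [Finset.prod_mul_distrib, ← Pi.sub_apply x y, prod_ite_eq_zero, one_pow, one_mul]
  rw [Finset.sum_congr rfl fun y _ => hterm y,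
    ← Fintype.prod_sum fun k a => (if a = 0 then 1 else u) * if x k - a = 0 then 1 else v,
    Finset.prod_congr rfl fun k _ => sum_ite_mul_ite u v (x k), prod_ite_eq_zero]

end Count

section Coefficients

variable {L : Type*} [CommSemiring L]

lemma coeff_C_add_C_mul_X_pow (r s : L) (k j : ℕ) :
    ((C r + C s * X) ^ k).coeff j = s ^ j * r ^ (k - j) * k.choose j := by
  have hcomp : (C r + C s * X) ^ k = ((X + C r) ^ k).comp (C s * X) := by simp [add_comm]
  rw [hcomp, comp_C_mul_X_coeff, coeff_X_add_C_pow]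
  ring

lemma coeff_X_pow_mul_one_add_pow (r : L) {j k w : ℕ} (hjk : j ≤ k) (hjw : j ≤ w) :
    (X ^ (w - j + (k - j)) * (1 + C r * X) ^ j).coeff w = r ^ (2 * j - k) * j.choose (k - j) := by
  rw [coeff_X_pow_mul', coeff_one_add_C_mul_X_pow]
  split_ifs with h
  · have hsub : w - (w - j + (k - j)) = j - (k - j) := by omega
    rw [hsub, Nat.choose_symm (by omega), show j - (k - j) = 2 * j - k by omega]
  · rw [Nat.choose_eq_zero_of_lt (by omega), Nat.cast_zero, mul_zero]

lemma coeff_coeff_intersectionNumber (q n k w : ℕ) :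
    (((1 + C (((q - 1 : ℕ) : L[X]) * X) * X) ^ n *
      (C X + C (1 + ((q - 2 : ℕ) : L[X]) * X) * X) ^ k).coeff w).coeff w =
      (intersectionNumber q n k w : L) := by
  rw [mul_comm, coeff_mul, Finset.Nat.sum_antidiagonal_eq_sum_range_succ_mk, finsetSum_coeff,
    intersectionNumber, Nat.cast_sum]
  refine Finset.sum_congr rfl fun j hj => ?_
  have hjw := Finset.mem_range_succ_iff.1 hj
  rcases lt_or_ge k j with hkj | hjk
  · simp only [coeff_C_add_C_mul_X_pow, Nat.choose_eq_zero_of_lt hkj, Nat.cast_zero, mul_zero,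
      zero_mul, coeff_zero]
  have hmul : (1 + ((q - 2 : ℕ) : L[X]) * X) ^ j * X ^ (k - j) * (k.choose j : L[X]) *
      ((((q - 1 : ℕ) : L[X]) * X) ^ (w - j) * (n.choose (w - j) : L[X])) =
      C (((k.choose j * (q - 1) ^ (w - j) * n.choose (w - j) : ℕ) : L)) *
        (X ^ (w - j + (k - j)) * (1 + C (((q - 2 : ℕ) : L)) * X) ^ j) := by
    simp only [Nat.cast_mul, Nat.cast_pow, map_mul, map_pow, map_natCast]
    ring
  rw [coeff_C_add_C_mul_X_pow, coeff_one_add_C_mul_X_pow, hmul, coeff_C_mul,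
    coeff_X_pow_mul_one_add_pow _ hjk hjw]
  push_cast
  ring

end Coefficients

lemma circulant_weightIndicator_mulVec {ι R L : Type*} [Fintype ι] [DecidableEq ι]
    [AddCommGroup R] [Fintype R] [DecidableEq R] [CommRing L] (w : ℕ) (x : ι → R) :
    (circulant (weightIndicator L w) *ᵥ weightIndicator L w) x =
      intersectionNumber (Fintype.card R) (Fintype.card ι - hammingNorm x) (hammingNorm x) w := by
  have hgen := sum_pow_hammingNorm_mul_pow (X : L[X][X]) (C X) x
  have hcoeff := coeff_coeff_intersectionNumber (L := L) (Fintype.card R)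
    (Fintype.card ι - hammingNorm x) (hammingNorm x) w
  simp only [map_add, map_mul, map_one, map_natCast] at hcoeff
  rw [← hcoeff, ← hgen, finsetSum_coeff, finsetSum_coeff]
  refine Finset.sum_congr rfl fun y _ => ?_
  change weightIndicator L w (x - y) * weightIndicator L w y = _
  rw [← C_pow, coeff_mul_C, coeff_X_pow, mul_comm]
  simp only [weightIndicator, ite_mul, one_mul, zero_mul, eq_comm (b := w),
    apply_ite (coeff · w), coeff_X_pow, coeff_zero]

section Recurrence

variable {q n k w : ℕ}

lemma intersectionNumber_succ_succ :
    intersectionNumber q (n + 1) k (w + 1) =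
      intersectionNumber q n k (w + 1) + (q - 1) * intersectionNumber q n k w := by
  have hterm : ∀ j ∈ Finset.range (w + 1),
      k.choose j * j.choose (k - j) * (q - 2) ^ (2 * j - k) * (q - 1) ^ (w + 1 - j) *
          (n + 1).choose (w + 1 - j) =
        k.choose j * j.choose (k - j) * (q - 2) ^ (2 * j - k) * (q - 1) ^ (w + 1 - j) *
            n.choose (w + 1 - j) +
          (q - 1) * (k.choose j * j.choose (k - j) * (q - 2) ^ (2 * j - k) * (q - 1) ^ (w - j) *
            n.choose (w - j)) := fun j hj => by
    rw [Nat.succ_sub (Finset.mem_range_succ_iff.1 hj), Nat.choose_succ_succ', pow_succ]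
    ring
  simp only [intersectionNumber]
  rw [Finset.sum_range_succ, Finset.sum_congr rfl hterm, Finset.sum_add_distrib,
    Finset.sum_range_succ _ (w + 1), Finset.mul_sum]
  simp only [Nat.sub_self, Nat.choose_zero_right]
  ring

lemma intersectionNumber_eq_zero_of_lt (h : n + k < w) : intersectionNumber q n k w = 0 := by
  refine Finset.sum_eq_zero fun j _ => ?_
  rcases lt_or_ge k j with hkj | hjk
  · simp [Nat.choose_eq_zero_of_lt hkj]
  · rw [Nat.choose_eq_zero_of_lt (show n < w - j by omega), mul_zero]

lemma intersectionNumber_weight_zero (hk : 0 < k) : intersectionNumber q n k 0 = 0 := by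
  simp [intersectionNumber, Nat.choose_eq_zero_of_lt hk]

lemma intersectionNumber_zero_left :
    intersectionNumber q 0 k w = k.choose w * w.choose (k - w) * (q - 2) ^ (2 * w - k) := by
  rw [intersectionNumber, Finset.sum_eq_single_of_mem w (Finset.self_mem_range_succ w)]
  · simp
  · intro j hj hne
    have := Finset.mem_range_succ_iff.1 hj
    rw [Nat.choose_eq_zero_of_lt (show 0 < w - j by omega), mul_zero]

lemma intersectionNumber_zero :
    intersectionNumber q n 0 w = (q - 1) ^ w * n.choose w := by
  rw [intersectionNumber, Finset.sum_range_succ', Finset.sum_eq_zero] <;> simp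

lemma intersectionNumber_one :
    intersectionNumber q n 1 (w + 1) = (q - 2) * (q - 1) ^ w * n.choose w := by
  rw [intersectionNumber, Finset.sum_range_succ', Finset.sum_range_succ', Finset.sum_eq_zero]
  · simp
  · intro j _
    rw [Nat.choose_eq_zero_of_lt (show 1 < j + 1 + 1 by omega)]
    simp

lemma intersectionNumber_two :
    intersectionNumber q n 2 (w + 2) =
      2 * (q - 1) ^ (w + 1) * n.choose (w + 1) + (q - 2) ^ 2 * (q - 1) ^ w * n.choose w := by
  rw [intersectionNumber, Finset.sum_range_succ', Finset.sum_range_succ', Finset.sum_range_succ',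
    Finset.sum_eq_zero]
  · simp [add_comm]
  · intro j _
    rw [Nat.choose_eq_zero_of_lt (show 2 < j + 1 + 1 + 1 by omega)]
    simp

end Recurrence

end IntersectionNumber

section TernaryInequality

variable {m n k w : ℕ}

lemma intersectionNumber_zero_ne_one (hw : 1 ≤ w) (hwm : w ≤ m) :
    intersectionNumber 3 m 0 w ≠ intersectionNumber 3 (m - 1) 1 w := by
  obtain ⟨w, rfl⟩ := Nat.exists_eq_add_of_le' hw
  obtain ⟨m, rfl⟩ := Nat.exists_eq_add_of_le' (hw.trans hwm)
  rw [Nat.add_sub_cancel, intersectionNumber_zero, intersectionNumber_one, Nat.choose_succ_succ']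
  have hpos : 0 < 2 ^ w * m.choose w :=
    Nat.mul_pos (by positivity) (Nat.choose_pos (Nat.le_of_succ_le_succ hwm))
  apply ne_of_gt
  calc 1 * 2 ^ w * m.choose w < 2 * (2 ^ w * m.choose w) := by linarith
    _ ≤ 2 * (2 ^ w * m.choose w) + 2 ^ (w + 1) * m.choose (w + 1) := Nat.le_add_right _ _
    _ = 2 ^ (w + 1) * (m.choose w + m.choose (w + 1)) := by ring

lemma three_mul_eq_of_intersectionNumber_two_eq_one (hm : 2 ≤ m) (hw : 1 ≤ w) (hwm : w ≤ m)
    (h : intersectionNumber 3 (m - 2) 2 w = intersectionNumber 3 (m - 1) 1 w) :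
    3 * w = 2 * m + 1 := by
  obtain ⟨n, rfl⟩ := Nat.exists_eq_add_of_le' hm
  obtain ⟨w, rfl⟩ := Nat.exists_eq_add_of_le' hw
  rw [Nat.add_sub_cancel, show n + 2 - 1 = n + 1 from rfl] at h
  rcases w with _ | w
  · simp [intersectionNumber, Finset.sum_range_succ] at h
  rw [intersectionNumber_two, intersectionNumber_one, Nat.choose_succ_succ'] at h
  have hratio : 2 * n.choose (w + 1) = n.choose w := by
    refine Nat.eq_of_mul_eq_mul_left (pow_pos two_pos w) ?_
    norm_num [pow_succ] at h
    linarith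
  have hchoose := Nat.choose_succ_right_eq n w
  have hpos : 0 < n.choose w := Nat.choose_pos (by omega)
  have hlin : w + 1 = 2 * (n - w) := by
    refine Nat.eq_of_mul_eq_mul_left hpos ?_
    rw [mul_left_comm, ← hchoose, ← hratio]
    ring
  omega

lemma choose_succ_add_two_mul_choose_lt {v : ℕ} (hv : 5 ≤ v) (r : ℕ) :
    v.choose (r + 1) + 2 * v.choose r < 2 ^ v := by
  induction v, hv using Nat.le_induction generalizing r with
  | base =>
    rcases le_or_gt r 5 with hr | hr
    · revert r
      decide
    · simp [Nat.choose_eq_zero_of_lt hr, Nat.choose_eq_zero_of_lt (hr.trans r.lt_succ_self)]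
  | succ v _ ih =>
    rw [pow_succ, Nat.choose_succ_succ']
    rcases r with _ | r
    · have := ih 0
      simp only [Nat.choose_zero_right] at this ⊢
      omega
    · rw [Nat.choose_succ_succ' v r]
      linarith [ih r, ih (r + 1)]

lemma choose_succ_add_two_mul_choose_lt_of_add {v r : ℕ} (h : 7 ≤ v + r) :
    v.choose (r + 1) + 2 * v.choose r < 2 ^ v := by
  rcases le_or_gt 5 v with hv | hv
  · exact choose_succ_add_two_mul_choose_lt hv r
  rcases le_or_gt r v with hr | hr
  · obtain ⟨rfl, rfl | rfl⟩ : v = 4 ∧ (r = 3 ∨ r = 4) := by omega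
    all_goals decide
  · simp [Nat.choose_eq_zero_of_lt hr, Nat.choose_eq_zero_of_lt (hr.trans r.lt_succ_self)]

/-- Multiplying by `v + 1` turns the claim into `choose_succ_add_two_mul_choose_lt_of_add`. -/
lemma choose_mul_choose_lt {v r : ℕ} (h : 8 ≤ v + r) :
    (v + r + 1).choose (v + 1) * (v + 1).choose r < 2 ^ v * (v + r).choose v := by
  have hpos : 0 < (v + r).choose v := Nat.choose_pos (Nat.le_add_right v r)
  have key : (v + r + 1) * (v + 1).choose r < (v + 1) * 2 ^ v := by
    rcases r with _ | r
    · have : 1 < 2 ^ v := Nat.one_lt_two_pow (by omega)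
      simpa using this
    · calc (v + (r + 1) + 1) * (v + 1).choose (r + 1)
          = (v + 1) * (v.choose (r + 1) + 2 * v.choose r) := by
            have habs := Nat.add_one_mul_choose_eq v r
            have hpascal := Nat.choose_succ_succ' v r
            rw [hpascal] at habs ⊢
            linarith
        _ < (v + 1) * 2 ^ v :=
            Nat.mul_lt_mul_of_pos_left
              (choose_succ_add_two_mul_choose_lt_of_add (by omega)) v.succ_pos
  refine Nat.lt_of_mul_lt_mul_right (a := v + 1) ?_
  calc (v + r + 1).choose (v + 1) * (v + 1).choose r * (v + 1)
      = (v + r + 1).choose (v + 1) * (v + 1) * (v + 1).choose r := by ring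
    _ = (v + r).choose v * ((v + r + 1) * (v + 1).choose r) := by
        rw [← Nat.add_one_mul_choose_eq]
        ring
    _ < (v + r).choose v * ((v + 1) * 2 ^ v) := Nat.mul_lt_mul_of_pos_left key hpos
    _ = 2 ^ v * (v + r).choose v * (v + 1) := by ring

lemma intersectionNumber_zero_left_lt (hk : 8 ≤ k) (hw : 1 ≤ w) (hwk : w ≤ k + 1) :
    intersectionNumber 3 0 (k + 1) w < intersectionNumber 3 k 1 w := by
  obtain ⟨v, rfl⟩ := Nat.exists_eq_add_of_le' hw
  obtain ⟨r, rfl⟩ := Nat.exists_eq_add_of_le (Nat.le_of_succ_le_succ hwk)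
  rw [intersectionNumber_zero_left, intersectionNumber_one,
    show v + r + 1 - (v + 1) = r by omega]
  simpa using choose_mul_choose_lt hk

/-- Both sides satisfy the recurrence `intersectionNumber_succ_succ`. -/
lemma intersectionNumber_lt_one_of_le {n₀ : ℕ} (hn : n₀ ≤ n)
    (h : ∀ w, 1 ≤ w → w ≤ n₀ + k + 1 →
      intersectionNumber 3 n₀ (k + 1) w < intersectionNumber 3 (n₀ + k) 1 w) :
    ∀ w, 1 ≤ w → w ≤ n + k + 1 →
      intersectionNumber 3 n (k + 1) w < intersectionNumber 3 (n + k) 1 w := by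
  induction n, hn using Nat.le_induction with
  | base => exact h
  | succ n _ ih =>
    intro w hw hwn
    obtain ⟨w, rfl⟩ := Nat.exists_eq_add_of_le' hw
    rw [show n + 1 + k = n + k + 1 by ring, intersectionNumber_succ_succ,
      intersectionNumber_succ_succ]
    have hsucc : intersectionNumber 3 n (k + 1) (w + 1) ≤
        intersectionNumber 3 (n + k) 1 (w + 1) := by
      rcases le_or_gt (w + 1) (n + k + 1) with hle | hlt
      · exact (ih _ hw hle).le
      · rw [intersectionNumber_eq_zero_of_lt (by omega)]
        exact Nat.zero_le _
    rcases Nat.eq_zero_or_pos w with rfl | hwpos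
    · simpa [intersectionNumber_weight_zero] using ih 1 le_rfl (by omega)
    · have := ih w hwpos (by omega)
      omega

/-- The pairs `(m, w)` for which the intersection numbers do not separate weight `1` from all
weights above `2`. -/
def exceptionalParameters : Finset (ℕ × ℕ) := {(4, 2), (4, 3), (5, 3), (6, 4), (8, 5)}

lemma intersectionNumber_lt_one_of_le_nine :
    ∀ m ∈ Finset.Icc 4 9, ∀ w ∈ Finset.Icc 1 m, (m, w) ∉ exceptionalParameters →
      ∀ k ∈ Finset.Icc 2 (m - 1),
        intersectionNumber 3 (m - 1 - k) (k + 1) w < intersectionNumber 3 (m - 1) 1 w := by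
  decide

lemma intersectionNumber_lt_one (hm : 4 ≤ m) (hw : 1 ≤ w) (hwm : w ≤ m)
    (hexc : (m, w) ∉ exceptionalParameters) (hk : 3 ≤ k) (hkm : k ≤ m) :
    intersectionNumber 3 (m - k) k w < intersectionNumber 3 (m - 1) 1 w := by
  obtain ⟨k, rfl⟩ := Nat.exists_eq_add_of_le' (Nat.one_le_of_lt hk)
  obtain ⟨n, rfl⟩ := Nat.exists_eq_add_of_le' hkm
  rw [Nat.add_sub_cancel, show n + (k + 1) - 1 = n + k from rfl]
  rcases le_or_gt (n + (k + 1)) 9 with hsmall | hlarge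
  · have := intersectionNumber_lt_one_of_le_nine _ (Finset.mem_Icc.2 ⟨hm, hsmall⟩) w
      (Finset.mem_Icc.2 ⟨hw, hwm⟩) hexc k (Finset.mem_Icc.2 (by omega))
    rwa [show n + (k + 1) - 1 = n + k from rfl, Nat.add_sub_cancel] at this
  rcases le_or_gt 8 k with hk8 | hk8
  · refine intersectionNumber_lt_one_of_le n.zero_le (fun w hw hwk => ?_) w hw hwm
    rw [zero_add] at hwk ⊢
    exact intersectionNumber_zero_left_lt hk8 hw hwk
  · refine intersectionNumber_lt_one_of_le (n₀ := 8 - k) (by omega) (fun w hw hwk => ?_) w hw hwm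
    have hexc' : (9, w) ∉ exceptionalParameters := by simp [exceptionalParameters]
    have := intersectionNumber_lt_one_of_le_nine 9 (by decide) w (Finset.mem_Icc.2 (by omega))
      hexc' k (Finset.mem_Icc.2 (by omega))
    rwa [Nat.sub_add_cancel hk8.le]

end TernaryInequality

section KrawtchoukInjectivity

variable {q n s t : ℕ}

lemma krawtchouk_one (ht : t ≤ n) : krawtchouk q n 1 t = (q - 1) * n - q * t := by
  simp only [krawtchouk, Finset.sum_range_succ, Finset.sum_range_zero, Nat.choose_zero_right,
    Nat.choose_one_right, Nat.sub_zero, Nat.sub_self, Nat.cast_sub ht]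
  push_cast
  ring

lemma two_mul_krawtchouk_two (ht : t ≤ n) :
    2 * krawtchouk q n 2 t =
      t * (t - 1) - 2 * (q - 1) * t * (n - t) + (q - 1) ^ 2 * ((n - t) * (n - t - 1)) := by
  have hchoose : ∀ k : ℕ, 2 * (k.choose 2 : ℤ) = k * (k - 1) := fun k => by
    qify
    rw [Nat.cast_choose_two]
    ring
  have htwo := hchoose t
  have htwo' := hchoose (n - t)
  rw [Nat.cast_sub ht] at htwo'
  rw [← htwo, ← htwo']
  simp only [krawtchouk, Finset.sum_range_succ, Finset.sum_range_zero, Nat.choose_zero_right,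
    Nat.choose_one_right, Nat.sub_zero, Nat.sub_self, Nat.reduceSub, Nat.cast_sub ht]
  push_cast
  ring

lemma eq_of_krawtchouk_one_eq (hq : 0 < q) (hs : s ≤ n) (ht : t ≤ n)
    (h : krawtchouk q n 1 s = krawtchouk q n 1 t) : s = t := by
  rw [krawtchouk_one hs, krawtchouk_one ht, sub_right_inj] at h
  exact_mod_cast mul_left_cancel₀ (Nat.cast_ne_zero.2 hq.ne') h

lemma eq_of_krawtchouk_one_add_two_eq (hn : 3 ∣ 2 * n + 1) (hs : s ≤ n) (ht : t ≤ n)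
    (h : krawtchouk 3 n 1 s + krawtchouk 3 n 2 s = krawtchouk 3 n 1 t + krawtchouk 3 n 2 t) :
    s = t := by
  have hfactor : ((s : ℤ) - t) * (9 * (s + t) - 12 * n - 3) = 0 := by
    have hs2 := two_mul_krawtchouk_two (q := 3) hs
    have ht2 := two_mul_krawtchouk_two (q := 3) ht
    rw [krawtchouk_one hs, krawtchouk_one ht] at h
    push_cast at *
    linear_combination 2 * h - hs2 + ht2
  rcases mul_eq_zero.1 hfactor with h | h <;> omega

end KrawtchoukInjectivity

section Isometry

lemma sum_krawtchoukMatrix_mem_invariantMatrices {ι R L : Type*} [Fintype ι] [DecidableEq ι]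
    [CommRing R] [Fintype R] [DecidableEq R] [Field L] [CharZero L] {ψ : AddChar R L}
    (hψ : ψ.IsPrimitive) {π : Equiv.Perm (ι → R)} {w : ℕ}
    (hπ : krawtchoukMatrix ι R w ∈ invariantMatrices ℤ π) (v : ℕ) :
    ∑ k ∈ Finset.range (Fintype.card ι + 1) with
        intersectionNumber (Fintype.card R) (Fintype.card ι - k) k w = v,
      krawtchoukMatrix ι R k ∈ invariantMatrices ℤ π := by
  classical
  set s := {k ∈ Finset.range (Fintype.card ι + 1) |
    intersectionNumber (Fintype.card R) (Fintype.card ι - k) k w = v}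
  have hcard : (Fintype.card (ι → R) : L) ≠ 0 := Nat.cast_ne_zero.2 Fintype.card_ne_zero
  have hw : weightIndicator L w ∈ dualAlgebra hψ hcard π := by
    change multiplier ψ _ ∈ invariantMatrices L π
    rw [← map_krawtchoukMatrix hψ]
    exact map_mem_invariantMatrices (Int.castRingHom L) hπ
  have hlevel : (fun x => if (circulant (weightIndicator L w) *ᵥ weightIndicator L w) x = v
      then 1 else 0) = ∑ k ∈ s, (weightIndicator L k : (ι → R) → L) := by
    ext x
    have hmem : hammingNorm x ∈ s ↔
        intersectionNumber (Fintype.card R) (Fintype.card ι - hammingNorm x) (hammingNorm x) w =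
          v := by
      rw [Finset.mem_filter, Finset.mem_range_succ_iff]
      exact and_iff_right hammingNorm_le_card_fintype
    simp only [circulant_weightIndicator_mulVec, Nat.cast_inj, ← hmem, Finset.sum_apply,
      weightIndicator, Finset.sum_ite_eq]
  have hsum : multiplier ψ (∑ k ∈ s, (weightIndicator L k : (ι → R) → L)) =
      (∑ k ∈ s, krawtchoukMatrix ι R k).map (Int.cast : ℤ → L) := by
    rw [← AddMonoidHom.mk'_apply (multiplier ψ) (multiplier_add ψ), map_sum]
    simp only [AddMonoidHom.mk'_apply, ← map_krawtchoukMatrix hψ]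
    exact (map_sum (Int.castRingHom L).mapMatrix _ s).symm
  have hinv := levelSet_indicator_mem (convolution_mem_dualAlgebra hw hw) (v : L)
  rw [hlevel] at hinv
  change multiplier ψ _ ∈ invariantMatrices L π at hinv
  rw [hsum] at hinv
  exact fun x y => Int.cast_injective (hinv x y)

/-- Only the weights `1` and possibly `2` have the intersection number of weight `1`, and `K₁`,
respectively `K₁ + K₂`, is injective on distances. -/
lemma hammingDist_map_eq_of_intersectionNumber_lt {m w : ℕ} {π : Equiv.Perm (Fin m → ZMod 3)}
    (hm : 2 ≤ m) (hw : 1 ≤ w) (hwm : w ≤ m)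
    (hlt : ∀ k, 3 ≤ k → k ≤ m →
      intersectionNumber 3 (m - k) k w < intersectionNumber 3 (m - 1) 1 w)
    (hπ : krawtchoukMatrix (Fin m) (ZMod 3) w ∈ invariantMatrices ℤ π) (x y : Fin m → ZMod 3) :
    hammingDist (π x) (π y) = hammingDist x y := by
  have hinv := sum_krawtchoukMatrix_mem_invariantMatrices (ZMod.isPrimitive_stdAddChar 3) hπ
    (intersectionNumber 3 (m - 1) 1 w) x y
  simp only [Fintype.card_fin, ZMod.card] at hinv
  have hzero := intersectionNumber_zero_ne_one hw hwm
  have hfilter : ∀ k,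
      (k ≤ m ∧ intersectionNumber 3 (m - k) k w = intersectionNumber 3 (m - 1) 1 w) ↔
        k = 1 ∨ k = 2 ∧ intersectionNumber 3 (m - 2) 2 w = intersectionNumber 3 (m - 1) 1 w := by
    rintro (_ | _ | _ | k)
    · simpa using hzero
    · simpa using hw.trans hwm
    · simpa using fun _ => hm
    · simpa only [Nat.reduceEqDiff, false_and, or_false, iff_false, not_and] using fun hk =>
        (hlt (k + 3) (Nat.le_add_left 3 k) hk).ne
  by_cases htwo : intersectionNumber 3 (m - 2) 2 w = intersectionNumber 3 (m - 1) 1 w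
  · have hs : {k ∈ Finset.range (m + 1) | intersectionNumber 3 (m - k) k w =
        intersectionNumber 3 (m - 1) 1 w} = {1, 2} := by
      ext k
      simp [hfilter, htwo]
    have h3w := three_mul_eq_of_intersectionNumber_two_eq_one hm hw hwm htwo
    refine eq_of_krawtchouk_one_add_two_eq ⟨w, h3w.symm⟩ (hammingDist_le _ _)
      (hammingDist_le _ _) ?_
    simpa [hs, krawtchoukMatrix_apply, Matrix.add_apply] using hinv
  · have hs : {k ∈ Finset.range (m + 1) | intersectionNumber 3 (m - k) k w =
        intersectionNumber 3 (m - 1) 1 w} = {1} := by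
      ext k
      simp [hfilter, htwo]
    refine eq_of_krawtchouk_one_eq three_pos (hammingDist_le _ _) (hammingDist_le _ _) ?_
    simpa [hs, krawtchoukMatrix_apply] using hinv

end Isometry

section OrthogonalGroup

lemma exists_matrix_of_dotProduct_map {ι R : Type*} [Fintype ι] [DecidableEq ι] [CommRing R]
    {f : (ι → R) → ι → R} (hf : ∀ x y, f x ⬝ᵥ f y = x ⬝ᵥ y) :
    ∃ A : Matrix ι ι R, Aᵀ * A = 1 ∧ ∀ x, f x = A *ᵥ x := by
  set A : Matrix ι ι R := of fun k i => f (Pi.single i 1) k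
  have hA : Aᵀ * A = 1 := by
    ext i j
    change f (Pi.single i 1) ⬝ᵥ f (Pi.single j 1) = _
    rw [hf, single_one_dotProduct, one_apply, Pi.single_apply]
  refine ⟨A, hA, fun x => ?_⟩
  have hx : Aᵀ *ᵥ f x = x := by
    ext i
    change f (Pi.single i 1) ⬝ᵥ f x = _
    rw [hf, single_one_dotProduct]
  rw [← congrArg (A *ᵥ ·) hx, mulVec_mulVec, mul_eq_one_comm.1 hA, one_mulVec]

lemma householder_transpose_mul_self {ι R : Type*} [Fintype ι] [DecidableEq ι] [CommRing R]
    {v : ι → R} (hv : v ⬝ᵥ v = 1) :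
    (1 - (2 : R) • vecMulVec v v)ᵀ * (1 - (2 : R) • vecMulVec v v) = 1 := by
  have hsq : vecMulVec v v * vecMulVec v v = vecMulVec v v := by
    rw [vecMulVec_mul_vecMulVec, hv, one_smul]
  rw [transpose_sub, transpose_one, transpose_smul, transpose_vecMulVec, Matrix.sub_mul,
    Matrix.one_mul, Matrix.mul_sub, Matrix.mul_one, Matrix.smul_mul, Matrix.mul_smul, hsq]
  module

variable {ι : Type*} [Fintype ι] {m : ℕ} {π : Equiv.Perm (Fin m → ZMod 3)}

lemma natCast_hammingNorm_eq_dotProduct_self (x : ι → ZMod 3) :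
    (hammingNorm x : ZMod 3) = x ⬝ᵥ x := by
  have hsq : ∀ a : ZMod 3, (if a ≠ 0 then 1 else 0) = a * a := by decide
  simp only [hammingNorm, Finset.natCast_card_filter, hsq, dotProduct]

lemma natCast_hammingDist_eq_dotProduct_self (x y : ι → ZMod 3) :
    (hammingDist x y : ZMod 3) = (x - y) ⬝ᵥ (x - y) := by
  rw [hammingDist_eq_hammingNorm_sub, natCast_hammingNorm_eq_dotProduct_self]

lemma natCast_hammingDist_map_of_mem_aoSet (hπ : π ∈ aoSet m) (x y : Fin m → ZMod 3) :
    (hammingDist (π x) (π y) : ZMod 3) = hammingDist x y := by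
  obtain ⟨A, b, -, hA, hπA⟩ := hπ
  rw [natCast_hammingDist_eq_dotProduct_self, natCast_hammingDist_eq_dotProduct_self, hπA, hπA,
    add_sub_add_right_eq_sub, ← mulVec_sub, dotProduct_mulVec, ← mulVec_transpose, mulVec_mulVec,
    hA, one_mulVec]

lemma dotProduct_eq_sub_dotProduct_self (x y : ι → ZMod 3) :
    x ⬝ᵥ y = (x - y) ⬝ᵥ (x - y) - x ⬝ᵥ x - y ⬝ᵥ y := by
  rw [sub_dotProduct, dotProduct_sub, dotProduct_sub, dotProduct_comm y x]
  linear_combination (x ⬝ᵥ y) * (by decide : (3 : ZMod 3) = 0)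

lemma mem_aoSet_of_natCast_hammingDist_map
    (hπ : ∀ x y, (hammingDist (π x) (π y) : ZMod 3) = hammingDist x y) : π ∈ aoSet m := by
  simp only [natCast_hammingDist_eq_dotProduct_self] at hπ
  have hnorm : ∀ x, (π x - π 0) ⬝ᵥ (π x - π 0) = x ⬝ᵥ x := fun x => by rw [hπ, sub_zero]
  obtain ⟨A, hA, hπA⟩ := exists_matrix_of_dotProduct_map (f := fun x => π x - π 0) fun x y => by
    rw [dotProduct_eq_sub_dotProduct_self, sub_sub_sub_cancel_right, hπ, hnorm, hnorm,
      ← dotProduct_eq_sub_dotProduct_self]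
  exact ⟨A, π 0, .of_mul_eq_one_right _ hA, hA, fun x => sub_eq_iff_eq_add.1 (hπA x)⟩

lemma exists_mem_aoSet_of_transpose_mul_self {A : Matrix (Fin m) (Fin m) (ZMod 3)}
    (hA : Aᵀ * A = 1) : ∃ π ∈ aoSet m, ∀ x, π x = A *ᵥ x :=
  ⟨{ toFun := (A *ᵥ ·)
     invFun := (Aᵀ *ᵥ ·)
     left_inv := fun x => by simp only [mulVec_mulVec, hA, one_mulVec]
     right_inv := fun x => by simp only [mulVec_mulVec, mul_eq_one_comm.1 hA, one_mulVec] },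
    ⟨A, 0, .of_mul_eq_one_right _ hA, hA, fun x => (add_zero (A *ᵥ x)).symm⟩, fun _ => rfl⟩

lemma exists_mem_aoSet_eq_reflection {v : Fin m → ZMod 3} (hv : v ⬝ᵥ v = 1) :
    ∃ π ∈ aoSet m, ∀ x, π x = x - (2 * (v ⬝ᵥ x)) • v := by
  obtain ⟨π, hπ, hπA⟩ := exists_mem_aoSet_of_transpose_mul_self (householder_transpose_mul_self hv)
  refine ⟨π, hπ, fun x => ?_⟩
  rw [hπA, Matrix.sub_mulVec, one_mulVec, smul_mulVec, vecMulVec_mulVec, op_smul_eq_smul, smul_smul]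

lemma hammingNorm_ite_mem {R : Type*} [Zero R] [One R] [NeZero (1 : R)] [DecidableEq R]
    [DecidableEq ι] (s : Finset ι) :
    hammingNorm (fun i => if i ∈ s then (1 : R) else 0) = s.card := by
  simp [hammingNorm]

/-- The reflection in the indicator of a set `T` of four coordinates spreads a word that meets `T`
in a single coordinate over all of `T`. -/
lemma exists_mem_aoSet_hammingDist_add_three {s : ℕ} (hs : s + 4 ≤ m) :
    ∃ π ∈ aoSet m, ∃ x y, hammingDist x y = s + 1 ∧ hammingDist (π x) (π y) = s + 4 := by
  obtain ⟨S, -, hS⟩ := Finset.exists_subset_card_eq (hs.trans_eq (Finset.card_fin m).symm)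
  obtain ⟨T, hTS, hT⟩ := Finset.exists_subset_card_eq ((Nat.le_add_left 4 s).trans_eq hS.symm)
  obtain ⟨t, ht⟩ : T.Nonempty := Finset.card_pos.1 (by omega)
  set v : Fin m → ZMod 3 := fun i => if i ∈ T then 1 else 0 with hvdef
  set x : Fin m → ZMod 3 := fun i => if i ∈ insert t (S \ T) then 1 else 0 with hxdef
  have hv : v ⬝ᵥ v = 1 := by
    rw [← natCast_hammingNorm_eq_dotProduct_self, hammingNorm_ite_mem, hT]
    rfl
  have hvx : v ⬝ᵥ x = 1 := by
    have hmul : ∀ i, v i * x i = if i = t then 1 else 0 := fun i => by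
      simp only [hvdef, hxdef]
      grind
    simp only [dotProduct, hmul, Finset.sum_ite_eq', Finset.mem_univ, if_true]
  obtain ⟨π, hπ, hπv⟩ := exists_mem_aoSet_eq_reflection hv
  refine ⟨π, hπ, x, 0, ?_, ?_⟩
  · rw [hammingDist_zero_right, hammingNorm_ite_mem, Finset.card_insert_of_notMem (by simp [ht]),
      Finset.card_sdiff_of_subset hTS]
    omega
  · have hsupp : ∀ i, (x - (2 : ZMod 3) • v) i ≠ 0 ↔ i ∈ S := fun i => by
      have := @hTS i
      simp only [hvdef, hxdef, Pi.sub_apply, Pi.smul_apply, smul_eq_mul]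
      grind
    rw [hπv, hπv 0, dotProduct_zero, mul_zero, zero_smul, sub_zero, hammingDist_zero_right, hvx,
      mul_one]
    simp only [hammingNorm, hsupp, Finset.filter_univ_mem, hS]

end OrthogonalGroup

section CommonTriangle

lemma exists_orthogonal_frame {R : Type*} [CommRing R] (x : Fin 4 → R) :
    ∃ f : Fin 4 → Fin 4 → R, f 0 = x ∧ ∀ i j, f i ⬝ᵥ f j = if i = j then x ⬝ᵥ x else 0 := by
  refine ⟨![x, ![-x 1, x 0, -x 3, x 2], ![-x 2, x 3, x 0, -x 1], ![-x 3, -x 2, x 1, x 0]],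
    rfl, fun i j => ?_⟩
  fin_cases i <;> fin_cases j <;> simp [dotProduct, Fin.sum_univ_four] <;> ring

lemma eq_zero_of_isotropic_of_mulVec_eq_zero {R : Type*} [CommRing R] [IsDomain R] {n : ℕ}
    {v : Fin n → Fin (n + 1) → R} (hv : (of v * (of v)ᵀ).det ≠ 0) {z : Fin (n + 1) → R}
    (hvz : of v *ᵥ z = 0) (hz : z ⬝ᵥ z = 0) : z = 0 := by
  by_contra hz0
  obtain ⟨c, hc0, hc⟩ : ∃ c ≠ 0, c ᵥ* of (vecCons z v) = 0 := by
    refine exists_vecMul_eq_zero_iff.2 (exists_mulVec_eq_zero_iff.1 ⟨z, hz0, ?_⟩)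
    rw [cons_mulVec, hz, hvz, cons_zero_zero]
  have hrel : vecHead c • z + vecTail c ᵥ* of v = 0 := (vecMul_cons c z v).symm.trans hc
  have htail : vecTail c = 0 := by
    refine eq_zero_of_mulVec_eq_zero hv ?_
    have hspan := congrArg (of v *ᵥ ·) hrel
    simpa only [mulVec_add, mulVec_smul, hvz, smul_zero, zero_add, mulVec_zero, mulVec_mulVec,
      ← mulVec_transpose] using hspan
  rw [htail, zero_vecMul, add_zero, smul_eq_zero, or_iff_left hz0] at hrel
  exact hc0 (by rw [← cons_head_tail c, hrel, htail, cons_zero_zero])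

/-- The words `x` and `y` have three common neighbours that are pairwise adjacent in the graph
joining two words when their Hamming distance is `1` modulo `3`. -/
def CommonTriangle {ι : Type*} [Fintype ι] (x y : ι → ZMod 3) : Prop :=
  ∃ f : Fin 3 → ι → ZMod 3, (∀ i, (hammingDist (f i) x : ZMod 3) = 1) ∧
    (∀ i, (hammingDist (f i) y : ZMod 3) = 1) ∧
    ∀ i j, i ≠ j → (hammingDist (f i) (f j) : ZMod 3) = 1

lemma commonTriangle_of_natCast_hammingDist_eq_two {x y : Fin 4 → ZMod 3}
    (hxy : (hammingDist x y : ZMod 3) = 2) : CommonTriangle x y := by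
  obtain ⟨f, hf0, hf⟩ := exists_orthogonal_frame (x - y)
  rw [← natCast_hammingDist_eq_dotProduct_self, hxy] at hf
  have hcomb : ∀ (i : Fin 3) (r s : ZMod 3),
      (r • f 0 + s • f i.succ) ⬝ᵥ (r • f 0 + s • f i.succ) = 2 * (r * r + s * s) := fun i r s => by
    simp only [add_dotProduct, dotProduct_add, smul_dotProduct, dotProduct_smul, hf, smul_eq_mul,
      if_true, Fin.succ_ne_zero, (Fin.succ_ne_zero i).symm, if_false]
    ring
  refine ⟨fun i => x + f 0 + f i.succ, fun i => ?_, fun i => ?_, fun i j hij => ?_⟩ <;>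
    rw [natCast_hammingDist_eq_dotProduct_self]
  · have hdiff : x + f 0 + f i.succ - x = (1 : ZMod 3) • f 0 + (1 : ZMod 3) • f i.succ := by module
    rw [hdiff, hcomb]
    rfl
  · have hdiff : x + f 0 + f i.succ - y = (2 : ZMod 3) • f 0 + (1 : ZMod 3) • f i.succ := by
      rw [hf0]
      module
    rw [hdiff, hcomb]
    rfl
  · rw [add_sub_add_left_eq_sub, sub_dotProduct, dotProduct_sub, dotProduct_sub, hf, hf, hf, hf,
      if_pos rfl, if_pos rfl, if_neg (by simpa using hij), if_neg (by simpa using hij.symm)]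
    rfl

lemma not_commonTriangle_of_natCast_hammingDist_eq_zero {x y : Fin 4 → ZMod 3} (hne : x ≠ y)
    (hxy : (hammingDist x y : ZMod 3) = 0) : ¬ CommonTriangle x y := by
  rintro ⟨f, hfx, hfy, hff⟩
  simp only [natCast_hammingDist_eq_dotProduct_self] at hxy hfx hfy hff
  set v : Fin 3 → Fin 4 → ZMod 3 := fun i => f i - y
  have hvz : of v *ᵥ (x - y) = 0 := by
    ext i
    change (f i - y) ⬝ᵥ (x - y) = 0
    rw [dotProduct_eq_sub_dotProduct_self, sub_sub_sub_cancel_right, hfx, hfy, hxy]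
    rfl
  have hgram : of v * (of v)ᵀ = of fun i j => if i = j then 1 else -1 := by
    ext i j
    change (f i - y) ⬝ᵥ (f j - y) = if i = j then 1 else -1
    split_ifs with hij
    · rw [← hij, hfy]
    · rw [dotProduct_eq_sub_dotProduct_self, sub_sub_sub_cancel_right, hff i j hij, hfy, hfy]
      rfl
  refine hne (sub_eq_zero.1 (eq_zero_of_isotropic_of_mulVec_eq_zero ?_ hvz hxy))
  rw [hgram]
  decide

lemma CommonTriangle.map {ι : Type*} [Fintype ι] {π : Equiv.Perm (ι → ZMod 3)}
    (hπ : ∀ x y, (hammingDist x y : ZMod 3) = 1 → (hammingDist (π x) (π y) : ZMod 3) = 1)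
    {x y : ι → ZMod 3} : CommonTriangle x y → CommonTriangle (π x) (π y) := by
  rintro ⟨f, hfx, hfy, hff⟩
  exact ⟨π ∘ f, fun i => hπ _ _ (hfx i), fun i => hπ _ _ (hfy i),
    fun i j hij => hπ _ _ (hff i j hij)⟩

lemma natCast_hammingDist_map_of_eq_one_iff {π : Equiv.Perm (Fin 4 → ZMod 3)}
    (hπ : ∀ x y, (hammingDist (π x) (π y) : ZMod 3) = 1 ↔ (hammingDist x y : ZMod 3) = 1)
    (x y : Fin 4 → ZMod 3) : (hammingDist (π x) (π y) : ZMod 3) = hammingDist x y := by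
  have htriangle : CommonTriangle (π x) (π y) ↔ CommonTriangle x y := by
    refine ⟨fun h => ?_, .map fun x y => (hπ x y).2⟩
    simpa only [Equiv.symm_apply_apply] using
      h.map (π := π.symm) fun x y hxy => (hπ _ _).1 (by simpa only [Equiv.apply_symm_apply])
  rcases eq_or_ne x y with rfl | hne
  · rw [hammingDist_self, hammingDist_self]
  have hclass : ∀ r s : ZMod 3, (r = 1 ↔ s = 1) → (r = 0 → s ≠ 2) → (s = 0 → r ≠ 2) → r = s := by
    decide
  refine hclass _ _ (hπ x y) (fun h0 h2 => ?_) (fun h0 h2 => ?_)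
  · exact not_commonTriangle_of_natCast_hammingDist_eq_zero (π.injective.ne hne) h0
      (htriangle.2 (commonTriangle_of_natCast_hammingDist_eq_two h2))
  · exact not_commonTriangle_of_natCast_hammingDist_eq_zero hne h0
      (htriangle.1 (commonTriangle_of_natCast_hammingDist_eq_two h2))

end CommonTriangle

section AutomorphismGroup

variable {m w : ℕ} {π : Equiv.Perm (Fin m → ZMod 3)}

lemma krawtchouk_hammingDist_map (hπ : krawtchoukMatrix (Fin m) (ZMod 3) w ∈ invariantMatrices ℤ π)
    (x y : Fin m → ZMod 3) :
    krawtchouk 3 m w (hammingDist (π x) (π y)) = krawtchouk 3 m w (hammingDist x y) := by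
  simpa only [krawtchoukMatrix_apply, ZMod.card, Fintype.card_fin] using hπ x y

lemma mem_aoSet_of_krawtchouk_separates
    (hsep : ∀ s ≤ m, ∀ t ≤ m, krawtchouk 3 m w s = krawtchouk 3 m w t → (s : ZMod 3) = t)
    (hπ : krawtchoukMatrix (Fin m) (ZMod 3) w ∈ invariantMatrices ℤ π) : π ∈ aoSet m :=
  mem_aoSet_of_natCast_hammingDist_map fun x y =>
    hsep _ (hammingDist_le _ _) _ (hammingDist_le _ _) (krawtchouk_hammingDist_map hπ x y)

lemma mem_aoSet_four_two {π : Equiv.Perm (Fin 4 → ZMod 3)}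
    (hπ : krawtchoukMatrix (Fin 4) (ZMod 3) 2 ∈ invariantMatrices ℤ π) : π ∈ aoSet 4 := by
  have hsix : ∀ t : ℕ, t ≤ 4 → ((t : ZMod 3) = 1 ↔ krawtchouk 3 4 2 t = 6) := by decide +kernel
  refine mem_aoSet_of_natCast_hammingDist_map (natCast_hammingDist_map_of_eq_one_iff fun x y => ?_)
  rw [hsix _ (hammingDist_le _ _), hsix _ (hammingDist_le _ _), krawtchouk_hammingDist_map hπ]

lemma mem_aoSet_of_krawtchoukMatrix_mem (hm : 4 ≤ m) (hw : 1 ≤ w) (hwm : w ≤ m)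
    (h : (m, w) ≠ (4, 3)) (hπ : krawtchoukMatrix (Fin m) (ZMod 3) w ∈ invariantMatrices ℤ π) :
    π ∈ aoSet m := by
  by_cases hexc : (m, w) ∈ exceptionalParameters
  · simp only [exceptionalParameters, Finset.mem_insert, Finset.mem_singleton,
      Prod.mk.injEq] at hexc
    rcases hexc with ⟨rfl, rfl⟩ | ⟨rfl, rfl⟩ | ⟨rfl, rfl⟩ | ⟨rfl, rfl⟩ | ⟨rfl, rfl⟩
    · exact mem_aoSet_four_two hπ
    · exact absurd rfl h
    all_goals exact mem_aoSet_of_krawtchouk_separates (by decide +kernel) hπ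
  · refine mem_aoSet_of_natCast_hammingDist_map fun x y => ?_
    rw [hammingDist_map_eq_of_intersectionNumber_lt (by omega) hw hwm
      (fun k hk hkm => intersectionNumber_lt_one hm hw hwm hexc hk hkm) hπ]

variable {K : Type} [Field K] [CharP K 2] {α : K}

lemma choose_mod_two_eq_of_aoSet_subset (hα : IsPrimitiveRoot α 3)
    (h : aoSet m ⊆ codeAut (abelianCode 3 m {w} K α)) {s : ℕ} (hs : s + 4 ≤ m) :
    ((s + 4).choose w : ZMod 2) = (s + 1).choose w := by
  obtain ⟨π, hπ, x, y, hxy, hπxy⟩ := exists_mem_aoSet_hammingDist_add_three hs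
  rw [← hxy, ← hπxy, (mem_codeAut_abelianCode_iff_choose w hα).1 (h hπ)]

lemma eq_of_aoSet_subset (hα : IsPrimitiveRoot α 3) (hm : 4 ≤ m) (hw : 1 ≤ w) (hwm : w ≤ m)
    (h : (m, w) ≠ (4, 3)) (hsub : aoSet m ⊆ codeAut (abelianCode 3 m {w} K α)) :
    m = 4 ∧ w = 2 ∨ m = 5 ∧ w = 3 := by
  have hchoose {s : ℕ} := choose_mod_two_eq_of_aoSet_subset (s := s) hα hsub
  obtain hw4 | hw4 := le_or_gt 4 w
  · have htop := hchoose (s := w - 4) (by omega)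
    rw [Nat.sub_add_cancel hw4, Nat.choose_self, Nat.choose_eq_zero_of_lt (by omega)] at htop
    exact absurd htop (by decide)
  interval_cases w
  · exact absurd (hchoose (s := 0) hm) (by decide)
  · have hm5 : ¬ 5 ≤ m := fun hm5 => absurd (hchoose (s := 1) hm5) (by decide)
    omega
  · have hm6 : ¬ 6 ≤ m := fun hm6 => absurd (hchoose (s := 2) hm6) (by decide)
    have hm4 : m ≠ 4 := fun hm4 => h (by rw [hm4])
    omega

lemma aoSet_subset_codeAut (hα : IsPrimitiveRoot α 3)
    (hchoose : ∀ s ≤ m, ∀ t ≤ m, (s : ZMod 3) = t → (s = 0 ↔ t = 0) →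
      (s.choose w : ZMod 2) = t.choose w) :
    aoSet m ⊆ codeAut (abelianCode 3 m {w} K α) := fun π hπ =>
  (mem_codeAut_abelianCode_iff_choose w hα).2 fun x y =>
    hchoose _ (hammingDist_le _ _) _ (hammingDist_le _ _)
      (natCast_hammingDist_map_of_mem_aoSet hπ x y)
      (by simp only [hammingDist_eq_zero, π.apply_eq_iff_eq])

end AutomorphismGroup

end AbelianCode

theorem statement3_general (m w : ℕ) (hm : 4 ≤ m) (hw1 : 1 ≤ w) (hwm : w ≤ m)
    (h : (m, w) ≠ (4, 3))
    (K : Type) [Field K] [CharP K 2] (α : K) (hα : IsPrimitiveRoot α 3) :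
    codeAut (abelianCode 3 m {w} K α) ⊆ aoSet m ∧
    (codeAut (abelianCode 3 m {w} K α) = aoSet m ↔ (m = 4 ∧ w = 2) ∨ (m = 5 ∧ w = 3)) := by
  have hsub : codeAut (abelianCode 3 m {w} K α) ⊆ aoSet m := fun π hπ =>
    AbelianCode.mem_aoSet_of_krawtchoukMatrix_mem hm hw1 hwm h
      (AbelianCode.krawtchoukMatrix_mem_invariantMatrices w hα hπ)
  refine ⟨hsub, fun heq => AbelianCode.eq_of_aoSet_subset hα hm hw1 hwm h heq.ge, ?_⟩
  rintro (⟨rfl, rfl⟩ | ⟨rfl, rfl⟩) <;>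
    exact hsub.antisymm (AbelianCode.aoSet_subset_codeAut hα (by decide +kernel))

/-- For `m ≥ 4` and `1 ≤ w ≤ m` with `3 ∤ w` or `m` odd, the automorphism
group of `C(3, m, {w})` is a subgroup of `AO(m, 3) = Z_3^m ⋊ O(m, 3)`, with equality iff
`(m, w) = (4, 2)` or `(m, w) = (5, 3)`. -/
theorem statement3 (m w : ℕ) (hm : 4 ≤ m) (hw1 : 1 ≤ w) (hwm : w ≤ m)
    (h : ¬ (3 ∣ w) ∨ Odd m)
    (K : Type) [Field K] [CharP K 2] (α : K) (hα : IsPrimitiveRoot α 3) :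
    codeAut (abelianCode 3 m {w} K α) ⊆ aoSet m ∧
    (codeAut (abelianCode 3 m {w} K α) = aoSet m ↔ (m = 4 ∧ w = 2) ∨ (m = 5 ∧ w = 3)) :=
  statement3_general m w hm hw1 hwm (by rintro ⟨rfl, rfl⟩; exact absurd h (by decide)) K α hα
end
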